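/- Oppenheim conjecture (theorem of Margulis): Let n ≥ 3 and let Q(x) = xᵀAx be a quadratic form on ℝⁿ given by a nonzero symmetric real n×n matrix A such that Q is nondegenerate (det(A) ≠ 0), indefinite (Q takes both positive and negative values), and Q is not a real scalar multiple of a quadratic form with rational coefficients. Then the image Q(ℤⁿ) = {Q(x) : x ∈ ℤⁿ} is dense in ℝ. -/

import Mathlib

open Matrix

section Part1
open Matrix

namespace Opp

abbrev M3 := Matrix (Fin 3) (Fin 3) ℝ
abbrev SLR := SpecialLinearGroup (Fin 3) ℝ
abbrev SLZ := SpecialLinearGroup (Fin 3) ℤ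

instance : FirstCountableTopology M3 :=
  inferInstanceAs (FirstCountableTopology (Fin 3 → Fin 3 → ℝ))

/-- the inclusion of `SL(3,ℤ)` into `SL(3,ℝ)` -/
noncomputable def io : SLZ →* SLR := SpecialLinearGroup.map (Int.castRingHom ℝ)

/-- underlying matrix -/
def mt (g : SLR) : M3 := g.1

/-- underlying integer matrix -/
def mz (g : SLZ) : Matrix (Fin 3) (Fin 3) ℤ := g.1

lemma mt_mul (g h : SLR) : mt (g * h) = mt g * mt h := rfl
lemma mt_one : mt 1 = 1 := rfl
lemma mt_det (g : SLR) : (mt g).det = 1 := g.2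
lemma mz_mul (g h : SLZ) : mz (g * h) = mz g * mz h := rfl
lemma mz_one : mz 1 = 1 := rfl
lemma mz_det (g : SLZ) : (mz g).det = 1 := g.2
lemma mt_inv_mul (g : SLR) : mt g⁻¹ * mt g = 1 := by rw [← mt_mul, inv_mul_cancel, mt_one]
lemma mt_mul_inv (g : SLR) : mt g * mt g⁻¹ = 1 := by rw [← mt_mul, mul_inv_cancel, mt_one]
lemma mz_inv_mul (g : SLZ) : mz g⁻¹ * mz g = 1 := by rw [← mz_mul, inv_mul_cancel, mz_one]

lemma io_apply (γ : SLZ) (i j : Fin 3) : mt (io γ) i j = (mz γ i j : ℝ) := by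
  simp [io, mt, mz]

def mkz (A : Matrix (Fin 3) (Fin 3) ℤ) (h : A.det = 1) : SLZ := ⟨A, h⟩
lemma mz_mkz (A : Matrix (Fin 3) (Fin 3) ℤ) (h : A.det = 1) : mz (mkz A h) = A := rfl
def mkr (A : M3) (h : A.det = 1) : SLR := ⟨A, h⟩
lemma mt_mkr (A : M3) (h : A.det = 1) : mt (mkr A h) = A := rfl

/-- integer vectors as real vectors -/
def cv (v : Fin 3 → ℤ) : Fin 3 → ℝ := fun i => (v i : ℝ)

lemma io_cv (γ : SLZ) (v : Fin 3 → ℤ) :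
    mt (io γ) *ᵥ cv v = cv (mz γ *ᵥ v) := by
  ext i
  simp [Matrix.mulVec, dotProduct, cv, io_apply]

/-- The quadratic form of a matrix. -/
def qf (A : M3) (x : Fin 3 → ℝ) : ℝ := x ⬝ᵥ A *ᵥ x

lemma qf_conj (A g : M3) (x : Fin 3 → ℝ) : qf (gᵀ * A * g) x = qf A (g *ᵥ x) := by
  simp only [qf, Matrix.mul_assoc]
  rw [← Matrix.mulVec_mulVec, ← Matrix.mulVec_mulVec, Matrix.dotProduct_mulVec,
    Matrix.vecMul_transpose]

lemma gram_bound {ε a b c p q r : ℝ} (hε : 0 < ε) (ha : ε ≤ a) (hb : ε ≤ b)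
    (hac : a ≤ c) (hbc : b ≤ c) (hpa : 2 * |p| ≤ a + ε / 10) (hpb : 2 * |p| ≤ b + ε / 10)
    (hc : ∀ k l : ℤ, 0 ≤ k ^ 2 * a + l ^ 2 * b + 2 * k * l * p + 2 * k * q + 2 * l * r + ε / 10)
    (hdet : a * b * c + 2 * p * q * r - a * r ^ 2 - b * q ^ 2 - c * p ^ 2 = 1) :
    c ≤ 20 / ε ^ 2 := by
  have ha0 : 0 < a := by linarith
  have hb0 : 0 < b := by linarith
  have hp2 : p ^ 2 ≤ 0.3025 * (a * b) := by
    have h1 : |p| ≤ 0.55 * a := by linarith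
    have h2 : |p| ≤ 0.55 * b := by linarith
    have := mul_le_mul h1 h2 (abs_nonneg p) (by positivity)
    rw [← sq_abs]; nlinarith
  have hab : 0 < a * b := by positivity
  set Δ := a * b - p ^ 2 with hΔ
  have hΔ0 : 0.69 * (a * b) ≤ Δ := by linarith
  have hΔp : 0 < Δ := by linarith [hΔ0, hab]
  set x := (q * b - r * p) / Δ with hx
  set y := (r * a - q * p) / Δ with hy
  have hxq : a * x + p * y = q := by
    rw [hx, hy]; field_simp; rw [hΔ]; ring
  have hyr : p * x + b * y = r := by
    rw [hx, hy]; field_simp; rw [hΔ]; ring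
  have hk := abs_le.1 (abs_sub_round x)
  have hl := abs_le.1 (abs_sub_round y)
  have key := hc (-round x) (-round y)
  push_cast at key
  set k : ℝ := (round x : ℝ)
  set l : ℝ := (round y : ℝ)
  set s := x - k with hs
  set t := y - l with ht
  have hp' := abs_le.1 (le_refl |p|)
  have e1 : k ^ 2 * a + l ^ 2 * b + 2 * k * l * p - 2 * k * q - 2 * l * r =
      a * s ^ 2 + 2 * p * s * t + b * t ^ 2 - (q * x + r * y) := by
    rw [← hxq, ← hyr, hs, ht]; ring
  have hs2 : s ^ 2 ≤ 1 / 4 := by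
    have : s ^ 2 ≤ (1 / 2) ^ 2 := sq_le_sq' (by linarith [hk.1]) (by linarith [hk.2])
    linarith
  have ht2 : t ^ 2 ≤ 1 / 4 := by
    have : t ^ 2 ≤ (1 / 2) ^ 2 := sq_le_sq' (by linarith [hl.1]) (by linarith [hl.2])
    linarith
  have hst : |s * t| ≤ 1 / 4 := by
    have e1 := sq_nonneg (s + t)
    have e2 := sq_nonneg (s - t)
    rw [abs_le]; constructor <;> linarith [e1, e2, add_sq s t, sub_sq s t]
  have hpst : p * (s * t) ≤ |p| * (1 / 4) := by
    calc p * (s * t) ≤ |p * (s * t)| := le_abs_self _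
      _ = |p| * |s * t| := abs_mul _ _
      _ ≤ _ := by gcongr
  have hstar : q * x + r * y ≤ 0.875 * c := by
    have : q * x + r * y ≤ a * s ^ 2 + 2 * (p * (s * t)) + b * t ^ 2 + ε / 10 := by linarith
    have h3 : a * s ^ 2 ≤ a * (1 / 4) := by gcongr
    have h4 : b * t ^ 2 ≤ b * (1 / 4) := by gcongr
    linarith
  have hd : (c - (q * x + r * y)) * Δ = 1 := by
    have h5 : (q * x + r * y) * Δ = q * (q * b - r * p) + r * (r * a - q * p) := by
      rw [hx, hy]; field_simp
    rw [sub_mul, h5, hΔ]; linarith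
  have h6 : 0.125 * c * (0.69 * (ε * ε)) ≤ 1 := by
    rw [← hd]
    apply mul_le_mul
    · linarith
    · have := mul_le_mul ha hb hε.le ha0.le
      linarith
    · positivity
    · linarith
  rw [le_div_iff₀ (by positivity)]
  nlinarith

/-- squared norm of a column -/
def cs (g : M3) (i j : Fin 3) : ℝ := g 0 i * g 0 j + g 1 i * g 1 j + g 2 i * g 2 j

def sn (g : M3) : ℝ := cs g 0 0 + cs g 1 1 + cs g 2 2

lemma sn_nonneg (g : M3) : 0 ≤ sn g := by
  simp only [sn, cs]; nlinarith [sq_nonneg (g 0 0), sq_nonneg (g 1 0), sq_nonneg (g 2 0),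
    sq_nonneg (g 0 1), sq_nonneg (g 1 1), sq_nonneg (g 2 1), sq_nonneg (g 0 2), sq_nonneg (g 1 2), sq_nonneg (g 2 2)]

lemma mahler {ε : ℝ} (hε : 0 < ε) : ∃ C : ℝ, ∀ g : SLR,
    (∀ v : Fin 3 → ℤ, v ≠ 0 → ε ≤ ∑ i, (mt g *ᵥ cv v) i ^ 2) →
    ∃ γ : SLZ, ∀ i j, |mt (g * io γ) i j| ≤ C := by
  refine ⟨20 / ε ^ 2 + 1, fun g hg => ?_⟩
  -- approximate minimiser
  obtain ⟨γ, hγ⟩ : ∃ γ : SLZ, ∀ γ' : SLZ, sn (mt (g * io γ)) ≤ sn (mt (g * io (γ * γ'))) + ε / 10 := by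
    have hbdd : BddBelow (Set.range fun γ : SLZ => sn (mt (g * io γ))) :=
      ⟨0, by rintro _ ⟨γ, rfl⟩; exact sn_nonneg _⟩
    obtain ⟨_, ⟨γ, rfl⟩, h⟩ := exists_lt_of_csInf_lt (Set.range_nonempty _)
      (show sInf (Set.range fun γ : SLZ => sn (mt (g * io γ))) <
        sInf (Set.range fun γ : SLZ => sn (mt (g * io γ))) + ε / 10 by linarith)
    refine ⟨γ, fun γ' => ?_⟩
    have := csInf_le hbdd ⟨γ * γ', rfl⟩
    simp only at this h
    linarith
  set B : M3 := (mt (g * io γ)) with hB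
  have hdet : B.det = 1 := by
    rw [hB, mt_det]
  have hmul : ∀ γ' : SLZ, (mt (g * io (γ * γ'))) = B * mt (io γ') := by
    intro γ'; rw [hB, map_mul, ← mul_assoc, mt_mul]
  have hcol : ∀ i, ε ≤ cs B i i := by
    intro i
    have hne : mz γ *ᵥ (Pi.single i 1) ≠ 0 := by
      intro h0
      have := congrArg (fun w => mz γ⁻¹ *ᵥ w) h0
      simp only [Matrix.mulVec_mulVec, mz_inv_mul] at this
      simp only [Matrix.one_mulVec, Matrix.mulVec_zero] at this
      have := congrFun this i
      simp at this
    have h := hg _ hne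
    rw [← io_cv, Matrix.mulVec_mulVec, ← mt_mul, ← hB] at h
    have : ∀ j, (B *ᵥ cv (Pi.single i 1)) j = B j i := by
      intro j
      have : cv (Pi.single i 1) = Pi.single i 1 := by
        ext k; by_cases hk : k = i
        · subst hk; simp [cv]
        · simp [cv, hk]
      rw [this]; simp
    simp only [this, Fin.sum_univ_three] at h
    simp only [cs]; linarith
  have h1 : ∀ k l : ℤ, 0 ≤ (k:ℝ) ^ 2 * cs B 1 1 + l ^ 2 * cs B 2 2 + 2 * k * l * cs B 1 2 + 2 * k * cs B 0 1
      + 2 * l * cs B 0 2 + ε / 10 := by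
    intro k l
    have := hγ (mkz !![1,0,0;k,1,0;l,0,1] (by simp [Matrix.det_fin_three]))
    rw [hmul] at this
    simp [sn, cs, Matrix.mul_apply, Fin.sum_univ_three, io_apply, mz_mkz] at this ⊢
    linarith
  have h2 : ∀ k l : ℤ, 0 ≤ (k:ℝ) ^ 2 * cs B 0 0 + l ^ 2 * cs B 2 2 + 2 * k * l * cs B 0 2 + 2 * k * cs B 0 1
      + 2 * l * cs B 1 2 + ε / 10 := by
    intro k l
    have := hγ (mkz !![1,k,0;0,1,0;0,l,1] (by simp [Matrix.det_fin_three]))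
    rw [hmul] at this
    simp [sn, cs, Matrix.mul_apply, Fin.sum_univ_three, io_apply, mz_mkz] at this ⊢
    linarith
  have h3 : ∀ k l : ℤ, 0 ≤ (k:ℝ) ^ 2 * cs B 0 0 + l ^ 2 * cs B 1 1 + 2 * k * l * cs B 0 1 + 2 * k * cs B 0 2
      + 2 * l * cs B 1 2 + ε / 10 := by
    intro k l
    have := hγ (mkz !![1,0,k;0,1,l;0,0,1] (by simp [Matrix.det_fin_three]))
    rw [hmul] at this
    simp [sn, cs, Matrix.mul_apply, Fin.sum_univ_three, io_apply, mz_mkz] at this ⊢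
    linarith
  have hD : cs B 0 0 * cs B 1 1 * cs B 2 2 + 2 * cs B 0 1 * cs B 0 2 * cs B 1 2 - cs B 0 0 * cs B 1 2 ^ 2
      - cs B 1 1 * cs B 0 2 ^ 2 - cs B 2 2 * cs B 0 1 ^ 2 = 1 := by
    have : B.det ^ 2 = 1 := by rw [hdet]; norm_num
    rw [← this, Matrix.det_fin_three]
    simp only [cs]; ring
  have e01 : 2 * |cs B 0 1| ≤ cs B 0 0 + ε / 10 := by
    have a1 := h2 1 0; have a2 := h2 (-1) 0
    push_cast at a1 a2
    rcases abs_cases (cs B 0 1) with h | h <;> rw [h.1] <;> linarith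
  have e01' : 2 * |cs B 0 1| ≤ cs B 1 1 + ε / 10 := by
    have a1 := h1 1 0; have a2 := h1 (-1) 0
    push_cast at a1 a2
    rcases abs_cases (cs B 0 1) with h | h <;> rw [h.1] <;> linarith
  have e02 : 2 * |cs B 0 2| ≤ cs B 0 0 + ε / 10 := by
    have a1 := h3 1 0; have a2 := h3 (-1) 0
    push_cast at a1 a2
    rcases abs_cases (cs B 0 2) with h | h <;> rw [h.1] <;> linarith
  have e02' : 2 * |cs B 0 2| ≤ cs B 2 2 + ε / 10 := by
    have a1 := h1 0 1; have a2 := h1 0 (-1)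
    push_cast at a1 a2
    rcases abs_cases (cs B 0 2) with h | h <;> rw [h.1] <;> linarith
  have e12 : 2 * |cs B 1 2| ≤ cs B 1 1 + ε / 10 := by
    have a1 := h3 0 1; have a2 := h3 0 (-1)
    push_cast at a1 a2
    rcases abs_cases (cs B 1 2) with h | h <;> rw [h.1] <;> linarith
  have e12' : 2 * |cs B 1 2| ≤ cs B 2 2 + ε / 10 := by
    have a1 := h2 0 1; have a2 := h2 0 (-1)
    push_cast at a1 a2
    rcases abs_cases (cs B 1 2) with h | h <;> rw [h.1] <;> linarith
  have hall : ∀ i, cs B i i ≤ 20 / ε ^ 2 := by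
    have c0 := hcol 0; have c1 := hcol 1; have c2 := hcol 2
    rcases le_total (cs B 0 0) (cs B 1 1) with h01 | h01 <;>
    rcases le_total (cs B 1 1) (cs B 2 2) with h12 | h12 <;>
    rcases le_total (cs B 0 0) (cs B 2 2) with h02 | h02
    all_goals first
      | (have := gram_bound hε c0 c1 (by linarith) (by linarith) e01 e01'
           (q := cs B 0 2) (r := cs B 1 2) (c := cs B 2 2) h3 (by linarith)
         intro i; fin_cases i <;> simp only [Fin.zero_eta, Fin.mk_one, Fin.reduceFinMk] <;> linarith)
      | (have := gram_bound hε c0 c2 (by linarith) (by linarith) e02 e02'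
           (q := cs B 0 1) (r := cs B 1 2) (c := cs B 1 1) h2 (by linarith)
         intro i; fin_cases i <;> simp only [Fin.zero_eta, Fin.mk_one, Fin.reduceFinMk] <;> linarith)
      | (have := gram_bound hε c1 c2 (by linarith) (by linarith) e12 e12'
           (q := cs B 0 1) (r := cs B 0 2) (c := cs B 0 0) h1 (by linarith)
         intro i; fin_cases i <;> simp only [Fin.zero_eta, Fin.mk_one, Fin.reduceFinMk] <;> linarith)
  refine ⟨γ, fun i j => ?_⟩
  have hj := hall j
  have : B i j ^ 2 ≤ cs B j j := by
    simp only [cs]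
    fin_cases i <;> simp <;> nlinarith [sq_nonneg (B 0 j), sq_nonneg (B 1 j), sq_nonneg (B 2 j)]
  have h0 : 0 ≤ 20 / ε ^ 2 := by positivity
  apply abs_le_of_sq_le_sq _ (by linarith)
  nlinarith

end Opp
end Part1

section Part2
open Matrix Filter Topology

namespace Opp

lemma continuous_mt : Continuous mt := continuous_subtype_val

lemma isClosedEmbedding_mt : IsClosedEmbedding mt := by
  have : IsClosed {A : M3 | A.det = 1} :=
    isClosed_eq (Continuous.matrix_det continuous_id) continuous_const
  exact this.isClosedEmbedding_subtypeVal

instance : FirstCountableTopology SLR :=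
  isClosedEmbedding_mt.isInducing.firstCountableTopology

lemma mt_injective : Function.Injective mt := Subtype.val_injective

/-- `gᵀ M g` -/
def cj (M : M3) (g : SLR) : M3 := (mt g)ᵀ * M * mt g

lemma cj_mul (M : M3) (g h : SLR) : cj M (g * h) = cj (cj M g) h := by
  simp only [cj, mt_mul, Matrix.transpose_mul, Matrix.mul_assoc]

lemma cj_one (M : M3) : cj M 1 = M := by simp [cj, mt_one]

lemma cj_inv_cj (M : M3) (g : SLR) : cj (cj M g⁻¹) g = M := by
  rw [← cj_mul, inv_mul_cancel, cj_one]

lemma cj_cj_inv (M : M3) (g : SLR) : cj (cj M g) g⁻¹ = M := by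
  rw [← cj_mul, mul_inv_cancel, cj_one]

lemma cj_add (M N : M3) (g : SLR) : cj (M + N) g = cj M g + cj N g := by
  simp [cj, Matrix.mul_add, Matrix.add_mul]

lemma cj_sub (M N : M3) (g : SLR) : cj (M - N) g = cj M g - cj N g := by
  simp [cj, Matrix.mul_sub, Matrix.sub_mul]

lemma cj_smul (c : ℝ) (M : M3) (g : SLR) : cj (c • M) g = c • cj M g := by
  simp [cj]

lemma cj_det (M : M3) (g : SLR) : (cj M g).det = M.det := by
  simp [cj, mt_det]

lemma cj_symm {M : M3} (h : Mᵀ = M) (g : SLR) : (cj M g)ᵀ = cj M g := by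
  simp [cj, Matrix.transpose_mul, h, Matrix.mul_assoc]

lemma cj_qf (M : M3) (g : SLR) (x : Fin 3 → ℝ) : qf (cj M g) x = qf M (mt g *ᵥ x) :=
  qf_conj _ _ _

lemma continuous_cj : Continuous (fun p : M3 × SLR => cj p.1 p.2) := by
  unfold cj
  have h : Continuous (fun p : M3 × SLR => mt p.2) := continuous_mt.comp continuous_snd
  exact ((h.matrix_transpose).matrix_mul continuous_fst).matrix_mul h

lemma tendsto_cj {ι : Type*} {l : Filter ι} {M : ι → M3} {g : ι → SLR} {M0 : M3} {g0 : SLR}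
    (hM : Tendsto M l (𝓝 M0)) (hg : Tendsto g l (𝓝 g0)) :
    Tendsto (fun i => cj (M i) (g i)) l (𝓝 (cj M0 g0)) := by
  have h1 : Tendsto (fun i => mt (g i)) l (𝓝 (mt g0)) := (continuous_mt.tendsto g0).comp hg
  have h2 : Tendsto (fun i => (mt (g i))ᵀ) l (𝓝 (mt g0)ᵀ) :=
    ((Continuous.matrix_transpose continuous_id).tendsto (mt g0)).comp h1
  exact (h2.mul hM).mul h1

lemma continuous_cj_left (M : M3) : Continuous (fun g : SLR => cj M g) :=
  continuous_cj.comp (continuous_const.prodMk continuous_id)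

lemma continuous_cj_right (g : SLR) : Continuous (fun M : M3 => cj M g) :=
  continuous_cj.comp (continuous_id.prodMk continuous_const)

def J : M3 := !![0,0,1;0,-1,0;1,0,0]
def E3 : M3 := !![0,0,0;0,0,0;0,0,1]

lemma J_symm : Jᵀ = J := by
  ext i j; fin_cases i <;> fin_cases j <;> rfl
lemma E3_symm : E3ᵀ = E3 := by
  ext i j; fin_cases i <;> fin_cases j <;> rfl
lemma J_det : J.det = 1 := by simp [J, Matrix.det_fin_three]

lemma qf_J (x : Fin 3 → ℝ) : qf J x = 2 * x 0 * x 2 - x 1 ^ 2 := by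
  simp [qf, J, Matrix.mulVec, dotProduct, Fin.sum_univ_three]; ring

lemma qf_E3 (x : Fin 3 → ℝ) : qf E3 x = x 2 ^ 2 := by
  simp [qf, E3, Matrix.mulVec, dotProduct, Fin.sum_univ_three]; ring

noncomputable def U (t : ℝ) : SLR := mkr !![1,t,t^2/2;0,1,t;0,0,1] (by simp [Matrix.det_fin_three])

lemma mt_U (t : ℝ) : mt (U t) = !![1,t,t^2/2;0,1,t;0,0,1] := rfl

lemma U_add (s t : ℝ) : U (s + t) = U s * U t := by
  apply mt_injective
  rw [mt_mul, mt_U, mt_U, mt_U]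
  ext i j; fin_cases i <;> fin_cases j <;>
    simp [Matrix.mul_apply, Fin.sum_univ_three] <;> ring

lemma U_zero : U 0 = 1 := by
  apply mt_injective
  rw [mt_U, mt_one]
  ext i j; fin_cases i <;> fin_cases j <;> simp

lemma U_neg_mul (t : ℝ) : U (-t) * U t = 1 := by rw [← U_add, neg_add_cancel, U_zero]
lemma U_mul_neg (t : ℝ) : U t * U (-t) = 1 := by rw [← U_add, add_neg_cancel, U_zero]
lemma U_inv (t : ℝ) : (U t)⁻¹ = U (-t) := (eq_inv_of_mul_eq_one_left (U_neg_mul t)).symm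

lemma cj_J_U (t : ℝ) : cj J (U t) = J := by
  simp only [cj, mt_U, J]
  ext i j; fin_cases i <;> fin_cases j <;>
    simp [Matrix.mul_apply, Fin.sum_univ_three] <;> ring

lemma cj_E3_U (t : ℝ) : cj E3 (U t) = E3 := by
  simp only [cj, mt_U, E3]
  ext i j; fin_cases i <;> fin_cases j <;>
    simp [Matrix.mul_apply, Fin.sum_univ_three]

lemma cj_JE_U (σ t : ℝ) : cj (J + σ • E3) (U t) = J + σ • E3 := by
  rw [cj_add, cj_smul, cj_J_U, cj_E3_U]

/-- closed, invariant under `U` on the left and `SL(3,ℤ)` on the right -/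
structure Inv (Y : Set SLR) : Prop where
  cl : IsClosed Y
  u : ∀ t, ∀ y ∈ Y, U t * y ∈ Y
  g : ∀ γ : SLZ, ∀ y ∈ Y, y * io γ ∈ Y

structure IsMinl (Y : Set SLR) : Prop where
  inv : Inv Y
  ne : Y.Nonempty
  min : ∀ Y', Inv Y' → Y'.Nonempty → Y' ⊆ Y → Y' = Y

def Cov (K Y : Set SLR) : Prop := IsCompact K ∧ ∀ y ∈ Y, ∃ γ : SLZ, y * io γ ∈ K

lemma Cov.mono {K Y Y' : Set SLR} (h : Cov K Y) (hY : Y' ⊆ Y) : Cov K Y' :=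
  ⟨h.1, fun y hy => h.2 y (hY hy)⟩

lemma exists_min {Y0 K : Set SLR} (h0 : Inv Y0) (hne : Y0.Nonempty) (hK : Cov K Y0) :
    ∃ Y ⊆ Y0, IsMinl Y := by
  obtain ⟨m, hm0, hm⟩ := zorn_superset_nonempty {Y | Inv Y ∧ Y.Nonempty ∧ Y ⊆ Y0} (by
    intro c hc hch hcne
    refine ⟨⋂₀ c, ⟨⟨?_, ?_, ?_⟩, ?_, ?_⟩, fun s hs => Set.sInter_subset_of_mem hs⟩
    · exact isClosed_sInter fun s hs => (hc hs).1.cl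
    · intro t y hy s hs; exact (hc hs).1.u t y (hy s hs)
    · intro t y hy s hs; exact (hc hs).1.g t y (hy s hs)
    · have hcn : Nonempty c := hcne.to_subtype
      have := IsCompact.nonempty_iInter_of_directed_nonempty_isCompact_isClosed
        (fun s : c => (s : Set SLR) ∩ K) (by
          intro a b
          rcases hch.total a.2 b.2 with h | h
          · exact ⟨a, subset_rfl, Set.inter_subset_inter_left _ h⟩
          · exact ⟨b, Set.inter_subset_inter_left _ h, subset_rfl⟩) (by
          intro s
          obtain ⟨y, hy⟩ := (hc s.2).2.1
          obtain ⟨γ, hγ⟩ := hK.2 y ((hc s.2).2.2 hy)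
          exact ⟨_, (hc s.2).1.g γ y hy, hγ⟩)
        (fun s => hK.1.inter_left (hc s.2).1.cl)
        (fun s => (hc s.2).1.cl.inter hK.1.isClosed)
      obtain ⟨y, hy⟩ := this
      simp only [Set.mem_iInter] at hy
      exact ⟨y, fun s hs => (hy ⟨s, hs⟩).1⟩
    · obtain ⟨s, hs⟩ := hcne
      exact (Set.sInter_subset_of_mem hs).trans (hc hs).2.2) Y0 ⟨h0, hne, subset_rfl⟩
  refine ⟨m, hm0, hm.prop.1, hm.prop.2.1, fun Y' hY' hne' hsub => ?_⟩
  exact Set.Subset.antisymm hsub (hm.2 ⟨hY', hne', hsub.trans hm0⟩ hsub)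

lemma returns {Y K : Set SLR} (hY : IsMinl Y) (hK : Cov K Y) {y : SLR} (hy : y ∈ Y) (T : ℝ)
    {V : Set SLR} (hV : V ∈ 𝓝 y) : ∃ t ≥ T, ∃ γ : SLZ, U t * y * io γ ∈ V := by
  set S : ℝ → Set SLR := fun T => closure {g | ∃ t ≥ T, ∃ γ : SLZ, g = U t * y * io γ} with hS
  have hSY : ∀ T, S T ⊆ Y := by
    intro T
    apply closure_minimal _ hY.inv.cl
    rintro _ ⟨t, -, γ, rfl⟩
    exact hY.inv.g _ _ (hY.inv.u _ _ hy)
  have hanti : ∀ T T', T ≤ T' → S T' ⊆ S T := by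
    intro T T' h
    apply closure_mono
    rintro _ ⟨t, ht, γ, rfl⟩
    exact ⟨t, h.trans ht, γ, rfl⟩
  have hSu : ∀ T t, ∀ g ∈ S T, U t * g ∈ S (T + t) := by
    intro T t g hg
    have hc : Continuous (fun g : SLR => U t * g) := continuous_const.mul continuous_id
    refine map_mem_closure hc hg ?_
    rintro _ ⟨t', ht, γ, rfl⟩
    refine ⟨t + t', by linarith, γ, ?_⟩
    rw [U_add]; simp only [mul_assoc]
  have hSg : ∀ T (γ : SLZ), ∀ g ∈ S T, g * io γ ∈ S T := by
    intro T t g hg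
    have hc : Continuous (fun g : SLR => g * io t) := continuous_id.mul continuous_const
    refine map_mem_closure (f := fun g : SLR => g * io t) hc hg ?_
    rintro _ ⟨t', ht, γ, rfl⟩
    refine ⟨t', ht, γ * t, ?_⟩
    rw [map_mul]; simp only [mul_assoc]
  have hinv : Inv (⋂ T, S T) := by
    refine ⟨isClosed_iInter fun T => isClosed_closure, ?_, ?_⟩
    · intro t g hg
      simp only [Set.mem_iInter] at hg ⊢
      intro T
      have := hSu _ t g (hg (T - t))
      simpa using this
    · intro t g hg
      simp only [Set.mem_iInter] at hg ⊢
      intro T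
      exact hSg _ t g (hg T)
  have hne : (⋂ T, S T).Nonempty := by
    have := IsCompact.nonempty_iInter_of_directed_nonempty_isCompact_isClosed
        (fun T => S T ∩ K) (by
          intro a b
          exact ⟨max a b, Set.inter_subset_inter_left _ (hanti _ _ (le_max_left _ _)),
            Set.inter_subset_inter_left _ (hanti _ _ (le_max_right _ _))⟩) (by
          intro T
          have h1 : U T * y ∈ S T := subset_closure ⟨T, le_rfl, 1, by simp⟩
          obtain ⟨γ, hγ⟩ := hK.2 _ (hSY _ h1)
          exact ⟨_, hSg _ γ _ h1, hγ⟩)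
        (fun s => hK.1.inter_left isClosed_closure)
        (fun s => isClosed_closure.inter hK.1.isClosed)
    obtain ⟨y, hy⟩ := this
    simp only [Set.mem_iInter] at hy
    exact ⟨y, Set.mem_iInter.2 fun s => (hy s).1⟩
  have heq := hY.min _ hinv hne ((Set.iInter_subset _ 0).trans (hSY 0))
  rw [← heq] at hy
  have := Set.mem_iInter.1 hy T
  obtain ⟨_, h1, t, ht, γ, rfl⟩ := mem_closure_iff_nhds.1 this V hV
  exact ⟨t, ht, γ, h1⟩

/-- the properties of orbit closures we need -/
structure Good (ε : ℝ) (Z : Set M3) : Prop where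
  pos : 0 < ε
  cl : IsClosed Z
  g : ∀ γ : SLZ, ∀ M ∈ Z, cj M (io γ) ∈ Z
  symm : ∀ M ∈ Z, Mᵀ = M
  det : ∀ M ∈ Z, M.det = 1
  val : ∀ M ∈ Z, ∀ v : Fin 3 → ℤ, v ≠ 0 → ε ≤ |qf M (cv v)|

lemma isCompact_box (C : ℝ) : IsCompact {g : SLR | ∀ i j, |mt g i j| ≤ C} := by
  have h1 : IsCompact {A : M3 | ∀ i j, |A i j| ≤ C} := by
    have : {A : M3 | ∀ i j, |A i j| ≤ C} =
        Set.pi Set.univ (fun _ : Fin 3 => Set.pi Set.univ (fun _ : Fin 3 => Set.Icc (-C) C)) := by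
      ext A
      constructor
      · intro h i _ j _; exact abs_le.1 (h i j)
      · intro h i j; exact abs_le.2 (h i trivial j trivial)
    rw [this]
    exact isCompact_univ_pi fun _ => isCompact_univ_pi fun _ => isCompact_Icc
  exact isClosedEmbedding_mt.isCompact_preimage h1

lemma Good.cov {ε : ℝ} {Z : Set M3} (h : Good ε Z) : ∃ K, Cov K {g : SLR | cj J g ∈ Z} := by
  obtain ⟨C, hC⟩ := mahler h.pos
  refine ⟨_, isCompact_box C, fun g hg => ?_⟩
  apply hC
  intro v hv
  refine (h.val _ hg v hv).trans ?_
  rw [cj_qf, qf_J, Fin.sum_univ_three]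
  set x := mt g *ᵥ cv v
  rw [abs_le]
  constructor <;> nlinarith [sq_nonneg (x 0 + x 2), sq_nonneg (x 0 - x 2), sq_nonneg (x 1)]

lemma Good.inv {ε : ℝ} {Z : Set M3} (h : Good ε Z) : Inv {g : SLR | cj J g ∈ Z} := by
  refine ⟨h.cl.preimage (continuous_cj_left J), ?_, ?_⟩
  · intro t y hy
    simp only [Set.mem_ofPred_eq, cj_mul, cj_J_U] at hy ⊢
    exact hy
  · intro γ y hy
    simp only [Set.mem_ofPred_eq, cj_mul] at hy ⊢
    exact h.g _ _ hy

/-- the invariance set -/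
def ES (Z : Set M3) (Y : Set SLR) : Set ℝ := {σ | ∀ y ∈ Y, cj (J + σ • E3) y ∈ Z}

lemma ES_of_one {ε : ℝ} {Z : Set M3} (h : Good ε Z) {Y : Set SLR} (hY : IsMinl Y) {y : SLR}
    (hy : y ∈ Y) {σ : ℝ} (hσ : cj (J + σ • E3) y ∈ Z) : σ ∈ ES Z Y := by
  have := hY.min {y ∈ Y | cj (J + σ • E3) y ∈ Z} ⟨?_, ?_, ?_⟩ ⟨y, hy, hσ⟩ (fun _ h => h.1)
  · intro y' hy'
    rw [← this] at hy'
    exact hy'.2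
  · exact hY.inv.cl.inter (h.cl.preimage (continuous_cj_left _))
  · rintro t y ⟨h1, h2⟩
    refine ⟨hY.inv.u _ _ h1, ?_⟩
    rw [cj_mul, cj_JE_U]; exact h2
  · rintro t y ⟨h1, h2⟩
    refine ⟨hY.inv.g _ _ h1, ?_⟩
    rw [cj_mul]; exact h.g _ _ h2

lemma ES_closed {ε : ℝ} {Z : Set M3} (h : Good ε Z) {Y : Set SLR} : IsClosed (ES Z Y) := by
  have : ES Z Y = ⋂ y ∈ Y, {σ | cj (J + σ • E3) y ∈ Z} := by
    ext σ; simp [ES]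
  rw [this]
  refine isClosed_biInter fun y _ => h.cl.preimage ?_
  exact (continuous_cj_right y).comp (by fun_prop)

end Opp
end Part2

section Part3
open Matrix Filter Topology

namespace Opp

lemma int_approx {n : ℕ} {W : Set (Fin n → ℝ)} (hW : IsOpen W) (hne : W.Nonempty)
    (hc : ∀ w ∈ W, ∀ c : ℝ, 0 < c → c • w ∈ W) :
    ∃ v : Fin n → ℤ, (fun i => (v i : ℝ)) ∈ W := by
  obtain ⟨w, hw⟩ := hne
  have ht : Tendsto (fun N : ℕ => (fun i => (round ((N : ℝ) * w i) : ℝ) / (N : ℝ))) atTop (𝓝 w) := by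
    rw [tendsto_pi_nhds]
    intro i
    rw [tendsto_iff_dist_tendsto_zero]
    refine squeeze_zero' (Eventually.of_forall fun _ => dist_nonneg) ?_
      (tendsto_const_nhds.div_atTop tendsto_natCast_atTop_atTop : Tendsto (fun N : ℕ => (1 / 2 : ℝ) / N) atTop (𝓝 0))
    filter_upwards [eventually_gt_atTop 0] with N hN
    have hN' : (0 : ℝ) < N := by exact_mod_cast hN
    rw [Real.dist_eq]
    have : (round ((N : ℝ) * w i) : ℝ) / N - w i = -(N * w i - round ((N : ℝ) * w i)) / N := by
      field_simp; ring
    rw [this, abs_div, abs_neg, abs_of_pos hN']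
    gcongr
    exact abs_sub_round _
  have h1 := (ht.eventually (hW.mem_nhds hw)).and (eventually_gt_atTop 0)
  obtain ⟨N, hN, hN0⟩ := h1.exists
  have hN' : (0 : ℝ) < N := by exact_mod_cast hN0
  refine ⟨fun i => round ((N : ℝ) * w i), ?_⟩
  have := hc _ hN N hN'
  convert this using 1
  ext i
  simp
  field_simp

lemma exists_int_halfcone (y : SLR) (W : Set (Fin 3 → ℝ)) (hW : IsOpen W) (hne : W.Nonempty)
    (hc : ∀ w ∈ W, ∀ c : ℝ, 0 < c → c • w ∈ W) :
    ∃ v : Fin 3 → ℤ, mt y *ᵥ cv v ∈ W := by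
  have hcont : Continuous (fun w : Fin 3 → ℝ => mt y *ᵥ w) :=
    Continuous.matrix_mulVec continuous_const continuous_id
  obtain ⟨v, hv⟩ := int_approx (W := {w | mt y *ᵥ w ∈ W}) (hW.preimage hcont) (by
    obtain ⟨w, hw⟩ := hne
    refine ⟨mt y⁻¹ *ᵥ w, ?_⟩
    change mt y *ᵥ (mt y⁻¹ *ᵥ w) ∈ W
    rwa [Matrix.mulVec_mulVec, mt_mul_inv, Matrix.one_mulVec]) (by
    intro w hw c hc0
    change mt y *ᵥ (c • w) ∈ W
    rw [Matrix.mulVec_smul]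
    exact hc _ hw c hc0)
  exact ⟨v, hv⟩

lemma ES_zero_contra {ε : ℝ} {Z : Set M3} (h : Good ε Z) {Y : Set SLR} {y : SLR} (hy : y ∈ Y)
    {σ : ℝ} (hσ : σ ∈ ES Z Y) {v : Fin 3 → ℤ} (h2 : (mt y *ᵥ cv v) 2 ≠ 0)
    (hv : qf J (mt y *ᵥ cv v) + σ * (mt y *ᵥ cv v) 2 ^ 2 = 0) : False := by
  have hv0 : v ≠ 0 := by
    rintro rfl
    apply h2
    have : cv 0 = 0 := by ext i; simp [cv]
    rw [this]; simp
  have := h.val _ (hσ y hy) v hv0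
  have h3 : qf (cj (J + σ • E3) y) (cv v) = 0 := by
    rw [cj_qf, ← hv, ← qf_E3]
    generalize mt y *ᵥ cv v = w
    simp [qf, Matrix.add_mulVec, Matrix.smul_mulVec]
  rw [h3, abs_zero] at this
  linarith [h.pos]

lemma no_halfline_top {ε : ℝ} {Z : Set M3} (h : Good ε Z) {Y : Set SLR} {y : SLR} (hy : y ∈ Y)
    {x : ℝ} (hx : ∀ σ, x ≤ σ → σ ∈ ES Z Y) : False := by
  obtain ⟨v, h0, hv⟩ := exists_int_halfcone y {w | w 2 ≠ 0 ∧ 0 < -(qf J w) - x * w 2 ^ 2} (by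
      refine IsOpen.and (isOpen_ne_fun (by fun_prop) (by fun_prop)) (isOpen_lt continuous_const ?_)
      simp only [qf_J]
      fun_prop)
    (by
      refine ⟨![0, |x| + 1, 1], ?_, ?_⟩
      · simp
      · simp [qf_J]; nlinarith [abs_nonneg x, le_abs_self x])
    (by
      rintro w ⟨h1, h2⟩ c hc
      refine ⟨by simp [h1, hc.ne'], ?_⟩
      simp only [qf_J] at h2 ⊢
      simp only [Pi.smul_apply, smul_eq_mul]
      have := mul_pos (pow_pos hc 2) h2
      linarith)
  refine ES_zero_contra h hy (σ := -(qf J (mt y *ᵥ cv v)) / (mt y *ᵥ cv v) 2 ^ 2) (hx _ ?_) h0 ?_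
  · rw [le_div_iff₀ (by positivity)]; linarith
  · field_simp; ring

lemma no_halfline_bot {ε : ℝ} {Z : Set M3} (h : Good ε Z) {Y : Set SLR} {y : SLR} (hy : y ∈ Y)
    {x : ℝ} (hx : ∀ σ, σ ≤ x → σ ∈ ES Z Y) : False := by
  obtain ⟨v, h0, hv⟩ := exists_int_halfcone y {w | w 2 ≠ 0 ∧ -(qf J w) - x * w 2 ^ 2 < 0} (by
      refine IsOpen.and (isOpen_ne_fun (by fun_prop) (by fun_prop)) (isOpen_lt ?_ continuous_const)
      simp only [qf_J]
      fun_prop)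
    (by
      refine ⟨![|x| + 1, 0, 1], ?_, ?_⟩
      · simp
      · simp [qf_J]; nlinarith [abs_nonneg x, neg_abs_le x])
    (by
      rintro w ⟨h1, h2⟩ c hc
      refine ⟨by simp [h1, hc.ne'], ?_⟩
      simp only [qf_J] at h2 ⊢
      simp only [Pi.smul_apply, smul_eq_mul]
      have := mul_pos (pow_pos hc 2) (neg_pos.2 h2)
      linarith)
  refine ES_zero_contra h hy (σ := -(qf J (mt y *ᵥ cv v)) / (mt y *ᵥ cv v) 2 ^ 2) (hx _ ?_) h0 ?_
  · rw [div_le_iff₀ (by positivity)]; linarith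
  · field_simp; ring

lemma cj_U_formula {D : M3} (hD : Dᵀ = D) (t : ℝ) : cj D (U t) =
    !![D 0 0, t * D 0 0 + D 0 1, t^2/2 * D 0 0 + t * D 0 1 + D 0 2;
       t * D 0 0 + D 0 1, t^2 * D 0 0 + 2 * t * D 0 1 + D 1 1,
        t^3/2 * D 0 0 + 3 * t^2/2 * D 0 1 + t * (D 0 2 + D 1 1) + D 1 2;
       t^2/2 * D 0 0 + t * D 0 1 + D 0 2,
        t^3/2 * D 0 0 + 3 * t^2/2 * D 0 1 + t * (D 0 2 + D 1 1) + D 1 2,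
        t^4/4 * D 0 0 + t^3 * D 0 1 + t^2 * (D 0 2 + D 1 1) + 2 * t * D 1 2 + D 2 2] := by
  have h10 : D 1 0 = D 0 1 := congrFun (congrFun hD 0) 1
  have h20 : D 2 0 = D 0 2 := congrFun (congrFun hD 0) 2
  have h21 : D 2 1 = D 1 2 := congrFun (congrFun hD 1) 2
  simp only [cj, mt_U]
  ext i j
  fin_cases i <;> fin_cases j <;>
    simp [Matrix.mul_apply, Fin.sum_univ_three, h10, h20, h21] <;> ring

/-- normalisation of the coefficients -/
lemma exists_scale {a b e f : ℝ} (hne : ¬ (a = 0 ∧ b = 0 ∧ e = 0 ∧ f = 0)) :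
    ∃ t : ℝ, 0 < t ∧ max (max (|a| * t^4) (|b| * t^3)) (max (|e| * t^2) (|f| * t)) = 1 := by
  set F : ℝ → ℝ := fun t => max (max (|a| * t^4) (|b| * t^3)) (max (|e| * t^2) (|f| * t)) with hF
  have hFc : Continuous F := by
    simp only [hF]; fun_prop
  have hF0 : F 0 = 0 := by simp [hF]
  have key : ∀ m : ℝ, m ≠ 0 → ∀ k : ℕ, 1 ≤ k → ∀ T : ℝ, 1 ≤ T → 1 / |m| ≤ T → 1 ≤ |m| * T ^ k := by
    intro m hm k hk T hT1 hT
    have hm' : 0 < |m| := abs_pos.2 hm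
    rw [div_le_iff₀ hm'] at hT
    have : T ≤ T ^ k := le_self_pow₀ hT1 (by omega)
    nlinarith
  obtain ⟨T, hT0, hT⟩ : ∃ T, 0 ≤ T ∧ 1 ≤ F T := by
    by_cases ha : a = 0
    · by_cases hb : b = 0
      · by_cases he : e = 0
        · have hf : f ≠ 0 := fun hf => hne ⟨ha, hb, he, hf⟩
          refine ⟨max 1 (1 / |f|), by positivity, ?_⟩
          refine (key f hf 1 le_rfl _ (le_max_left _ _) (le_max_right _ _)).trans ?_
          rw [pow_one]
          exact (le_max_right _ _).trans (le_max_right _ _)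
        · refine ⟨max 1 (1 / |e|), by positivity, ?_⟩
          refine (key e he 2 (by norm_num) _ (le_max_left _ _) (le_max_right _ _)).trans ?_
          exact (le_max_left _ _).trans (le_max_right _ _)
      · refine ⟨max 1 (1 / |b|), by positivity, ?_⟩
        refine (key b hb 3 (by norm_num) _ (le_max_left _ _) (le_max_right _ _)).trans ?_
        exact (le_max_right _ _).trans (le_max_left _ _)
    · refine ⟨max 1 (1 / |a|), by positivity, ?_⟩
      refine (key a ha 4 (by norm_num) _ (le_max_left _ _) (le_max_right _ _)).trans ?_
      exact (le_max_left _ _).trans (le_max_left _ _)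
  obtain ⟨t, ht, hFt⟩ := intermediate_value_Icc hT0 hFc.continuousOn
    (show (1:ℝ) ∈ Set.Icc (F 0) (F T) by rw [hF0]; exact ⟨zero_le_one, hT⟩)
  refine ⟨t, lt_of_le_of_ne ht.1 ?_, hFt⟩
  rintro rfl
  rw [hF0] at hFt
  exact zero_ne_one hFt

lemma halfline_contra {ε : ℝ} {Z : Set M3} (h : Good ε Z) {Y : Set SLR} {y : SLR} (hy : y ∈ Y)
    {a b e f c : ℝ} (hne : ¬ (a = 0 ∧ b = 0 ∧ e = 0 ∧ f = 0))
    (hr : ∀ r : ℝ, c + (r^4/4 * a + r^3 * b + r^2 * e + 2 * r * f) ∈ ES Z Y) : False := by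
  set p : Polynomial ℝ := Polynomial.C (a/4) * Polynomial.X^4 + Polynomial.C b * Polynomial.X^3
    + Polynomial.C e * Polynomial.X^2 + Polynomial.C (2 * f) * Polynomial.X + Polynomial.C c with hp
  have hev : ∀ r, p.eval r ∈ ES Z Y := by
    intro r
    convert hr r using 1
    simp [hp]; ring
  have hdeg : 0 < p.degree := by
    by_contra hcon
    have h0 := Polynomial.eq_C_of_degree_le_zero (not_lt.1 hcon)
    have c1 := congrArg (fun q => Polynomial.coeff q 1) h0
    have c2 := congrArg (fun q => Polynomial.coeff q 2) h0
    have c3 := congrArg (fun q => Polynomial.coeff q 3) h0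
    have c4 := congrArg (fun q => Polynomial.coeff q 4) h0
    simp [hp, Polynomial.coeff_X, Polynomial.coeff_C] at c1 c2 c3 c4
    exact hne ⟨c4, c3, c2, c1⟩
  rcases le_total 0 p.leadingCoeff with hl | hl
  · have ht := p.tendsto_atTop_of_leadingCoeff_nonneg hdeg hl
    refine no_halfline_top h hy (x := p.eval 0) fun σ hσ => ?_
    obtain ⟨T, hT, hT0⟩ := ((ht.eventually (eventually_ge_atTop σ)).and (eventually_ge_atTop 0)).exists
    obtain ⟨r, -, hrr⟩ := intermediate_value_Icc hT0 p.continuous.continuousOn ⟨hσ, hT⟩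
    rw [← hrr]; exact hev r
  · have ht := p.tendsto_atBot_of_leadingCoeff_nonpos hdeg hl
    refine no_halfline_bot h hy (x := p.eval 0) fun σ hσ => ?_
    obtain ⟨T, hT, hT0⟩ := ((ht.eventually (eventually_le_atBot σ)).and (eventually_ge_atTop 0)).exists
    obtain ⟨r, -, hrr⟩ := intermediate_value_Icc' hT0 p.continuous.continuousOn ⟨hT, hσ⟩
    rw [← hrr]; exact hev r

/-- membership in the span of `J` and `E3`, for symmetric matrices -/
def SP (M : M3) : Prop := M 0 0 = 0 ∧ M 0 1 = 0 ∧ M 0 2 + M 1 1 = 0 ∧ M 1 2 = 0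

lemma SP_JE (c : ℝ) : SP (J + c • E3) := by
  simp [SP, J, E3]

lemma tendsto_entry {M : ℕ → M3} {M0 : M3} (h : Tendsto M atTop (𝓝 M0)) (i j : Fin 3) :
    Tendsto (fun n => M n i j) atTop (𝓝 (M0 i j)) := by
  have := (continuous_apply_apply (ρ := fun _ _ => ℝ) i j).tendsto M0
  exact this.comp h

lemma tendsto_of_entries {M : ℕ → M3} {M0 : M3}
    (h : ∀ i j, Tendsto (fun n => M n i j) atTop (𝓝 (M0 i j))) : Tendsto M atTop (𝓝 M0) := by
  refine tendsto_pi_nhds.2 fun i => tendsto_pi_nhds.2 fun j => h i j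

lemma case_i {ε : ℝ} {Z : Set M3} (h : Good ε Z) {Y : Set SLR} (hY : IsMinl Y)
    (hYZ : Y ⊆ {g | cj J g ∈ Z}) {y : SLR} (hy : y ∈ Y) {c : ℝ} {M : ℕ → M3}
    (hM : Tendsto M atTop (𝓝 (J + c • E3))) (hMs : ∀ n, (M n)ᵀ = M n)
    (hMZ : ∀ n, cj (M n) y ∈ Z) (hns : ∀ n, ¬ SP (M n)) : False := by
  obtain ⟨K, hK⟩ := h.cov
  set D : ℕ → M3 := fun n => M n - (J + c • E3) with hD
  have hDs : ∀ n, (D n)ᵀ = D n := by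
    intro n
    simp [hD, hMs, J_symm, E3_symm]
  have hD0 : ∀ i j, Tendsto (fun n => D n i j) atTop (𝓝 0) := by
    intro i j
    have := (tendsto_entry hM i j).sub_const ((J + c • E3) i j)
    rw [sub_self] at this
    exact this
  have hnz : ∀ n, ¬ (D n 0 0 = 0 ∧ D n 0 1 = 0 ∧ D n 0 2 + D n 1 1 = 0 ∧ D n 1 2 = 0) := by
    intro n hn
    apply hns n
    have h1 := SP_JE c
    simp only [hD, Matrix.sub_apply] at hn
    obtain ⟨a1, a2, a3, a4⟩ := hn
    obtain ⟨b1, b2, b3, b4⟩ := h1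
    exact ⟨by linarith, by linarith, by linarith, by linarith⟩
  choose t ht0 ht using fun n => exists_scale (hnz n)
  -- t tends to infinity
  have htt : Tendsto t atTop atTop := by
    rw [tendsto_atTop]
    intro R
    have e1 : Tendsto (fun n => max (max (|D n 0 0| * (max R 0)^4) (|D n 0 1| * (max R 0)^3))
        (max (|D n 0 2 + D n 1 1| * (max R 0)^2) (|D n 1 2| * (max R 0)))) atTop (𝓝 0) := by
      have := (((hD0 0 0).abs.mul_const ((max R 0)^4)).max ((hD0 0 1).abs.mul_const ((max R 0)^3))).max
        ((((hD0 0 2).add (hD0 1 1)).abs.mul_const ((max R 0)^2)).max ((hD0 1 2).abs.mul_const (max R 0)))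
      simpa using this
    filter_upwards [e1.eventually (gt_mem_nhds (zero_lt_one))] with n hn
    by_contra hlt
    push Not at hlt
    have hle : t n ≤ max R 0 := hlt.le.trans (le_max_left _ _)
    have h0 := (ht0 n).le
    have := ht n
    have h2 : max (max (|D n 0 0| * (t n)^4) (|D n 0 1| * (t n)^3))
        (max (|D n 0 2 + D n 1 1| * (t n)^2) (|D n 1 2| * (t n))) ≤
        max (max (|D n 0 0| * (max R 0)^4) (|D n 0 1| * (max R 0)^3))
        (max (|D n 0 2 + D n 1 1| * (max R 0)^2) (|D n 1 2| * (max R 0))) := by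
      gcongr
    linarith
  -- normalised coefficients
  set w : ℕ → (ℝ × ℝ) × (ℝ × ℝ) := fun n =>
    ((D n 0 0 * t n ^ 4, D n 0 1 * t n ^ 3), ((D n 0 2 + D n 1 1) * t n ^ 2, D n 1 2 * t n)) with hw
  set S : Set ((ℝ × ℝ) × (ℝ × ℝ)) := {p | max (max |p.1.1| |p.1.2|) (max |p.2.1| |p.2.2|) = 1} with hS
  have hSc : IsCompact S := by
    have hcl : IsClosed S := isClosed_eq (by fun_prop) continuous_const
    refine IsCompact.of_isClosed_subset (((isCompact_Icc (a := (-1:ℝ)) (b := 1)).prod (isCompact_Icc (a := (-1:ℝ)) (b := 1))).prod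
      ((isCompact_Icc (a := (-1:ℝ)) (b := 1)).prod (isCompact_Icc (a := (-1:ℝ)) (b := 1)))) hcl ?_
    rintro ⟨⟨p, q⟩, ⟨r, s⟩⟩ hp
    have hp' : max (max |p| |q|) (max |r| |s|) = 1 := hp
    have h1 := hp'.le
    simp only [max_le_iff, abs_le] at h1
    exact ⟨⟨h1.1.1, h1.1.2⟩, ⟨h1.2.1, h1.2.2⟩⟩
  have hwS : ∀ n, w n ∈ S := by
    intro n
    have hp := (ht0 n)
    change max (max |D n 0 0 * t n ^ 4| |D n 0 1 * t n ^ 3|) (max |(D n 0 2 + D n 1 1) * t n ^ 2| |D n 1 2 * t n|) = 1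
    rw [← ht n]
    simp only [abs_mul, abs_pow, abs_of_pos hp]
  obtain ⟨⟨⟨a, b⟩, ⟨e, f⟩⟩, hwl, φ, hφ, hφt⟩ := hSc.tendsto_subseq hwS
  have hne : ¬ (a = 0 ∧ b = 0 ∧ e = 0 ∧ f = 0) := by
    rintro ⟨rfl, rfl, rfl, rfl⟩
    have : max (max |(0:ℝ)| |(0:ℝ)|) (max |(0:ℝ)| |(0:ℝ)|) = 1 := hwl
    simp at this
  have la : Tendsto (fun n => D (φ n) 0 0 * t (φ n) ^ 4) atTop (𝓝 a) :=
    ((continuous_fst.comp continuous_fst).tendsto _).comp hφt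
  have lb : Tendsto (fun n => D (φ n) 0 1 * t (φ n) ^ 3) atTop (𝓝 b) :=
    ((continuous_snd.comp continuous_fst).tendsto _).comp hφt
  have le : Tendsto (fun n => (D (φ n) 0 2 + D (φ n) 1 1) * t (φ n) ^ 2) atTop (𝓝 e) :=
    ((continuous_fst.comp continuous_snd).tendsto _).comp hφt
  have lf : Tendsto (fun n => D (φ n) 1 2 * t (φ n)) atTop (𝓝 f) :=
    ((continuous_snd.comp continuous_snd).tendsto _).comp hφt
  have lt : Tendsto (fun n => (t (φ n))⁻¹) atTop (𝓝 0) :=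
    (tendsto_inv_atTop_zero.comp htt).comp hφ.tendsto_atTop
  have l02 : Tendsto (fun n => D (φ n) 0 2) atTop (𝓝 0) := (hD0 0 2).comp hφ.tendsto_atTop
  have l11 : Tendsto (fun n => D (φ n) 1 1) atTop (𝓝 0) := (hD0 1 1).comp hφ.tendsto_atTop
  have l22 : Tendsto (fun n => D (φ n) 2 2) atTop (𝓝 0) := (hD0 2 2).comp hφ.tendsto_atTop
  refine halfline_contra h hy hne (c := c) fun r => ?_
  -- limit of the conjugated forms
  have hlim : Tendsto (fun n => cj (M (φ n)) (U (r * t (φ n)))) atTop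
      (𝓝 (J + (c + (r^4/4 * a + r^3 * b + r^2 * e + 2 * r * f)) • E3)) := by
    have hN : Tendsto (fun n => cj (D (φ n)) (U (r * t (φ n)))) atTop
        (𝓝 ((r^4/4 * a + r^3 * b + r^2 * e + 2 * r * f) • E3)) := by
      have x00 : Tendsto (fun n => D (φ n) 0 0) atTop (𝓝 0) := (hD0 0 0).comp hφ.tendsto_atTop
      have x01 : Tendsto (fun n => (r * t (φ n)) * D (φ n) 0 0 + D (φ n) 0 1) atTop (𝓝 0) := by
        have := ((la.const_mul r).mul (lt.pow 3)).add (lb.mul (lt.pow 3))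
        simp only [ne_eq, OfNat.ofNat_ne_zero, not_false_eq_true, zero_pow, mul_zero, add_zero] at this
        refine this.congr fun n => ?_
        have := (ht0 (φ n)).ne'
        field_simp
      have x02 : Tendsto (fun n => (r * t (φ n))^2/2 * D (φ n) 0 0 + (r * t (φ n)) * D (φ n) 0 1 + D (φ n) 0 2)
          atTop (𝓝 0) := by
        have := (((la.const_mul (r^2/2)).mul (lt.pow 2)).add ((lb.const_mul r).mul (lt.pow 2))).add l02
        simp only [ne_eq, OfNat.ofNat_ne_zero, not_false_eq_true, zero_pow, mul_zero, add_zero] at this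
        refine this.congr fun n => ?_
        have := (ht0 (φ n)).ne'
        field_simp
      have x11 : Tendsto (fun n => (r * t (φ n))^2 * D (φ n) 0 0 + 2 * (r * t (φ n)) * D (φ n) 0 1 + D (φ n) 1 1)
          atTop (𝓝 0) := by
        have := (((la.const_mul (r^2)).mul (lt.pow 2)).add ((lb.const_mul (2 * r)).mul (lt.pow 2))).add l11
        simp only [ne_eq, OfNat.ofNat_ne_zero, not_false_eq_true, zero_pow, mul_zero, add_zero] at this
        refine this.congr fun n => ?_
        have := (ht0 (φ n)).ne'
        field_simp
      have x12 : Tendsto (fun n => (r * t (φ n))^3/2 * D (φ n) 0 0 + 3 * (r * t (φ n))^2/2 * D (φ n) 0 1 +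
          (r * t (φ n)) * (D (φ n) 0 2 + D (φ n) 1 1) + D (φ n) 1 2) atTop (𝓝 0) := by
        have := ((((la.const_mul (r^3/2)).mul lt).add ((lb.const_mul (3*r^2/2)).mul lt)).add
          ((le.const_mul r).mul lt)).add (lf.mul lt)
        simp only [mul_zero, add_zero] at this
        refine this.congr fun n => ?_
        have := (ht0 (φ n)).ne'
        field_simp
      have x22 : Tendsto (fun n => (r * t (φ n))^4/4 * D (φ n) 0 0 + (r * t (φ n))^3 * D (φ n) 0 1 +
          (r * t (φ n))^2 * (D (φ n) 0 2 + D (φ n) 1 1) + 2 * (r * t (φ n)) * D (φ n) 1 2 + D (φ n) 2 2)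
          atTop (𝓝 (r^4/4 * a + r^3 * b + r^2 * e + 2 * r * f)) := by
        have := ((((la.const_mul (r^4/4)).add (lb.const_mul (r^3))).add
          (le.const_mul (r^2))).add (lf.const_mul (2 * r))).add l22
        simp only [add_zero] at this
        refine this.congr fun n => ?_
        ring
      simp only [cj_U_formula (hDs _)]
      apply tendsto_of_entries
      intro i j
      fin_cases i <;> fin_cases j <;> simp [E3] <;> assumption
    have h2 := hN.const_add (J + c • E3)
    convert h2 using 2 with n
    · have : M (φ n) = (J + c • E3) + D (φ n) := by simp [hD]
      rw [this, cj_add, cj_JE_U]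
    · rw [add_smul c, ← add_assoc J]
  -- go to the limit along a sequence in the minimal set
  have hyn : ∀ n, U (-(r * t (φ n))) * y ∈ Y := fun n => hY.inv.u _ _ hy
  choose γ hγ using fun n => hK.2 _ (hYZ (hyn n))
  obtain ⟨y', hy', ψ, hψ, hψt⟩ := hK.1.tendsto_subseq hγ
  have hy'Y : y' ∈ Y := hY.inv.cl.mem_of_tendsto hψt (Eventually.of_forall fun n =>
    hY.inv.g _ _ (hyn _))
  refine ES_of_one h hY hy'Y ?_
  have hl2 := tendsto_cj (hlim.comp hψ.tendsto_atTop) hψt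
  refine h.cl.mem_of_tendsto hl2 (Eventually.of_forall fun n => ?_)
  simp only [Function.comp]
  rw [← cj_mul, mul_assoc, ← mul_assoc (U _) (U _), U_mul_neg, one_mul, cj_mul]
  exact h.g _ _ (hMZ _)

end Opp
end Part3

section Part4
open Matrix Filter Topology

namespace Opp

lemma SP_eq {M : M3} (hs : Mᵀ = M) (hd : M.det = 1) (h : SP M) : M = J + (M 2 2) • E3 := by
  have h10 : M 1 0 = M 0 1 := congrFun (congrFun hs 0) 1
  have h20 : M 2 0 = M 0 2 := congrFun (congrFun hs 0) 2
  have h21 : M 2 1 = M 1 2 := congrFun (congrFun hs 1) 2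
  obtain ⟨h1, h2, h3, h4⟩ := h
  have h11 : M 1 1 = - M 0 2 := by linarith
  rw [Matrix.det_fin_three, h10, h20, h21, h1, h2, h4, h11] at hd
  have h3 : (M 0 2) ^ 3 = 1 ^ 3 := by linarith
  have h5 : M 0 2 = 1 := (Odd.strictMono_pow (by decide : Odd 3)).injective h3
  ext i j
  fin_cases i <;> fin_cases j <;> simp [J, E3, h1, h2, h4, h5, h10, h20, h21, h11]

lemma case_i' {ε : ℝ} {Z : Set M3} (h : Good ε Z) {Y : Set SLR} (hY : IsMinl Y)
    (hYZ : Y ⊆ {g | cj J g ∈ Z}) {y : SLR} (hy : y ∈ Y) {c : ℝ} {M : ℕ → M3}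
    (hM : Tendsto M atTop (𝓝 (J + c • E3)))
    (hMZ : ∀ n, cj (M n) y ∈ Z) : ∀ᶠ n in atTop, M n = J + (M n 2 2) • E3 := by
  have hMs : ∀ n, (M n)ᵀ = M n := by
    intro n
    have := cj_symm (h.symm _ (hMZ n)) y⁻¹
    rwa [cj_cj_inv] at this
  have hMd : ∀ n, (M n).det = 1 := by
    intro n
    have := h.det _ (hMZ n)
    rwa [cj_det] at this
  by_contra hcon
  have hf : ∃ᶠ n in atTop, ¬ SP (M n) := by
    rw [not_eventually] at hcon
    exact hcon.mono fun n hn hsp => hn (SP_eq (hMs n) (hMd n) hsp)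
  obtain ⟨φ, hφ, hφn⟩ := extraction_of_frequently_atTop hf
  exact case_i h hY hYZ hy (hM.comp hφ.tendsto_atTop) (fun n => hMs _) (fun n => hMZ _) hφn

lemma not_unip {ε : ℝ} {Z : Set M3} (h : Good ε Z) {y : SLR} (hy : cj J y ∈ Z) {t s : ℝ} (γ : SLZ)
    (hts : s ≠ t) (heq : U t * y * io γ * y⁻¹ = U s) : False := by
  have h1 : y * io γ = U (s - t) * y := by
    have : U (s - t) = U (-t) * U s := by rw [← U_add]; congr 1; ring
    rw [this, ← heq]
    simp only [← mul_assoc, U_neg_mul]; simp [mul_assoc]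
  set τ := s - t with hτ
  have hτ0 : τ ≠ 0 := sub_ne_zero.2 hts
  have hdet : (mz γ - 1).det = 0 := by
    have hd2 : (mt (io γ) - 1).det = 0 := by
      have e : mt y * (mt (io γ) - 1) = (mt (U τ) - 1) * mt y := by
        rw [Matrix.mul_sub, Matrix.sub_mul, ← mt_mul, h1, mt_mul]; simp
      have := congrArg Matrix.det e
      rw [Matrix.det_mul, Matrix.det_mul, mt_det, one_mul, mul_one] at this
      rw [this, mt_U, Matrix.det_fin_three]
      simp
    have e2 : mt (io γ) - 1 = (mz γ - 1).map (Int.castRingHom ℝ) := by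
      ext i j
      simp only [Matrix.sub_apply, Matrix.map_apply, io_apply]
      by_cases hij : i = j
      · subst hij; simp
      · simp [hij]
    rw [e2, ← RingHom.mapMatrix_apply, ← RingHom.map_det] at hd2
    simpa using hd2
  obtain ⟨v, hv0, hv⟩ := Matrix.exists_mulVec_eq_zero_iff.2 hdet
  have hv' : mz γ *ᵥ v = v := by
    rw [Matrix.sub_mulVec, Matrix.one_mulVec] at hv
    exact sub_eq_zero.1 hv
  have hw : mt (U τ) *ᵥ (mt y *ᵥ cv v) = mt y *ᵥ cv v := by
    rw [Matrix.mulVec_mulVec, ← mt_mul, ← h1, mt_mul, ← Matrix.mulVec_mulVec, io_cv, hv']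
  have := h.val _ hy v hv0
  rw [cj_qf, qf_J] at this
  set w := mt y *ᵥ cv v
  have w0 := congrFun hw 0
  have w1 := congrFun hw 1
  simp [mt_U, Matrix.mulVec, dotProduct, Fin.sum_univ_three] at w0 w1
  have hw2 : w 2 = 0 := by tauto
  rw [hw2] at w0
  have hw1 : w 1 = 0 := by
    have : τ * w 1 = 0 := by linarith
    simpa [hτ0] using this
  rw [hw1, hw2] at this
  simp at this
  linarith [h.pos]

lemma return_seq {ε : ℝ} {Z : Set M3} (h : Good ε Z) {Y : Set SLR} (hY : IsMinl Y)
    (hYZ : Y ⊆ {g | cj J g ∈ Z}) {y : SLR} (hy : y ∈ Y) :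
    ∃ g : ℕ → SLR, Tendsto g atTop (𝓝 1) ∧ (∀ n, g n * y ∈ Y) ∧ ∀ n s, g n ≠ U s := by
  obtain ⟨K, hK⟩ := h.cov
  obtain ⟨b, hb⟩ := (𝓝 (1 : SLR)).exists_antitone_basis
  have key : ∀ n : ℕ, ∃ g ∈ b n, g * y ∈ Y ∧ ∀ s, g ≠ U s := by
    intro n
    have hV1 : {g : SLR | mt g 0 1 < 1} ∈ 𝓝 (1 : SLR) := by
      apply IsOpen.mem_nhds
      · exact isOpen_lt ((continuous_apply_apply (ρ := fun _ _ => ℝ) 0 1).comp continuous_mt)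
          continuous_const
      · change mt 1 0 1 < 1
        rw [mt_one]; simp
    have hc : Tendsto (fun g : SLR => g * y⁻¹) (𝓝 y) (𝓝 1) := by
      have : Continuous (fun g : SLR => g * y⁻¹) := continuous_id.mul continuous_const
      have h2 := this.tendsto y
      rwa [mul_inv_cancel] at h2
    obtain ⟨t, ht, γ, h1, h2⟩ := returns hY (hK.mono hYZ) hy 1
      (hc (inter_mem (hb.1.mem_of_mem (i := n) trivial) hV1))
    refine ⟨_, h1, ?_, ?_⟩
    · rw [inv_mul_cancel_right]
      exact hY.inv.g _ _ (hY.inv.u _ _ hy)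
    · intro s hs
      refine not_unip h (hYZ hy) γ ?_ hs
      rw [hs] at h2
      have h3 : mt (U s) 0 1 < 1 := h2
      rw [mt_U] at h3
      simp at h3
      linarith
  choose g hg using key
  exact ⟨g, hb.tendsto fun n => (hg n).1, fun n => (hg n).2.1, fun n => (hg n).2.2⟩

lemma affine_step {E : Set ℝ} {l r p σ : ℝ} (hp : p ∈ E) (hl : 1 ≤ l)
    (hE : ∀ x ∈ E, l * x + r ∈ E) (hδ : 0 < l * p + r - p) (hσ : p ≤ σ) :
    ∃ x ∈ E, |σ - x| ≤ (l - 1) * (σ - p) + (l * p + r - p) := by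
  set T : ℝ → ℝ := fun x => l * x + r with hT
  have hx : ∀ k : ℕ, T^[k] p ∈ E ∧ p + k * (l * p + r - p) ≤ T^[k] p := by
    intro k
    induction k with
    | zero => simp [hp]
    | succ k ih =>
      rw [Function.iterate_succ_apply']
      refine ⟨hE _ ih.1, ?_⟩
      set x := T^[k] p
      have hxp : p ≤ x := by
        have : 0 ≤ (k:ℝ) * (l * p + r - p) := by positivity
        linarith [ih.2]
      have : x + (l * p + r - p) ≤ T x := by
        simp only [hT]
        nlinarith
      push_cast
      linarith [ih.2]
  have hex : ∃ k : ℕ, σ < T^[k] p := by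
    obtain ⟨k, hk⟩ := exists_nat_gt ((σ - p) / (l * p + r - p))
    refine ⟨k, ?_⟩
    rw [div_lt_iff₀ hδ] at hk
    linarith [(hx k).2]
  classical
  have hk := Nat.find_spec hex
  have hk0 : Nat.find hex ≠ 0 := by
    intro h0
    rw [h0] at hk
    simp at hk
    linarith
  obtain ⟨k, hkk⟩ := Nat.exists_eq_succ_of_ne_zero hk0
  have hmin : T^[k] p ≤ σ := not_lt.1 (Nat.find_min hex (by omega))
  rw [hkk, Function.iterate_succ_apply'] at hk
  refine ⟨T^[k] p, (hx k).1, ?_⟩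
  rw [abs_of_nonneg (by linarith)]
  set x := T^[k] p
  simp only [hT] at hk
  nlinarith

lemma affine_top {E : Set ℝ} (hc : IsClosed E) {l r : ℕ → ℝ} {p : ℝ} (hp : p ∈ E)
    (hl1 : ∀ n, 1 ≤ l n) (hl : Tendsto l atTop (𝓝 1)) (hr : Tendsto r atTop (𝓝 0))
    (hE : ∀ n, ∀ x ∈ E, l n * x + r n ∈ E)
    (hf : ∃ᶠ n in atTop, 0 < l n * p + r n - p) : ∀ σ, p ≤ σ → σ ∈ E := by
  intro σ hσ
  rw [← hc.closure_eq, Metric.mem_closure_iff]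
  intro ε hε
  have ht : Tendsto (fun n => (l n - 1) * (σ - p) + (l n * p + r n - p)) atTop (𝓝 0) := by
    have := ((hl.sub_const 1).mul_const (σ - p)).add (((hl.mul_const p).add hr).sub_const p)
    simpa using this
  obtain ⟨n, hn, hn2⟩ := (hf.and_eventually (ht.eventually (gt_mem_nhds hε))).exists
  obtain ⟨x, hx, hxx⟩ := affine_step hp (hl1 n) (hE n) hn hσ
  exact ⟨x, hx, by rw [Real.dist_eq]; linarith⟩

lemma affine_halfline {E : Set ℝ} (hc : IsClosed E) {l r : ℕ → ℝ} {b : ℝ} (h0 : (0:ℝ) ∈ E)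
    (hb : b ∈ E) (hb0 : b ≠ 0) (hl0 : ∀ n, 0 < l n)
    (hl : Tendsto l atTop (𝓝 1)) (hr : Tendsto r atTop (𝓝 0))
    (hE : ∀ n x, x ∈ E ↔ l n * x + r n ∈ E)
    (hne : ∀ n, ¬ (l n = 1 ∧ r n = 0)) :
    (∃ x, ∀ σ, x ≤ σ → σ ∈ E) ∨ (∃ x, ∀ σ, σ ≤ x → σ ∈ E) := by
  classical
  set l' : ℕ → ℝ := fun n => if 1 ≤ l n then l n else (l n)⁻¹ with hl'
  set r' : ℕ → ℝ := fun n => if 1 ≤ l n then r n else - r n * (l n)⁻¹ with hr'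
  have hli : Tendsto (fun n => (l n)⁻¹) atTop (𝓝 1) := by
    simpa using hl.inv₀ one_ne_zero
  have h1 : ∀ n, 1 ≤ l' n := by
    intro n
    simp only [hl']
    split_ifs with h
    · exact h
    · exact (one_le_inv₀ (hl0 n)).2 (le_of_lt (not_le.1 h))
  have h2 : Tendsto l' atTop (𝓝 1) := hl.if' hli
  have h3 : Tendsto r' atTop (𝓝 0) := by
    refine hr.if' ?_
    simpa using hr.neg.mul hli
  have h4 : ∀ n, ∀ x ∈ E, l' n * x + r' n ∈ E := by
    intro n x hx
    simp only [hl', hr']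
    split_ifs with h
    · exact (hE n x).1 hx
    · rw [hE n]
      have := (hl0 n).ne'
      convert hx using 1
      field_simp
      ring
  have h5 : ∀ n, r' n ≠ 0 ∨ l' n * b + r' n - b ≠ 0 := by
    intro n
    by_contra hcon
    push Not at hcon
    obtain ⟨c1, c2⟩ := hcon
    apply hne n
    have hl1 : l' n = 1 := by
      rw [c1] at c2
      have : (l' n - 1) * b = 0 := by linarith
      rcases mul_eq_zero.1 this with h | h
      · linarith
      · exact absurd h hb0
    simp only [hl', hr'] at hl1 c1
    split_ifs at hl1 c1 with h
    · exact ⟨hl1, c1⟩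
    · have := (hl0 n).ne'
      refine ⟨inv_eq_one.1 hl1, ?_⟩
      rw [hl1] at c1; linarith
  -- negative version
  have hbot : ∀ p ∈ E, (∃ᶠ n in atTop, l' n * p + r' n - p < 0) → ∀ σ, σ ≤ p → σ ∈ E := by
    intro p hp hf σ hσ
    have := affine_top (E := {x | -x ∈ E}) (hc.preimage continuous_neg) (p := -p) (l := l')
      (r := fun n => - r' n) (by simpa using hp) h1 h2 (by simpa using h3.neg)
      (by
        intro n x hx
        have := h4 n _ hx
        change -(l' n * x + -r' n) ∈ E
        convert this using 1; ring)
      (hf.mono fun n hn => by linarith) (-σ) (by linarith)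
    simpa using this
  by_contra hcon
  push Not at hcon
  obtain ⟨hc1, hc2⟩ := hcon
  have t1 : ∀ p ∈ E, ∀ᶠ n in atTop, l' n * p + r' n - p = 0 := by
    intro p hp
    have a1 : ¬ ∃ᶠ n in atTop, 0 < l' n * p + r' n - p := by
      intro hf
      obtain ⟨σ, s1, s2⟩ := hc1 p
      exact s2 (affine_top hc hp h1 h2 h3 h4 hf σ s1)
    have a2 : ¬ ∃ᶠ n in atTop, l' n * p + r' n - p < 0 := by
      intro hf
      obtain ⟨σ, s1, s2⟩ := hc2 p
      exact s2 (hbot p hp hf σ s1)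
    rw [not_frequently] at a1 a2
    filter_upwards [a1, a2] with n b1 b2
    linarith
  obtain ⟨n, n1, n2⟩ := ((t1 0 h0).and (t1 b hb)).exists
  rcases h5 n with h | h
  · apply h; linarith
  · exact h n2

lemma eq_U {g : SLR} (hg : cj J g = J) (h0 : mt g 2 0 = 0) (h1 : mt g 2 1 = 0) (h2 : mt g 2 2 = 1) :
    g = U (mt g 0 1) := by
  have hd := mt_det g
  have e00 := congrFun (congrFun hg 0) 0
  have e02 := congrFun (congrFun hg 0) 2
  have e12 := congrFun (congrFun hg 1) 2
  have e22 := congrFun (congrFun hg 2) 2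
  simp [cj, J, Matrix.mul_apply, Fin.sum_univ_three, h0, h1, h2] at e00 e02 e12 e22
  rw [Matrix.det_fin_three] at hd
  rw [h0, h1, h2] at hd
  have d0 : mt g 1 0 = 0 := by
    simpa using e00
  rw [d0] at e02 hd
  have a0 : mt g 0 0 = 1 := by linarith
  rw [a0] at hd
  have e0 : mt g 1 1 = 1 := by linarith
  rw [e0] at e12
  have f0 : mt g 1 2 = mt g 0 1 := by linarith
  rw [f0] at e22
  have c0 : mt g 0 2 = mt g 0 1 ^ 2 / 2 := by linarith
  apply mt_injective
  rw [mt_U]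
  ext i j
  fin_cases i <;> fin_cases j <;> simp [h0, h1, h2, d0, a0, e0, f0, c0]

lemma ES_trivial {ε : ℝ} {Z : Set M3} (h : Good ε Z) {Y : Set SLR} (hY : IsMinl Y)
    (hYZ : Y ⊆ {g | cj J g ∈ Z}) {b : ℝ} (hb : b ∈ ES Z Y) : b = 0 := by
  by_contra hb0
  obtain ⟨y, hy⟩ := hY.ne
  obtain ⟨g, hg, hgY, hgU⟩ := return_seq h hY hYZ hy
  have hz : (0:ℝ) ∈ ES Z Y := by
    intro y hy
    simpa using hYZ hy
  have hmt : ∀ i j, Tendsto (fun n => mt (g n) i j) atTop (𝓝 ((1 : M3) i j)) := by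
    intro i j
    refine tendsto_entry (M := fun n => mt (g n)) ?_ i j
    exact (continuous_mt.tendsto 1).comp hg
  have e1 : ∀ c ∈ ES Z Y, ∀ᶠ n in atTop, cj (J + c • E3) (g n) = J + (cj (J + c • E3) (g n) 2 2) • E3 := by
    intro c hc
    refine case_i' h hY hYZ hy (c := c) ?_ ?_
    · have := tendsto_cj (tendsto_const_nhds (x := J + c • E3)) hg
      rwa [cj_one] at this
    · intro n
      rw [← cj_mul]
      exact hc _ (hgY n)
  have e2 : ∀ᶠ n in atTop, 0 < mt (g n) 2 2 := by
    refine (hmt 2 2).eventually (lt_mem_nhds ?_)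
    simp
  obtain ⟨N, hN⟩ := eventually_atTop.1 ((e1 0 hz).and ((e1 b hb).and e2))
  simp only [zero_smul, add_zero] at hN
  have hrow : ∀ n ≥ N, mt (g n) 2 0 = 0 ∧ mt (g n) 2 1 = 0 := by
    intro n hn
    obtain ⟨h1, h2, -⟩ := hN n hn
    rw [cj_add, cj_smul] at h2
    have x0 := congrFun (congrFun h2 0) 0
    have x1 := congrFun (congrFun h2 1) 1
    have y0 := congrFun (congrFun h1 0) 0
    have y1 := congrFun (congrFun h1 1) 1
    have E00 : E3 0 0 = 0 := by simp [E3]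
    have E11 : E3 1 1 = 0 := by simp [E3]
    simp only [Matrix.add_apply, Matrix.smul_apply, smul_eq_mul, E00, E11, mul_zero, add_zero]
      at x0 x1 y0 y1
    have z0 : cj E3 (g n) 0 0 = 0 := by
      have : b * cj E3 (g n) 0 0 = 0 := by
        linarith
      simpa [hb0] using this
    have z1 : cj E3 (g n) 1 1 = 0 := by
      have : b * cj E3 (g n) 1 1 = 0 := by
        linarith
      simpa [hb0] using this
    simp [cj, E3, Matrix.mul_apply, Fin.sum_univ_three] at z0 z1
    exact ⟨z0, z1⟩
  have hT : ∀ n ≥ N, ∀ σ : ℝ, cj (J + σ • E3) (g n) =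
      J + (mt (g n) 2 2 ^ 2 * σ + cj J (g n) 2 2) • E3 := by
    intro n hn σ
    obtain ⟨h1, -, -⟩ := hN n hn
    obtain ⟨r0, r1⟩ := hrow n hn
    have hE : cj E3 (g n) = (mt (g n) 2 2 ^ 2) • E3 := by
      ext i j
      fin_cases i <;> fin_cases j <;>
        simp [cj, E3, Matrix.mul_apply, Fin.sum_univ_three, r0, r1]
      ring
    rw [cj_add, cj_smul, hE, add_smul, smul_smul, mul_comm σ]
    conv_lhs => rw [h1]
    rw [add_assoc, add_comm (_ • E3)]
  have hhalf := affine_halfline (ES_closed h (Y := Y)) (l := fun n => mt (g (N + n)) 2 2 ^ 2)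
    (r := fun n => cj J (g (N + n)) 2 2) hz hb hb0
    (fun n => pow_pos (hN (N + n) (by omega)).2.2 2)
    (by
      have := ((hmt 2 2).comp (tendsto_add_atTop_nat N)).pow 2
      simp only [Matrix.one_apply_eq, one_pow] at this
      refine this.congr fun n => ?_
      simp [add_comm])
    (by
      have := tendsto_entry (tendsto_cj (tendsto_const_nhds (x := J)) hg) 2 2
      rw [cj_one] at this
      have h3 := this.comp (tendsto_add_atTop_nat N)
      have : J 2 2 = 0 := by simp [J]
      rw [this] at h3
      refine h3.congr fun n => ?_
      simp [add_comm])
    (by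
      intro n σ
      constructor
      · intro hσ
        have := hσ _ (hgY (N + n))
        rw [cj_mul, hT _ (by omega)] at this
        exact ES_of_one h hY hy this
      · intro hσ
        have := hσ _ hy
        rw [← hT _ (by omega), ← cj_mul] at this
        exact ES_of_one h hY (hgY (N + n)) this)
    (by
      rintro n ⟨h1, h2⟩
      obtain ⟨a1, a2, a3⟩ := hN (N + n) (by omega)
      obtain ⟨r0, r1⟩ := hrow (N + n) (by omega)
      refine hgU (N + n) _ (eq_U ?_ r0 r1 ?_)
      · rw [a1, h2]; simp
      · have : (mt (g (N + n)) 2 2) ^ 2 = 1 ^ 2 := by rw [h1]; norm_num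
        exact (pow_left_inj₀ a3.le zero_le_one two_ne_zero).1 this)
  rcases hhalf with ⟨x, hx⟩ | ⟨x, hx⟩
  · exact no_halfline_top h hy hx
  · exact no_halfline_bot h hy hx

lemma isolated {ε : ℝ} {Z : Set M3} (h : Good ε Z) {Y : Set SLR} (hY : IsMinl Y)
    (hYZ : Y ⊆ {g | cj J g ∈ Z}) {y : SLR} (hy : y ∈ Y) :
    ∀ᶠ M in 𝓝 (cj J y), M ∈ Z → M = cj J y := by
  by_contra hcon
  rw [not_eventually] at hcon
  obtain ⟨M, hM, hMp⟩ := exists_seq_forall_of_frequently hcon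
  have h1 : Tendsto (fun n => cj (M n) y⁻¹) atTop (𝓝 (J + (0:ℝ) • E3)) := by
    have := tendsto_cj hM (tendsto_const_nhds (x := y⁻¹))
    rw [cj_cj_inv] at this
    simpa using this
  have h2 : ∀ n, cj (cj (M n) y⁻¹) y ∈ Z := by
    intro n
    rw [cj_inv_cj]
    have := hMp n
    push Not at this
    exact this.1
  obtain ⟨n, hn⟩ := (case_i' h hY hYZ hy h1 h2).exists
  have h3 := h2 n
  rw [hn] at h3
  have h4 := ES_trivial h hY hYZ (ES_of_one h hY hy h3)
  rw [h4] at hn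
  have := hMp n
  push Not at this
  apply this.2
  rw [← cj_inv_cj (M n) y, hn]
  simp

end Opp
end Part4

section Part5
open Matrix Filter Topology

namespace Opp

def IsRat {n : ℕ} (A : Matrix (Fin n) (Fin n) ℝ) : Prop :=
  ∃ c : ℝ, c ≠ 0 ∧ ∀ i j, ∃ q : ℚ, c * A i j = (q : ℝ)

lemma continuous_qf (x : Fin 3 → ℝ) : Continuous (fun M : M3 => qf M x) := by
  unfold qf
  exact Continuous.dotProduct continuous_const (Continuous.matrix_mulVec continuous_id continuous_const)

lemma mz_mulVec_ne {γ : SLZ} {v : Fin 3 → ℤ} (hv : v ≠ 0) : mz γ *ᵥ v ≠ 0 := by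
  intro h0
  have := congrArg (fun w => mz γ⁻¹ *ᵥ w) h0
  simp only [Matrix.mulVec_mulVec, mz_inv_mul, Matrix.one_mulVec, Matrix.mulVec_zero] at this
  exact hv this

/-- the orbit -/
def Orb (A : M3) : Set M3 := Set.range fun γ : SLZ => cj A (io γ)

lemma Orb_self (A : M3) : A ∈ Orb A := ⟨1, by simp [cj_one]⟩

lemma Orb_g {A M : M3} (hM : M ∈ Orb A) (γ : SLZ) : cj M (io γ) ∈ Orb A := by
  obtain ⟨γ', rfl⟩ := hM
  exact ⟨γ' * γ, by simp [cj_mul]⟩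

lemma good_closure {A : M3} {ε : ℝ} (hε : 0 < ε) (hs : Aᵀ = A) (hd : A.det = 1)
    (hv : ∀ v : Fin 3 → ℤ, v ≠ 0 → ε ≤ |qf A (cv v)|) : Good ε (closure (Orb A)) := by
  refine ⟨hε, isClosed_closure, ?_, ?_, ?_, ?_⟩
  · intro γ M hM
    refine map_mem_closure (f := fun M => cj M (io γ)) (continuous_cj_right _) hM ?_
    intro M hM; exact Orb_g hM γ
  · have : closure (Orb A) ⊆ {M | Mᵀ = M} := by
      apply closure_minimal
      · rintro _ ⟨γ, rfl⟩; exact cj_symm hs _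
      · exact isClosed_eq (Continuous.matrix_transpose continuous_id) continuous_id
    exact fun M hM => this hM
  · have : closure (Orb A) ⊆ {M | M.det = 1} := by
      apply closure_minimal
      · rintro _ ⟨γ, rfl⟩; exact (cj_det _ _).trans hd
      · exact isClosed_eq (Continuous.matrix_det continuous_id) continuous_const
    exact fun M hM => this hM
  · intro M hM v hv0
    have : closure (Orb A) ⊆ {M | ε ≤ |qf M (cv v)|} := by
      apply closure_minimal
      · rintro _ ⟨γ, rfl⟩
        change ε ≤ |qf (cj A (io γ)) (cv v)|
        rw [cj_qf, io_cv]
        exact hv _ (mz_mulVec_ne hv0)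
      · exact isClosed_le continuous_const (continuous_qf _).abs
    exact this hM

lemma orbit_closed {g0 : SLR} {ε : ℝ} (h : Good ε (closure (Orb (cj J g0)))) :
    (∀ X ∈ Orb (cj J g0), ∀ᶠ M in 𝓝 X, M ∈ closure (Orb (cj J g0)) → M = X) ∧
    ∀ g, cj J g ∈ closure (Orb (cj J g0)) → cj J g ∈ Orb (cj J g0) := by
  set A := cj J g0 with hA
  set Z := closure (Orb A) with hZ
  obtain ⟨K, hK⟩ := h.cov
  -- isolated points lie in the orbit
  have hiso : ∀ X ∈ Z, (∀ᶠ M in 𝓝 X, M ∈ Z → M = X) → X ∈ Orb A := by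
    intro X hX hiso
    obtain ⟨M, hM1, hM2⟩ := mem_closure_iff_nhds.1 hX _ hiso
    have : M = X := hM1 (subset_closure hM2)
    rwa [← this]
  have part1 : ∀ X ∈ Orb A, ∀ᶠ M in 𝓝 X, M ∈ Z → M = X := by
    obtain ⟨Y, hY0, hY⟩ := exists_min h.inv ⟨g0, subset_closure (Orb_self A)⟩ hK
    obtain ⟨y, hy⟩ := hY.ne
    have h1 := isolated h hY hY0 hy
    obtain ⟨γ1, h2⟩ := hiso _ (hY0 hy) h1
    rintro X ⟨γ, rfl⟩
    have h3 : cj A (io γ) = cj (cj J y) (io (γ1⁻¹ * γ)) := by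
      have e : io γ = io γ1 * io (γ1⁻¹ * γ) := by rw [← map_mul, mul_inv_cancel_left]
      rw [← h2]
      change cj A (io γ) = cj (cj A (io γ1)) (io (γ1⁻¹ * γ))
      rw [e, cj_mul A]
    have h4 : Tendsto (fun M => cj M (io (γ1⁻¹ * γ)⁻¹)) (𝓝 (cj A (io γ))) (𝓝 (cj J y)) := by
      have := (continuous_cj_right (io (γ1⁻¹ * γ)⁻¹)).tendsto (cj A (io γ))
      have e2 : cj (cj A (io γ)) (io (γ1⁻¹ * γ)⁻¹) = cj J y := by
        rw [h3, map_inv, cj_cj_inv]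
      rwa [e2] at this
    filter_upwards [h4.eventually h1] with M hM hMZ
    have := hM (h.g _ _ hMZ)
    change M = cj A (io γ)
    rw [h3, ← this, map_inv, cj_inv_cj]
  refine ⟨part1, ?_⟩
  have hcl : IsClosed (Z \ Orb A) := by
    rw [← closure_subset_iff_isClosed]
    intro M hM
    have hMZ : M ∈ Z := closure_minimal Set.diff_subset isClosed_closure hM
    refine ⟨hMZ, fun hMO => ?_⟩
    obtain ⟨N, hN1, hN2⟩ := mem_closure_iff_nhds.1 hM _ (part1 M hMO)
    have : N = M := hN1 hN2.1
    exact hN2.2 (this ▸ hMO)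
  have hg' : Good ε (Z \ Orb A) := by
    refine ⟨h.pos, hcl, ?_, fun M hM => h.symm M hM.1, fun M hM => h.det M hM.1,
      fun M hM => h.val M hM.1⟩
    rintro γ M ⟨h1, h2⟩
    refine ⟨h.g _ _ h1, fun h3 => h2 ?_⟩
    have := Orb_g h3 γ⁻¹
    rwa [map_inv, cj_cj_inv] at this
  intro g hg
  by_contra hgO
  obtain ⟨K', hK'⟩ := hg'.cov
  obtain ⟨Y, hY0, hY⟩ := exists_min hg'.inv ⟨g, hg, hgO⟩ hK'
  obtain ⟨y, hy⟩ := hY.ne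
  exact (hY0 hy).2 (hiso _ (hY0 hy).1 (isolated h hY (fun x hx => (hY0 hx).1) hy))

lemma poly_bounded {a b e f d B : ℝ}
    (h : ∀ t : ℝ, |t^4/4 * a + t^3 * b + t^2 * e + 2 * t * f + d| ≤ B) :
    a = 0 ∧ b = 0 ∧ e = 0 ∧ f = 0 := by
  set p : Polynomial ℝ := Polynomial.C (a/4) * Polynomial.X^4 + Polynomial.C b * Polynomial.X^3
    + Polynomial.C e * Polynomial.X^2 + Polynomial.C (2 * f) * Polynomial.X + Polynomial.C d with hp
  have hev : ∀ r, |p.eval r| ≤ B := by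
    intro r
    convert h r using 2
    simp [hp]; ring
  by_cases hdeg : 0 < p.degree
  · exfalso
    rcases le_total 0 p.leadingCoeff with hl | hl
    · have ht := p.tendsto_atTop_of_leadingCoeff_nonneg hdeg hl
      obtain ⟨T, hT⟩ := (ht.eventually (eventually_ge_atTop (B + 1))).exists
      have := (abs_le.1 (hev T)).2
      linarith
    · have ht := p.tendsto_atBot_of_leadingCoeff_nonpos hdeg hl
      obtain ⟨T, hT⟩ := (ht.eventually (eventually_le_atBot (-B - 1))).exists
      have := (abs_le.1 (hev T)).1
      linarith
  · have h0 := Polynomial.eq_C_of_degree_le_zero (not_lt.1 hdeg)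
    have c1 := congrArg (fun q => Polynomial.coeff q 1) h0
    have c2 := congrArg (fun q => Polynomial.coeff q 2) h0
    have c3 := congrArg (fun q => Polynomial.coeff q 3) h0
    have c4 := congrArg (fun q => Polynomial.coeff q 4) h0
    simp [hp, Polynomial.coeff_X, Polynomial.coeff_C] at c1 c2 c3 c4
    exact ⟨c4, c3, c2, c1⟩

noncomputable def Lo (t : ℝ) : SLR := mkr !![1,0,0;t,1,0;t^2/2,t,1] (by simp [Matrix.det_fin_three])

lemma cj_J_Lo (t : ℝ) : cj J (Lo t) = J := by
  simp only [cj, Lo, mt_mkr, J]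
  ext i j; fin_cases i <;> fin_cases j <;>
    simp [Matrix.mul_apply, Fin.sum_univ_three] <;> ring

lemma bounded_inv {P : M3} (hs : Pᵀ = P) {B : ℝ}
    (hB : ∀ h : SLR, cj J h = J → ∀ i j, |cj P h i j| ≤ B) : P = (P 0 2) • J := by
  have h1 : SP P := by
    have := poly_bounded (a := P 0 0) (b := P 0 1) (e := P 0 2 + P 1 1) (f := P 1 2) (d := P 2 2)
      (B := B) (by
        intro t
        have := hB (U t) (cj_J_U t) 2 2
        rw [cj_U_formula hs] at this
        exact this)
    exact this
  have h10 : P 1 0 = P 0 1 := congrFun (congrFun hs 0) 1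
  have h20 : P 2 0 = P 0 2 := congrFun (congrFun hs 0) 2
  have h21 : P 2 1 = P 1 2 := congrFun (congrFun hs 1) 2
  obtain ⟨p1, p2, p3, p4⟩ := h1
  have p11 : P 1 1 = - P 0 2 := by linarith
  have h2 : P 2 2 = 0 := by
    refine (poly_bounded (a := P 2 2) (b := 0) (e := 0) (f := 0) (d := 0) (B := B) ?_).1
    intro t
    have := hB (Lo t) (cj_J_Lo t) 0 0
    convert this using 2
    simp [cj, Lo, mt_mkr, Matrix.mul_apply, Fin.sum_univ_three, p1, p2, p4, p11, h10, h20, h21]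
    ring
  ext i j
  fin_cases i <;> fin_cases j <;> simp [J, p1, p2, p4, p11, h10, h20, h21, h2]

/-- apply a `ℚ`-linear functional entrywise -/
noncomputable def Ph (φ : ℝ →ₗ[ℚ] ℚ) (M : M3) : M3 := fun i j => ((φ (M i j) : ℚ) : ℝ)

lemma Ph_cj (φ : ℝ →ₗ[ℚ] ℚ) (M : M3) (γ : SLZ) : Ph φ (cj M (io γ)) = cj (Ph φ M) (io γ) := by
  have hz : ∀ (n : ℤ) (x : ℝ), φ ((n : ℝ) * x) = n * φ x := by
    intro n x
    rw [← zsmul_eq_mul, map_zsmul, zsmul_eq_mul]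
  have hz' : ∀ (n : ℤ) (x : ℝ), φ (x * (n : ℝ)) = φ x * n := by
    intro n x
    rw [mul_comm, hz, mul_comm]
  ext i j
  simp only [Ph, cj, Matrix.mul_apply, Matrix.transpose_apply, io_apply, Fin.sum_univ_three, map_add, hz, hz']
  push_cast
  rfl

lemma bdd_one (N : M3) {K : Set SLR} (hK : IsCompact K) (i j : Fin 3) :
    ∃ B : ℝ, ∀ k ∈ K, |cj N k⁻¹ i j| ≤ B := by
  have h1 : Continuous (fun k : SLR => cj N k⁻¹) := (continuous_cj_left N).comp continuous_inv
  have h2 : Continuous (fun k : SLR => cj N k⁻¹ i j) :=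
    (continuous_apply j).comp ((continuous_apply i).comp h1)
  obtain ⟨B, hB⟩ := hK.exists_bound_of_continuousOn h2.continuousOn
  exact ⟨B, fun k hk => by simpa using hB k hk⟩

lemma bdd_fin {F : Set M3} (hF : F.Finite) {K : Set SLR} (hK : IsCompact K) :
    ∃ B : ℝ, ∀ N ∈ F, ∀ k ∈ K, ∀ i j, |cj N k⁻¹ i j| ≤ B := by
  choose b hb using fun (N : M3) (i j : Fin 3) => bdd_one N hK i j
  have : ∃ B : ℝ, ∀ N ∈ F, ∑ i, ∑ j, |b N i j| ≤ B := by
    obtain ⟨B, hB⟩ := (hF.image (fun N => ∑ i, ∑ j, |b N i j|)).bddAbove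
    exact ⟨B, fun N hN => hB (Set.mem_image_of_mem _ hN)⟩
  obtain ⟨B, hB⟩ := this
  refine ⟨B, fun N hN k hk i j => ?_⟩
  refine (hb N i j k hk).trans ((le_abs_self _).trans (le_trans ?_ (hB N hN)))
  refine le_trans ?_ (Finset.single_le_sum (f := fun i => ∑ j, |b N i j|)
      (fun i _ => Finset.sum_nonneg fun j _ => abs_nonneg _) (Finset.mem_univ i))
  exact Finset.single_le_sum (f := fun j => |b N i j|)
      (fun j _ => abs_nonneg _) (Finset.mem_univ j)

theorem core {g0 : SLR} {ε : ℝ} (hε : 0 < ε)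
    (hv : ∀ v : Fin 3 → ℤ, v ≠ 0 → ε ≤ |qf (cj J g0) (cv v)|) : IsRat (cj J g0) := by
  set A := cj J g0 with hA
  have hAs : Aᵀ = A := cj_symm J_symm _
  have hAd : A.det = 1 := by rw [hA, cj_det, J_det]
  have h := good_closure hε hAs hAd hv
  obtain ⟨hiso, horb⟩ := orbit_closed h
  rw [← hA] at hiso horb
  obtain ⟨K, hK⟩ := h.cov
  set Z := closure (Orb A) with hZ
  -- finiteness
  have hF : ((fun k => cj J k) '' K ∩ Z).Finite := by
    have hc : IsCompact ((fun k => cj J k) '' K ∩ Z) :=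
      (hK.1.image (continuous_cj_left J)).inter_right isClosed_closure
    obtain ⟨t, ht, htF⟩ := hc.elim_nhds_subcover (fun X => {M | M ∈ Z → M = X}) (by
      rintro X ⟨⟨k, hk, rfl⟩, hX⟩
      exact hiso _ (horb k hX))
    refine t.finite_toSet.subset fun X hX => ?_
    obtain ⟨x, hx, hxX⟩ := Set.mem_iUnion₂.1 (htF hX)
    have : X = x := hxX hX.2
    rw [this]; exact hx
  have hA0 : ∃ i j, A i j ≠ 0 := by
    by_contra hcon
    push Not at hcon
    have : A = 0 := by ext i j; exact hcon i j
    rw [this] at hAd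
    simp at hAd
  obtain ⟨i0, j0, hij⟩ := hA0
  obtain ⟨φ, hφ⟩ : ∃ φ : ℝ →ₗ[ℚ] ℚ, φ (A i0 j0) ≠ 0 := by
    by_contra hcon
    push Not at hcon
    exact hij ((Module.forall_dual_apply_eq_zero_iff ℚ (A i0 j0)).1 hcon)
  set P := Ph φ A with hP
  have hPs : Pᵀ = P := by
    ext i j
    have : A j i = A i j := congrFun (congrFun hAs i) j
    simp [hP, Ph, this]
  -- boundedness
  have hbd : ∃ B, ∀ hh : SLR, cj J hh = J → ∀ i j, |cj (cj P g0⁻¹) hh i j| ≤ B := by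
    obtain ⟨B, hB⟩ := bdd_fin (hF.image (Ph φ)) hK.1
    refine ⟨B, fun hh hhJ i j => ?_⟩
    have hJi : cj J hh⁻¹ = J := by
      conv_lhs => rw [← hhJ]
      rw [cj_cj_inv]
    have hm : cj J (hh⁻¹ * g0) ∈ Z := by
      rw [cj_mul, hJi]; exact subset_closure (Orb_self A)
    obtain ⟨γ, hγ⟩ := hK.2 _ hm
    have e1 : cj J (hh⁻¹ * g0 * io γ) = cj A (io γ) := by
      rw [cj_mul, cj_mul, hJi]
    have e2 : cj (cj P g0⁻¹) hh = cj (cj P (io γ)) (hh⁻¹ * g0 * io γ)⁻¹ := by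
      rw [← cj_mul P, ← cj_mul P]
      congr 1
      group
    rw [e2]
    refine hB _ ⟨cj A (io γ), ⟨⟨_, hγ, e1⟩, ?_⟩, ?_⟩ _ hγ i j
    · exact subset_closure ⟨γ, rfl⟩
    · rw [Ph_cj]
  obtain ⟨B, hB⟩ := hbd
  have hfin := bounded_inv (cj_symm hPs _) hB
  set m := cj P g0⁻¹ 0 2
  have hPA : P = m • A := by
    have := congrArg (fun M => cj M g0) hfin
    simp only [cj_inv_cj, cj_smul] at this
    exact this
  refine ⟨m, ?_, fun i j => ⟨φ (A i j), ?_⟩⟩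
  · intro hm
    rw [hm, zero_smul] at hPA
    have := congrFun (congrFun hPA i0) j0
    simp [hP, Ph] at this
    exact hφ this
  · have := congrFun (congrFun hPA i) j
    simp [hP, Ph] at this
    exact this.symm

end Opp
end Part5

section Part6
open Matrix Filter Topology

namespace Opp

def bl {n : ℕ} (A : Matrix (Fin n) (Fin n) ℝ) (x y : Fin n → ℝ) : ℝ := x ⬝ᵥ A *ᵥ y

section bl
variable {n : ℕ} {A : Matrix (Fin n) (Fin n) ℝ}

lemma bl_add_left (x y z : Fin n → ℝ) : bl A (x + y) z = bl A x z + bl A y z := by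
  simp [bl, add_dotProduct]
lemma bl_add_right (x y z : Fin n → ℝ) : bl A x (y + z) = bl A x y + bl A x z := by
  simp [bl, Matrix.mulVec_add, dotProduct_add]
lemma bl_smul_left (c : ℝ) (x y : Fin n → ℝ) : bl A (c • x) y = c * bl A x y := by
  simp [bl, smul_dotProduct]
lemma bl_smul_right (c : ℝ) (x y : Fin n → ℝ) : bl A x (c • y) = c * bl A x y := by
  simp [bl, Matrix.mulVec_smul, dotProduct_smul]
lemma bl_comm (hs : Aᵀ = A) (x y : Fin n → ℝ) : bl A x y = bl A y x := by
  unfold bl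
  rw [Matrix.dotProduct_mulVec, ← Matrix.mulVec_transpose, hs, dotProduct_comm]
lemma bl_zero_left (x : Fin n → ℝ) : bl A 0 x = 0 := by simp [bl]
lemma bl_zero_right (x : Fin n → ℝ) : bl A x 0 = 0 := by simp [bl]
end bl

section qf
variable {A : M3}
lemma bl_self (x : Fin 3 → ℝ) : bl A x x = qf A x := rfl
lemma qf_smul (c : ℝ) (x : Fin 3 → ℝ) : qf A (c • x) = c ^ 2 * qf A x := by
  rw [← bl_self, bl_smul_left, bl_smul_right, bl_self]; ring
lemma qf_add (hs : Aᵀ = A) (x y : Fin 3 → ℝ) : qf A (x + y) = qf A x + 2 * bl A x y + qf A y := by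
  rw [← bl_self, bl_add_left, bl_add_right, bl_add_right, bl_comm hs y x, bl_self, bl_self]; ring

lemma exists_isotropic (hs : Aᵀ = A) (hp : ∃ x, 0 < qf A x) (hn : ∃ x, qf A x < 0) :
    ∃ x : Fin 3 → ℝ, x ≠ 0 ∧ qf A x = 0 := by
  obtain ⟨p, hp⟩ := hp
  obtain ⟨q, hq⟩ := hn
  set D := bl A p q ^ 2 - qf A p * qf A q with hD
  have hD0 : 0 ≤ D := by nlinarith [sq_nonneg (bl A p q)]
  have hr := Real.sq_sqrt hD0
  set s := (-bl A p q + √D) / qf A q with hsd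
  have key : qf A (p + s • q) = 0 := by
    rw [qf_add hs, bl_smul_right, qf_smul, hsd]
    have hq' := hq.ne
    field_simp
    linear_combination hr + hD
  refine ⟨_, ?_, key⟩
  intro h0
  have h1 : p = (-s) • q := by rw [neg_smul]; exact eq_neg_of_add_eq_zero_left h0
  rw [h1, qf_smul] at hp
  nlinarith [sq_nonneg (-s)]
end qf

lemma exists_cbrt (d : ℝ) : ∃ r : ℝ, r ^ 3 = d := by
  have h1 : ∀ d : ℝ, 0 ≤ d → ∃ r : ℝ, r ^ 3 = d := fun d hd => by
    refine ⟨d ^ ((1:ℝ)/3), ?_⟩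
    rw [← Real.rpow_natCast, ← Real.rpow_mul hd]; norm_num
  rcases le_total 0 d with h | h
  · exact h1 d h
  · obtain ⟨r, hr⟩ := h1 (-d) (by linarith)
    exact ⟨-r, by linear_combination -hr⟩

lemma normal_form {A : M3} (hs : Aᵀ = A) (hd : A.det ≠ 0) (hp : ∃ x, 0 < qf A x)
    (hn : ∃ x, qf A x < 0) : ∃ c : ℝ, c ≠ 0 ∧ ∃ g : SLR, A = c • cj J g := by
  obtain ⟨x, hx0, hx⟩ := exists_isotropic hs hp hn
  have hAx : A *ᵥ x ≠ 0 := fun h => hx0 (Matrix.eq_zero_of_mulVec_eq_zero hd h)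
  obtain ⟨y, hxy, hy⟩ : ∃ y, bl A x y = 1 ∧ qf A y = 0 := by
    have h1 : bl A x (A *ᵥ x) ≠ 0 := by
      rw [bl_comm hs, bl]
      simpa using hAx
    obtain ⟨y0, h2⟩ : ∃ y0, bl A x y0 = 1 :=
      ⟨(bl A x (A *ᵥ x))⁻¹ • (A *ᵥ x), by rw [bl_smul_right]; field_simp⟩
    refine ⟨y0 + (-(qf A y0) / 2) • x, ?_, ?_⟩
    · rw [bl_add_right, bl_smul_right, bl_self, hx, h2]; ring
    · rw [qf_add hs, qf_smul, bl_smul_right, hx, bl_comm hs, h2]; ring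
  obtain ⟨z, hz0, hz⟩ := (Matrix.exists_mulVec_eq_zero_iff (M := (Matrix.of ![A *ᵥ x, A *ᵥ y, 0] : M3))).2
    (by apply Matrix.det_eq_zero_of_row_eq_zero 2; simp)
  have hzx : bl A z x = 0 := by
    rw [bl, dotProduct_comm]; exact congrFun hz 0
  have hzy : bl A z y = 0 := by
    rw [bl, dotProduct_comm]; exact congrFun hz 1
  set m := qf A z with hm
  have hxz := (bl_comm hs x z).trans hzx
  have hyz := (bl_comm hs y z).trans hzy
  have hyx := (bl_comm hs y x).trans hxy
  have hcol : ∀ (P : M3) i j, (Pᵀ * A * P) i j = bl A (Pᵀ i) (Pᵀ j) := by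
    intro P i j
    rw [bl, Matrix.mul_assoc, Matrix.mul_apply, dotProduct]
    rfl
  have hm0 : m ≠ 0 := by
    set P : M3 := (Matrix.of ![x, z, y])ᵀ with hP
    have c0 : Pᵀ 0 = x := rfl
    have c1 : Pᵀ 1 = z := rfl
    have c2 : Pᵀ 2 = y := rfl
    have hPA : Pᵀ * A * P = !![0,0,1;0,m,0;1,0,0] := by
      ext i j
      rw [hcol]
      fin_cases i <;> fin_cases j <;>
        simp [c0, c1, c2, hzx, hzy, hxz, hyz, hxy, hyx, bl_self, hx, hy, hm]
    have hdP : P.det ≠ 0 := by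
      intro h0
      obtain ⟨v, hv0, hv⟩ := Matrix.exists_mulVec_eq_zero_iff.2 h0
      have e : P *ᵥ v = v 0 • x + v 1 • z + v 2 • y := by
        ext i
        simp [hP, Matrix.mulVec, dotProduct, Fin.sum_univ_three]
        ring
      rw [e] at hv
      have k1 := congrArg (fun w => bl A x w) hv
      have k2 := congrArg (fun w => bl A y w) hv
      simp only [bl_add_right, bl_smul_right, bl_zero_right, hxz, hyz, hxy, hyx, bl_self, hx, hy] at k1 k2
      have k3 : v 2 = 0 := by linarith
      have k4 : v 0 = 0 := by linarith
      rw [k3, k4] at hv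
      have k5 : v 1 = 0 := by simpa [hz0] using hv
      apply hv0
      ext i; fin_cases i <;> simp [k3, k4, k5]
    have h1 := congrArg Matrix.det hPA
    rw [Matrix.det_mul, Matrix.det_mul, Matrix.det_transpose] at h1
    intro h0
    simp [Matrix.det_fin_three _, h0] at h1
    rw [← Matrix.det_fin_three, ← Matrix.det_fin_three] at h1
    tauto
  set P : M3 := (Matrix.of ![(-m) • x, z, y])ᵀ with hP
  have hPA : Pᵀ * A * P = (-m) • J := by
    have c0 : Pᵀ 0 = (-m) • x := rfl
    have c1 : Pᵀ 1 = z := rfl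
    have c2 : Pᵀ 2 = y := rfl
    ext i j
    rw [hcol]
    fin_cases i <;> fin_cases j <;>
      simp [c0, c1, c2, J, -neg_smul, qf_smul, bl_smul_left, bl_smul_right, hzx, hzy, hxz, hyz, hxy, hyx, bl_self, hx, hy, hm]
  have hdP : P.det ≠ 0 := by
    intro h0
    have := congrArg Matrix.det hPA
    rw [Matrix.det_mul, Matrix.det_mul, Matrix.det_smul, J_det, h0] at this
    simp at this
    exact pow_ne_zero 3 (neg_ne_zero.2 hm0) this.symm
  obtain ⟨r, hr⟩ := exists_cbrt P.det
  have hr0 : r ≠ 0 := by rintro rfl; apply hdP; rw [← hr]; norm_num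
  have hu : IsUnit P.det := isUnit_iff_ne_zero.2 hdP
  refine ⟨-m * r⁻¹ ^ 2, ?_, mkr (r • P⁻¹) ?_, ?_⟩
  · simp [hm0, hr0]
  · rw [Matrix.det_smul, Matrix.det_nonsing_inv, ← hr, Ring.inverse_eq_inv', Fintype.card_fin]
    field_simp
  · rw [cj, mt_mkr]
    have h1 : A = (P⁻¹)ᵀ * (Pᵀ * A * P) * P⁻¹ := by
      rw [Matrix.mul_assoc Pᵀ, ← Matrix.mul_assoc (P⁻¹)ᵀ, ← Matrix.transpose_mul,
        Matrix.mul_nonsing_inv _ hu, Matrix.transpose_one, Matrix.one_mul, Matrix.mul_assoc,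
        Matrix.mul_nonsing_inv _ hu, Matrix.mul_one]
    conv_lhs => rw [h1, hPA]
    simp only [Matrix.transpose_smul, Matrix.smul_mul, Matrix.mul_smul, smul_smul]
    congr 1
    field_simp

/-- core for arbitrary anisotropic-with-gap forms -/
theorem core_form {A : M3} {ε : ℝ} (hs : Aᵀ = A) (hd : A.det ≠ 0) (hp : ∃ x, 0 < qf A x)
    (hn : ∃ x, qf A x < 0) (hε : 0 < ε) (hv : ∀ v : Fin 3 → ℤ, v ≠ 0 → ε ≤ |qf A (cv v)|) :
    IsRat A := by
  obtain ⟨c, hc, g, hg⟩ := normal_form hs hd hp hn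
  have h1 : IsRat (cj J g) := by
    refine core (ε := ε / |c|) (by positivity) fun v hv0 => ?_
    have := hv v hv0
    rw [hg] at this
    have e : qf (c • cj J g) (cv v) = c * qf (cj J g) (cv v) := by
      simp [qf, Matrix.smul_mulVec]
    rw [e, abs_mul] at this
    rw [div_le_iff₀ (by positivity)]; linarith
  obtain ⟨k, hk, h⟩ := h1
  refine ⟨k / c, by positivity, fun i j => ?_⟩
  obtain ⟨q, hq⟩ := h i j
  refine ⟨q, ?_⟩
  rw [← hq, hg]
  simp
  field_simp
end Opp
end Part6

section Part7
open Matrix Filter Topology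

namespace Opp

/-- small nonzero values -/
def SmallF (α β γ : ℝ) : Prop :=
  ∀ ε > 0, ∃ x y z : ℤ, 0 < |(x : ℝ) * z + α * y ^ 2 + β * y * z + γ * z ^ 2| ∧
    |(x : ℝ) * z + α * y ^ 2 + β * y * z + γ * z ^ 2| < ε

lemma irr_dense {θ : ℝ} (hθ : Irrational θ) (c : ℝ) {δ : ℝ} (hδ : 0 < δ) :
    ∃ m k : ℤ, 0 < m * θ + k - c ∧ m * θ + k - c < δ := by
  have hd : Dense ((AddSubgroup.closure {θ, 1} : AddSubgroup ℝ) : Set ℝ) := by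
    rw [dense_addSubgroupClosure_pair_iff]; simpa using hθ
  obtain ⟨x, hx, hx2⟩ := hd.exists_between (show c < c + δ by linarith)
  obtain ⟨m, k, h⟩ := AddSubgroup.mem_closure_pair.1 hx
  refine ⟨m, k, ?_, ?_⟩ <;>
  · simp at h
    have := hx2.1; have := hx2.2
    linarith

lemma small_of_beta {α β γ : ℝ} (hα : ∃ q : ℚ, α = q) (hβ : Irrational β) : SmallF α β γ := by
  obtain ⟨q, rfl⟩ := hα
  intro ε hε
  have hN : (q.den : ℤ) ≠ 0 := by exact_mod_cast q.den_nz
  have hβN : Irrational (β * (q.den : ℤ)) := hβ.mul_intCast hN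
  obtain ⟨m, k, h1, h2⟩ := irr_dense hβN (-γ) hε
  refine ⟨k - q.num * q.den * m ^ 2, q.den * m, 1, ?_⟩
  have hq : (q : ℝ) * q.den = q.num := by exact_mod_cast Rat.mul_den_eq_num q
  have e : (((k - q.num * q.den * m ^ 2 : ℤ) : ℝ) * ((1:ℤ) : ℝ) + q * ((q.den * m : ℤ) : ℝ) ^ 2
      + β * ((q.den * m : ℤ) : ℝ) * ((1:ℤ) : ℝ) + γ * ((1:ℤ) : ℝ) ^ 2)
      = m * (β * (q.den : ℤ)) + k - -γ := by
    push_cast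
    linear_combination (q.den : ℝ) * m ^ 2 * hq
  rw [e, abs_of_pos h1]
  exact ⟨h1, h2⟩

lemma dirichlet (θ : ℝ) {η : ℝ} (hη : 0 < η) : ∃ t : ℕ, 0 < t ∧ ∃ p : ℤ, |θ * t - p| < η := by
  obtain ⟨n, hn⟩ := exists_nat_gt (1 / η)
  have hn0 : 0 < n := by
    have : (0:ℝ) < n := lt_trans (by positivity) hn
    exact_mod_cast this
  obtain ⟨j, k, hk, -, h⟩ := Real.exists_int_int_abs_mul_sub_le θ hn0
  refine ⟨k.toNat, by omega, j, ?_⟩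
  have e : ((k.toNat : ℕ) : ℝ) = (k : ℝ) := by
    have : ((k.toNat : ℕ) : ℤ) = k := Int.toNat_of_nonneg hk.le
    exact_mod_cast this
  rw [e, mul_comm]
  refine lt_of_le_of_lt h ?_
  rw [div_lt_iff₀ (by positivity)]
  rw [div_lt_iff₀ hη] at hn
  nlinarith

/-- `h` with `α h^2` close to an integer -/
lemma sq_rec (α : ℝ) {δ : ℝ} (hδ : 0 < δ) : ∃ h : ℤ, 0 < h ∧ ∃ p : ℤ, |α * h ^ 2 - p| < δ := by
  choose T hT0 hT using fun (η : ℝ) (hη : 0 < η) => dirichlet (2 * α) hη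
  have hpos : ∀ j s : ℕ, 0 < δ / 4 / (2 ^ (j + 1) * (s + 1)) := fun j s => by positivity
  obtain ⟨S, hS⟩ : ∃ S : ℕ → ℕ, ∀ j, S (j + 1) = S j + T _ (hpos j (S j)) :=
    ⟨fun n => Nat.rec 0 (fun j s => s + T _ (hpos j s)) n, fun j => rfl⟩
  have hmono : StrictMono S := strictMono_nat_of_lt_succ fun j => by
    rw [hS]; have := hT0 _ (hpos j (S j)); omega
  have key : ∀ i k : ℕ, ∃ p : ℤ, |2 * α * ((S (i + k) : ℝ) - S i) - p| ≤
      δ / 4 * ((1:ℝ) / 2 ^ i - 1 / 2 ^ (i + k)) / (S i + 1) := by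
    intro i k
    induction k with
    | zero => exact ⟨0, by simp⟩
    | succ k ih =>
      obtain ⟨p, hp⟩ := ih
      obtain ⟨p', hp'⟩ := hT _ (hpos (i + k) (S (i + k)))
      refine ⟨p + p', ?_⟩
      rw [← add_assoc, hS]
      push_cast
      have h1 : δ / 4 / (2 ^ (i + k + 1) * ((S (i + k) : ℝ) + 1)) ≤ δ / 4 / (2 ^ (i + k + 1) * ((S i : ℝ) + 1)) := by
        gcongr
        exact hmono.monotone (by omega)
      have h2 : δ / 4 * ((1:ℝ) / 2 ^ i - 1 / 2 ^ (i + k + 1)) / (S i + 1) =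
        δ / 4 * ((1:ℝ) / 2 ^ i - 1 / 2 ^ (i + k)) / (S i + 1) + δ / 4 / (2 ^ (i + k + 1) * ((S i : ℝ) + 1)) := by
        field_simp
        ring
      rw [h2]
      have h3 := abs_add_le (2 * α * (S (i + k) - S i) - p) (2 * α * T _ (hpos (i + k) (S (i + k))) - p')
      refine le_trans (le_of_eq ?_) (h3.trans (add_le_add hp (hp'.le.trans h1)))
      congr 1
      ring
  -- pigeonhole
  obtain ⟨i, k, hk, hfr⟩ : ∃ i k : ℕ, 0 < k ∧
      |Int.fract (α * (S (i + k)) ^ 2) - Int.fract (α * (S i) ^ 2)| < δ / 2 := by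
    obtain ⟨x, -, φ, hφ, hlim⟩ := (isCompact_Icc (a := (0:ℝ)) (b := 1)).tendsto_subseq
      (x := fun n => Int.fract (α * (S n) ^ 2)) (fun n => ⟨Int.fract_nonneg _, (Int.fract_lt_one _).le⟩)
    have hc := hlim.cauchySeq
    rw [Metric.cauchySeq_iff'] at hc
    obtain ⟨N, hN⟩ := hc (δ / 2) (by positivity)
    have h1 := hN (N + 1) (by omega)
    have hlt : φ N < φ (N + 1) := hφ (by omega)
    refine ⟨φ N, φ (N + 1) - φ N, by omega, ?_⟩
    rw [Nat.add_sub_cancel' hlt.le]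
    simpa [Real.dist_eq] using h1
  obtain ⟨p, hp⟩ := key i k
  have hlt : S i < S (i + k) := hmono (by omega)
  refine ⟨(S (i + k) : ℤ) - S i, by omega,
    ⌊α * (S (i + k)) ^ 2⌋ - ⌊α * (S i) ^ 2⌋ - S i * p, ?_⟩
  have e : α * (((S (i + k) : ℤ) - S i : ℤ) : ℝ) ^ 2 -
      ((⌊α * (S (i + k)) ^ 2⌋ - ⌊α * (S i) ^ 2⌋ - S i * p : ℤ) : ℝ) =
      (Int.fract (α * (S (i + k)) ^ 2) - Int.fract (α * (S i) ^ 2)) -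
        S i * (2 * α * (S (i + k) - S i) - p) := by
    simp only [Int.fract]
    push_cast
    ring
  rw [e]
  refine lt_of_le_of_lt (abs_sub _ _) ?_
  have h4 : |(S i : ℝ) * (2 * α * (S (i + k) - S i) - p)| ≤ δ / 4 := by
    rw [abs_mul, abs_of_nonneg (by positivity)]
    refine (mul_le_mul_of_nonneg_left hp (by positivity)).trans ?_
    have h5 : ((1:ℝ) / 2 ^ i - 1 / 2 ^ (i + k)) ≤ 1 := by
      have : (1:ℝ) / 2 ^ i ≤ 1 := by
        rw [div_le_one (by positivity)]; exact one_le_pow₀ (by norm_num)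
      have : (0:ℝ) ≤ 1 / 2 ^ (i + k) := by positivity
      linarith
    rw [mul_div_assoc', div_le_iff₀ (by positivity)]
    have h6 : (0:ℝ) ≤ S i := by positivity
    nlinarith [mul_le_mul_of_nonneg_left h5 (mul_nonneg h6 hδ.le)]
  linarith

lemma walk {u0 η b δ : ℝ} (hb : 0 < b) (hb1 : b < δ ^ 2) (hη : 0 < η) (hη1 : η < δ) (hδ1 : δ < 1) :
    ∃ (j : ℕ) (N : ℤ), 0 < u0 + j * η + j ^ 2 * b - N ∧ u0 + j * η + j ^ 2 * b - N < 5 * δ := by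
  set N : ℤ := ⌊u0⌋ + 1 with hN
  have h0 : u0 < N := by rw [hN]; push_cast; exact Int.lt_floor_add_one u0
  have h0' : (N : ℝ) ≤ u0 + 1 := by rw [hN]; push_cast; linarith [Int.floor_le u0]
  have hex : ∃ j : ℕ, (N : ℝ) < u0 + j * η + j ^ 2 * b := by
    obtain ⟨j, hj⟩ := exists_nat_gt ((N - u0) / η)
    refine ⟨j, ?_⟩
    rw [div_lt_iff₀ hη] at hj
    have : 0 ≤ (j:ℝ) ^ 2 * b := by positivity
    linarith
  classical
  obtain ⟨hj, hmin⟩ := And.intro (Nat.find_spec hex) (fun m => @Nat.find_min _ _ hex m)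
  set j := Nat.find hex
  cases' hjj : j with i
  · rw [hjj] at hj; simp at hj; linarith
  · have h1 := hmin i (by omega)
    rw [hjj] at hj
    push Not at h1
    refine ⟨i + 1, N, by linarith, ?_⟩
    push_cast at hj ⊢
    have h2 : (i:ℝ) ^ 2 * b ≤ 1 := by
      have : 0 ≤ (i:ℝ) * η := by positivity
      linarith
    have h3 : (i:ℝ) * b ≤ δ := by
      by_contra hcon
      push Not at hcon
      have : (0:ℝ) ≤ i := by positivity
      nlinarith
    nlinarith

lemma alpha_aux {α β γ δ : ℝ} (hα : Irrational α) {h p : ℤ} (hh : 0 < h)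
    (hb : 0 < α * h ^ 2 - p) (hb1 : α * h ^ 2 - p < δ ^ 2) (hδ : 0 < δ) (hδ1 : δ < 1) :
    ∃ x y : ℤ, 0 < x + α * y ^ 2 + β * y + γ ∧ x + α * y ^ 2 + β * y + γ < 5 * δ := by
  have hi : Irrational (α * (2 * h : ℤ)) := hα.mul_intCast (by omega)
  obtain ⟨m, k, h1, h2⟩ := irr_dense hi (-(β * h)) hδ
  obtain ⟨j, N, h3, h4⟩ := walk (u0 := α * m ^ 2 + β * m + γ) hb hb1 h1 h2 hδ1
  refine ⟨j * k - j ^ 2 * p - N, m + j * h, ?_⟩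
  have e : ((j * k - j ^ 2 * p - N : ℤ) : ℝ) + α * ((m + j * h : ℤ) : ℝ) ^ 2 + β * ((m + j * h : ℤ) : ℝ) + γ
     = α * m ^ 2 + β * m + γ + j * (m * (α * (2 * h : ℤ)) + k - -(β * h)) + j ^ 2 * (α * h ^ 2 - p) - N := by
    push_cast
    ring
  rw [e]
  exact ⟨h3, h4⟩

lemma small_of_alpha {α β γ : ℝ} (hα : Irrational α) : SmallF α β γ := by
  intro ε hε
  set δ := min (ε / 5) (1 / 2) with hδd
  have hδ : 0 < δ := by positivity
  have hδ1 : δ < 1 := lt_of_le_of_lt (min_le_right _ _) (by norm_num)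
  have hδ5 : 5 * δ ≤ ε := by have := min_le_left (ε / 5) (1 / 2); linarith
  obtain ⟨h, hh, p, hp⟩ := sq_rec α (show 0 < δ ^ 2 by positivity)
  rw [abs_lt] at hp
  have hne : α * h ^ 2 - p ≠ 0 := by
    have h1 : Irrational (α * (h ^ 2 : ℤ)) := hα.mul_intCast (by positivity)
    intro h0
    apply h1.ne_int p
    push_cast; linarith
  rcases lt_or_gt_of_ne hne with hb | hb
  · obtain ⟨x, y, h1, h2⟩ := alpha_aux (β := -β) (γ := -γ) hα.neg (p := -p) hh
      (by push_cast; linarith) (by push_cast; linarith) hδ hδ1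
    refine ⟨-x, y, 1, ?_⟩
    have e : (((-x : ℤ) : ℝ) * ((1:ℤ):ℝ) + α * y ^ 2 + β * y * ((1:ℤ):ℝ) + γ * ((1:ℤ):ℝ) ^ 2) =
      - (x + -α * y ^ 2 + -β * y + -γ) := by push_cast; ring
    rw [e, abs_neg, abs_of_pos h1]
    exact ⟨h1, by linarith⟩
  · obtain ⟨x, y, h1, h2⟩ := alpha_aux (β := β) (γ := γ) hα hh hb hp.2 hδ hδ1
    refine ⟨x, y, 1, ?_⟩
    have e : ((x : ℝ) * ((1:ℤ):ℝ) + α * y ^ 2 + β * y * ((1:ℤ):ℝ) + γ * ((1:ℤ):ℝ) ^ 2) =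
      (x + α * y ^ 2 + β * y + γ) := by push_cast; ring
    rw [e, abs_of_pos h1]
    exact ⟨h1, by linarith⟩

/-- continued fraction step data -/
lemma convergents {γ : ℝ} (hγ : Irrational γ) (N : ℕ) : ∃ q p q' p' : ℤ, 1 ≤ q ∧ q ≤ q' ∧ (N : ℤ) ≤ q' ∧
    (q * p' - q' * p = 1 ∨ q * p' - q' * p = -1) ∧ |q' * γ - p'| < |q * γ - p| ∧
    (q' * γ - p') * (q * γ - p) < 0 := by
  induction N with
  | zero =>
    -- q = 1, p = floor, q' ...
    set e := Int.fract γ with he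
    have he0 : 0 < e := by
      rcases (Int.fract_nonneg γ).lt_or_eq with h | h
      · exact h
      · exfalso
        apply hγ.ne_int ⌊γ⌋
        have := Int.fract_add_floor γ
        linarith
    have he1 : e < 1 := Int.fract_lt_one γ
    have hf : γ = ⌊γ⌋ + e := (Int.floor_add_fract γ).symm
    have hne : e ≠ 1 / 2 := by
      intro h0
      apply hγ
      refine ⟨(⌊γ⌋ : ℚ) + 1 / 2, ?_⟩
      push_cast
      linarith
    rcases lt_or_gt_of_ne hne with h | h
    · refine ⟨1, ⌊γ⌋ + 1, 1, ⌊γ⌋, le_refl _, le_refl _, by simp, Or.inr (by ring), ?_, ?_⟩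
      · have e1 : ((1:ℤ):ℝ) * γ - ⌊γ⌋ = e := by push_cast; linarith
        have e2 : ((1:ℤ):ℝ) * γ - ((⌊γ⌋ + 1 : ℤ) : ℝ) = -(1 - e) := by push_cast; linarith
        rw [e1, e2, abs_neg, abs_of_pos he0, abs_of_pos (by linarith)]; linarith
      · have e1 : ((1:ℤ):ℝ) * γ - ⌊γ⌋ = e := by push_cast; linarith
        have e2 : ((1:ℤ):ℝ) * γ - ((⌊γ⌋ + 1 : ℤ) : ℝ) = -(1 - e) := by push_cast; linarith
        rw [e1, e2]; nlinarith
    · refine ⟨1, ⌊γ⌋, 1, ⌊γ⌋ + 1, le_refl _, le_refl _, by simp, Or.inl (by ring), ?_, ?_⟩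
      · have e1 : ((1:ℤ):ℝ) * γ - ⌊γ⌋ = e := by push_cast; linarith
        have e2 : ((1:ℤ):ℝ) * γ - ((⌊γ⌋ + 1 : ℤ) : ℝ) = -(1 - e) := by push_cast; linarith
        rw [e1, e2, abs_neg, abs_of_pos he0, abs_of_pos (by linarith)]; linarith
      · have e1 : ((1:ℤ):ℝ) * γ - ⌊γ⌋ = e := by push_cast; linarith
        have e2 : ((1:ℤ):ℝ) * γ - ((⌊γ⌋ + 1 : ℤ) : ℝ) = -(1 - e) := by push_cast; linarith
        rw [e1, e2]; nlinarith
  | succ N ih =>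
    obtain ⟨q, p, q', p', h1, h2, h3, h4, h5, h6⟩ := ih
    set e := q * γ - p with he
    set e' := q' * γ - p' with he'
    have he0 : 0 < |e'| := abs_pos.2 (by rintro h; rw [h] at h6; simp at h6)
    set a : ℤ := ⌊|e| / |e'|⌋ with ha
    have ha1 : 1 ≤ a := by
      rw [ha, Int.le_floor, le_div_iff₀ he0]; push_cast; linarith
    have hfl := Int.floor_le (|e| / |e'|)
    have hfl2 := Int.lt_floor_add_one (|e| / |e'|)
    rw [← ha, le_div_iff₀ he0] at hfl
    rw [← ha, div_lt_iff₀ he0] at hfl2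
    have hq'' : Irrational (γ * (q + a * q' : ℤ)) := hγ.mul_intCast (by nlinarith)
    have hne : e + a * e' ≠ 0 := by
      intro h0
      apply hq''.ne_int (p + a * p')
      push_cast
      rw [he, he'] at h0
      linarith
    refine ⟨q', p', q + a * q', p + a * p', by omega, by nlinarith, by push_cast; nlinarith, ?_, ?_, ?_⟩
    · rcases h4 with h4 | h4
      · right; linear_combination -h4
      · left; linear_combination -h4
    · have e1 : ((q + a * q' : ℤ) : ℝ) * γ - ((p + a * p' : ℤ) : ℝ) = e + a * e' := by
        push_cast; rw [he, he']; ring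
      rw [e1]
      rcases lt_or_ge e' 0 with hs | hs
      · have : 0 < e := by nlinarith
        rw [abs_of_neg hs, abs_of_pos this] at *
        rw [abs_lt]; constructor <;> linarith
      · have h0 : 0 < e' := lt_of_le_of_ne hs (by rintro h; rw [← h] at h6; simp at h6)
        have : e < 0 := by nlinarith
        rw [abs_of_pos h0, abs_of_neg this] at *
        rw [abs_lt]; constructor <;> linarith
    · have e1 : ((q + a * q' : ℤ) : ℝ) * γ - ((p + a * p' : ℤ) : ℝ) = e + a * e' := by
        push_cast; rw [he, he']; ring
      rw [e1]
      rcases lt_or_ge e' 0 with hs | hs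
      · have : 0 < e := by nlinarith
        rw [abs_of_neg hs, abs_of_pos this] at *
        have : 0 < e + a * e' := lt_of_le_of_ne (by linarith) hne.symm
        nlinarith
      · have h0 : 0 < e' := lt_of_le_of_ne hs (by rintro h; rw [← h] at h6; simp at h6)
        have : e < 0 := by nlinarith
        rw [abs_of_pos h0, abs_of_neg this] at *
        have : e + a * e' < 0 := lt_of_le_of_ne (by linarith) hne
        nlinarith

/-- scaled convergents have a limit -/
lemma conv_limit {γ : ℝ} (hγ : Irrational γ) : ∃ (q p q' p' : ℕ → ℤ) (a c d : ℝ),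
    (∀ n, 1 ≤ q n ∧ q n ≤ q' n ∧ (n : ℤ) ≤ q' n ∧ (q n * p' n - q' n * p n) ^ 2 = 1) ∧
    (∀ n, |(q' n : ℝ) * (q n * γ - p n)| ≤ 1 ∧ |(q' n : ℝ) * (q' n * γ - p' n)| ≤ 1) ∧
    Tendsto (fun n => (q n : ℝ) / q' n) atTop (𝓝 a) ∧
    Tendsto (fun n => (q' n : ℝ) * (q n * γ - p n)) atTop (𝓝 c) ∧
    Tendsto (fun n => (q' n : ℝ) * (q' n * γ - p' n)) atTop (𝓝 d) ∧ (a * d - c) ^ 2 = 1 := by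
  choose q p q' p' h1 h2 h3 h4 h5 h6 using convergents hγ
  have h4' : ∀ n, (q n * p' n - q' n * p n) ^ 2 = 1 := fun n => by
    rcases h4 n with h | h <;> rw [h] <;> norm_num
  have hq' : ∀ n, (1:ℝ) ≤ q' n := fun n => by exact_mod_cast (h1 n).trans (h2 n)
  have hq : ∀ n, (1:ℝ) ≤ q n := fun n => by exact_mod_cast (h1 n)
  have hqq : ∀ n, (q n : ℝ) ≤ q' n := fun n => by exact_mod_cast (h2 n)
  have hb1 : ∀ n, |(q' n : ℝ) * (q n * γ - p n)| ≤ 1 := by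
    intro n
    have e : ((q n : ℝ) * (q' n * γ - p' n) - q' n * (q n * γ - p n)) ^ 2 = 1 := by
      have : (((q n * p' n - q' n * p n) ^ 2 : ℤ) : ℝ) = 1 := by rw [h4']; norm_num
      push_cast at this
      linear_combination this
    have h7 := h6 n
    have h8 : 0 ≤ - ((q n : ℝ) * (q' n * γ - p' n) * (q' n * (q n * γ - p n))) := by
      have : 0 ≤ (q n : ℝ) * q' n := by have := hq n; have := hq' n; positivity
      nlinarith
    rw [abs_le_one_iff_mul_self_le_one]
    nlinarith [sq_nonneg ((q n : ℝ) * (q' n * γ - p' n))]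
  have hb2 : ∀ n, |(q' n : ℝ) * (q' n * γ - p' n)| ≤ 1 := by
    intro n
    refine le_trans ?_ (hb1 n)
    rw [abs_mul, abs_mul]
    exact mul_le_mul_of_nonneg_left (h5 n).le (abs_nonneg _)
  have hk : IsCompact (Set.Icc (-1:ℝ) 1 ×ˢ Set.Icc (-1:ℝ) 1 ×ˢ Set.Icc (-1:ℝ) 1) :=
    isCompact_Icc.prod (isCompact_Icc.prod isCompact_Icc)
  obtain ⟨⟨a, c, d⟩, -, φ, hφ, hlim⟩ := hk.tendsto_subseq (x := fun n =>
    ((q n : ℝ) / q' n, (q' n : ℝ) * (q n * γ - p n), (q' n : ℝ) * (q' n * γ - p' n))) (by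
      intro n
      refine ⟨⟨?_, ?_⟩, abs_le.1 (hb1 n), abs_le.1 (hb2 n)⟩
      · have := hq n; have := hq' n
        have : 0 ≤ (q n : ℝ) / q' n := by positivity
        change -1 ≤ (q n : ℝ) / q' n
        linarith
      · change (q n : ℝ) / q' n ≤ 1
        have := hq' n
        rw [div_le_one (by positivity)]; exact hqq n)
  have l1 : Tendsto (fun n => (q (φ n) : ℝ) / q' (φ n)) atTop (𝓝 a) :=
    (continuous_fst.tendsto _).comp hlim
  have l2 : Tendsto (fun n => (q' (φ n) : ℝ) * (q (φ n) * γ - p (φ n))) atTop (𝓝 c) :=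
    ((continuous_fst.comp continuous_snd).tendsto _).comp hlim
  have l3 : Tendsto (fun n => (q' (φ n) : ℝ) * (q' (φ n) * γ - p' (φ n))) atTop (𝓝 d) :=
    ((continuous_snd.comp continuous_snd).tendsto _).comp hlim
  refine ⟨q ∘ φ, p ∘ φ, q' ∘ φ, p' ∘ φ, a, c, d, fun n => ⟨h1 _, h2 _, ?_, h4' _⟩,
    fun n => ⟨hb1 _, hb2 _⟩, l1, l2, l3, ?_⟩
  · have := hφ.id_le n
    have h7 := h3 (φ n)
    have : (n : ℤ) ≤ φ n := by exact_mod_cast this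
    exact this.trans h7
  · have l4 := ((l1.mul l3).sub l2).pow 2
    refine tendsto_nhds_unique l4 ?_
    refine Tendsto.congr (fun n => ?_) (tendsto_const_nhds (x := (1:ℝ)))
    have : (((q (φ n) * p' (φ n) - q' (φ n) * p (φ n)) ^ 2 : ℤ) : ℝ) = 1 := by rw [h4']; norm_num
    push_cast at this
    have h7 := hq' (φ n)
    have h8 : (q' (φ n) : ℝ) ≠ 0 := by positivity
    rw [← this]
    field_simp
    ring
end Opp
end Part7

section Part8
open Matrix Filter Topology

namespace Opp

lemma gamma_nonzero {r : ℚ} {γ : ℝ} (hr : r ≠ 0) (hγ : Irrational γ) {k l m : ℤ}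
    (h : (l : ℝ) * k + r * m ^ 2 + 0 * m * k + γ * k ^ 2 = 0) : k = 0 ∧ m = 0 := by
  have hk : k = 0 := by
    by_contra hk
    have hk' : (k : ℝ) ≠ 0 := by exact_mod_cast hk
    apply hγ
    refine ⟨-(l * k + r * m ^ 2) / k ^ 2, ?_⟩
    push_cast
    field_simp
    linarith
  refine ⟨hk, ?_⟩
  subst hk
  have hr' : (r : ℝ) ≠ 0 := by exact_mod_cast hr
  simp [hr'] at h
  exact_mod_cast h

/-- limiting form -/
noncomputable def LF (a c d α : ℝ) : M3 := !![a*c,(a*d+c)/2,0;(a*d+c)/2,d,0;0,0,α]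

lemma qf_LF (a c d α : ℝ) (w : Fin 3 → ℝ) :
    qf (LF a c d α) w = (a * w 0 + w 1) * (c * w 0 + d * w 1) + α * w 2 ^ 2 := by
  simp [qf, LF, Matrix.mulVec, dotProduct, Fin.sum_univ_three]; ring

lemma gamma_limit {r : ℚ} {γ ε : ℝ} (hr : r ≠ 0) (hγ : Irrational γ)
    (hε : ∀ x y z : ℤ, (x : ℝ) * z + r * y ^ 2 + 0 * y * z + γ * z ^ 2 ≠ 0 →
      ε ≤ |(x : ℝ) * z + r * y ^ 2 + 0 * y * z + γ * z ^ 2|) :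
    ∃ a c d : ℝ, (a * d - c) ^ 2 = 1 ∧
      ∀ w : Fin 3 → ℤ, w ≠ 0 → ε ≤ |qf (LF a c d r) (cv w)| := by
  obtain ⟨q, p, q', p', a, c, d, h1, h2, l1, l2, l3, h3⟩ := conv_limit hγ
  refine ⟨a, c, d, h3, fun w hw => ?_⟩
  rw [qf_LF]
  have l4 := ((((l1.mul_const (w 0 : ℝ)).add_const (w 1 : ℝ)).mul
    ((l2.mul_const (w 0 : ℝ)).add (l3.mul_const (w 1 : ℝ)))).add_const ((r : ℝ) * (w 2) ^ 2)).abs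
  refine ge_of_tendsto l4 ?_
  filter_upwards [eventually_gt_atTop (|w 0| + |w 1|).toNat] with n hn
  have hn' : |w 0| + |w 1| < n := by omega
  obtain ⟨g1, g2, g3, g4⟩ := h1 n
  obtain ⟨b1, b2⟩ := h2 n
  have hq' : (0:ℝ) < q' n := by
    have : 0 < q' n := by omega
    exact_mod_cast this
  have e : ((q n : ℝ) / q' n * w 0 + w 1) * (q' n * (q n * γ - p n) * w 0 + q' n * (q' n * γ - p' n) * w 1)
      + r * (w 2) ^ 2 = ((-(p n * w 0 + p' n * w 1) : ℤ) : ℝ) * ((q n * w 0 + q' n * w 1 : ℤ) : ℝ)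
        + r * (w 2 : ℝ) ^ 2 + 0 * (w 2 : ℝ) * ((q n * w 0 + q' n * w 1 : ℤ) : ℝ)
        + γ * ((q n * w 0 + q' n * w 1 : ℤ) : ℝ) ^ 2 := by
    push_cast
    field_simp
    ring
  rw [e]
  apply hε
  intro h0
  obtain ⟨k0, m0⟩ := gamma_nonzero hr hγ h0
  have hl : p n * w 0 + p' n * w 1 = 0 := by
    have e2 : (q' n : ℝ) * (-(p n * w 0 + p' n * w 1)) =
        q' n * (q n * γ - p n) * w 0 + q' n * (q' n * γ - p' n) * w 1 := by
      have : (q n : ℝ) * w 0 + q' n * w 1 = 0 := by exact_mod_cast k0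
      linear_combination - q' n * γ * this
    have e3 : |(q' n : ℝ) * (-(p n * w 0 + p' n * w 1))| ≤ |(w 0 : ℝ)| + |(w 1 : ℝ)| := by
      rw [e2]
      refine (abs_add_le _ _).trans ?_
      rw [abs_mul _ (w 0 : ℝ), abs_mul _ (w 1 : ℝ)]
      exact add_le_add (mul_le_of_le_one_left (abs_nonneg _) b1) (mul_le_of_le_one_left (abs_nonneg _) b2)
    have e4 : |q' n * (-(p n * w 0 + p' n * w 1))| ≤ |w 0| + |w 1| := by exact_mod_cast e3
    rw [abs_mul, abs_neg, abs_of_pos (by omega)] at e4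
    by_contra hne
    have : 1 ≤ |p n * w 0 + p' n * w 1| := Int.one_le_abs hne
    nlinarith
  apply hw
  have d0 : (q n * p' n - q' n * p n) ≠ 0 := by intro h; rw [h] at g4; norm_num at g4
  have w0 : w 0 = 0 := by
    have : (q n * p' n - q' n * p n) * w 0 = 0 := by linear_combination p' n * k0 - q' n * hl
    exact (mul_eq_zero.1 this).resolve_left d0
  have w1 : w 1 = 0 := by
    have : (q n * p' n - q' n * p n) * w 1 = 0 := by linear_combination q n * hl - p n * k0
    exact (mul_eq_zero.1 this).resolve_left d0
  ext i; fin_cases i <;> simp [w0, w1, m0]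

lemma small_of_gamma0 {r : ℚ} {γ : ℝ} (hr : r ≠ 0) (hγ : Irrational γ) : SmallF r 0 γ := by
  by_contra hcon
  unfold SmallF at hcon
  push Not at hcon
  obtain ⟨ε, hε, h⟩ := hcon
  obtain ⟨a, c, d, hD, hw⟩ := gamma_limit hr hγ (ε := ε) (fun x y z hne => h x y z (abs_pos.2 hne))
  have hr' : (r : ℝ) ≠ 0 := by exact_mod_cast hr
  have hD0 : a * d - c ≠ 0 := by intro h; rw [h] at hD; norm_num at hD
  have hrat : IsRat (LF a c d r) := by
    refine core_form (ε := ε) ?_ ?_ ?_ ?_ hε hw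
    · ext i j; fin_cases i <;> fin_cases j <;> simp [LF]
    · have : (LF a c d r).det = - r * (a * d - c) ^ 2 / 4 := by
        simp [LF, Matrix.det_fin_three]; ring
      rw [this, hD]
      simpa using hr'
    · refine ⟨![d - 1, a - c, 0], ?_⟩
      rw [qf_LF]
      simp
      nlinarith
    · refine ⟨![d + 1, - a - c, 0], ?_⟩
      rw [qf_LF]
      simp
      nlinarith
  obtain ⟨k, hk, hrat⟩ := hrat
  obtain ⟨q22, e22⟩ := hrat 2 2
  obtain ⟨q00, e00⟩ := hrat 0 0
  obtain ⟨q01, e01⟩ := hrat 0 1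
  obtain ⟨q11, e11⟩ := hrat 1 1
  simp [LF] at e22 e00 e01 e11
  -- k is rational
  have hkq : k = ((q22 / r : ℚ) : ℝ) := by push_cast; field_simp; exact e22
  set kq : ℚ := q22 / r
  have hkq0 : kq ≠ 0 := by rintro h; rw [h] at hkq; simp at hkq; exact hk hkq
  have hP : a * c = ((q00 / kq : ℚ) : ℝ) := by
    push_cast; rw [← hkq, ← e00]; field_simp
  have hS : a * d + c = ((2 * q01 / kq : ℚ) : ℝ) := by
    push_cast; rw [← hkq, ← e01]; field_simp
  set P : ℚ := q00 / kq
  set S : ℚ := 2 * q01 / kq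
  -- isotropic integer vector
  have hiso : ∃ u v : ℤ, (u ≠ 0 ∨ v ≠ 0) ∧ (a * u + v) * (c * u + d * v) = 0 := by
    by_cases hP0 : P = 0
    · refine ⟨1, 0, by simp, ?_⟩
      rw [hP0] at hP
      simp at hP ⊢
      exact hP
    · refine ⟨S.den * P.den - S.num * P.den, 2 * P.num * S.den, ?_, ?_⟩
      · right
        have := Rat.num_ne_zero.2 hP0
        have := S.den_nz
        positivity
      · have eS : (S.num : ℝ) = S * S.den := by exact_mod_cast (Rat.mul_den_eq_num S).symm
        have eP : (P.num : ℝ) = P * P.den := by exact_mod_cast (Rat.mul_den_eq_num P).symm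
        push_cast
        rw [eS, eP, ← hP, ← hS]
        have : (a * (S.den * P.den - (a * d + c) * S.den * P.den) + 2 * (a * c * P.den) * S.den) *
          (c * (S.den * P.den - (a * d + c) * S.den * P.den) + d * (2 * (a * c * P.den) * S.den))
          = a * c * (1 - (a * d - c) ^ 2) * (S.den * P.den : ℝ) ^ 2 := by ring
        rw [this, hD]; ring
  obtain ⟨u, v, huv, h0⟩ := hiso
  have := hw ![u, v, 0] (by
    intro h
    have h1 := congrFun h 0
    have h2 := congrFun h 1
    simp at h1 h2
    tauto)
  rw [qf_LF] at this
  simp [cv] at this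
  rw [mul_eq_zero] at h0
  have h00 : (a * u + v) * (c * u + d * v) = 0 := mul_eq_zero.2 h0
  rw [← abs_mul, h00] at this
  simp at this
  linarith

lemma small_of_gamma {α β γ : ℝ} (hα : ∃ q : ℚ, α = q) (hα0 : α ≠ 0) (hβ : ∃ q : ℚ, β = q)
    (hγ : Irrational γ) : SmallF α β γ := by
  obtain ⟨r, rfl⟩ := hα
  obtain ⟨s, rfl⟩ := hβ
  have hr : r ≠ 0 := by exact_mod_cast hα0
  intro ε hε
  have hd : (s.den : ℚ) ≠ 0 := by exact_mod_cast s.den_nz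
  obtain ⟨x, y, z, h⟩ := small_of_gamma0 (r := r * s.den ^ 2) (by positivity) hγ ε hε
  refine ⟨x - s.num * y, s.den * y, z, ?_⟩
  have eS : (s.num : ℝ) = s * s.den := by exact_mod_cast (Rat.mul_den_eq_num s).symm
  convert h using 3 <;>
  · push_cast
    rw [eS]; ring

theorem smallF {α β γ : ℝ} (hα0 : α ≠ 0)
    (h : ¬ ((∃ q : ℚ, α = q) ∧ (∃ q : ℚ, β = q) ∧ (∃ q : ℚ, γ = q))) : SmallF α β γ := by
  have key : ∀ x : ℝ, ¬ (∃ q : ℚ, x = q) → Irrational x := by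
    rintro x hx ⟨q, hq⟩; exact hx ⟨q, hq.symm⟩
  by_cases h1 : ∃ q : ℚ, α = q
  · by_cases h2 : ∃ q : ℚ, β = q
    · exact small_of_gamma h1 hα0 h2 (key _ fun h3 => h ⟨h1, h2, h3⟩)
    · exact small_of_beta h1 (key _ h2)
  · exact small_of_alpha (key _ h1)
end Opp
end Part8

section Part9
open Matrix Filter Topology

namespace Opp

def Small (A : M3) : Prop := ∀ ε > 0, ∃ v : Fin 3 → ℤ, 0 < |qf A (cv v)| ∧ |qf A (cv v)| < ε

abbrev MZ3 := Matrix (Fin 3) (Fin 3) ℤ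

/-- real version of an integer matrix -/
def rm (P : MZ3) : M3 := P.map (fun x : ℤ => (x : ℝ))

lemma rm_cv (P : MZ3) (v : Fin 3 → ℤ) : rm P *ᵥ cv v = cv (P *ᵥ v) := by
  ext i
  simp [rm, cv, Matrix.mulVec, dotProduct]

lemma rm_mul (P Q : MZ3) : rm (P * Q) = rm P * rm Q := by
  ext i j; simp [rm, Matrix.mul_apply]

lemma rm_det (P : MZ3) : (rm P).det = (P.det : ℝ) := by
  simp [rm, Matrix.det_fin_three]

/-- change of variables -/
def cz (A : M3) (P : MZ3) : M3 := (rm P)ᵀ * A * rm P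

lemma qf_cz (A : M3) (P : MZ3) (v : Fin 3 → ℤ) : qf (cz A P) (cv v) = qf A (cv (P *ᵥ v)) := by
  rw [cz, qf_conj, rm_cv]

lemma Small_of_cz {A : M3} {P : MZ3} (h : Small (cz A P)) : Small A := by
  intro ε hε
  obtain ⟨v, hv⟩ := h ε hε
  rw [qf_cz] at hv
  exact ⟨_, hv⟩

lemma cz_symm {A : M3} (hs : Aᵀ = A) (P : MZ3) : (cz A P)ᵀ = cz A P := by
  simp [cz, Matrix.transpose_mul, hs, Matrix.mul_assoc]

lemma cz_det {A : M3} (hd : A.det ≠ 0) {P : MZ3} (hP : P.det ≠ 0) : (cz A P).det ≠ 0 := by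
  have : (P.det : ℝ) ≠ 0 := by exact_mod_cast hP
  rw [cz, Matrix.det_mul, Matrix.det_mul, Matrix.det_transpose, rm_det]
  positivity

lemma rat_cz {A : M3} (h : IsRat A) (P : MZ3) : IsRat (cz A P) := by
  obtain ⟨c, hc, h⟩ := h
  choose q hq using h
  refine ⟨c, hc, fun i j => ⟨∑ k, (∑ l, (P l i : ℚ) * q l k) * P k j, ?_⟩⟩
  push_cast
  simp only [cz, Matrix.mul_apply, Matrix.transpose_apply, rm, Matrix.map_apply, ← hq, Finset.mul_sum,
    Finset.sum_mul]
  refine Finset.sum_congr rfl fun k _ => Finset.sum_congr rfl fun l _ => ?_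
  ring

lemma rat_of_cz {A : M3} {P : MZ3} (hP : P.det ≠ 0) (h : IsRat (cz A P)) : IsRat A := by
  have h1 := rat_cz h P.adjugate
  have e : cz (cz A P) P.adjugate = (P.det : ℝ) ^ 2 • A := by
    have e1 : rm P * rm P.adjugate = (P.det : ℝ) • (1 : M3) := by
      rw [← rm_mul, Matrix.mul_adjugate]
      ext i j
      simp only [rm, Matrix.map_apply, Matrix.smul_apply, Matrix.one_apply]
      by_cases hij : i = j <;> simp [hij]
    have e2 : cz (cz A P) P.adjugate = (rm P * rm P.adjugate)ᵀ * A * (rm P * rm P.adjugate) := by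
      simp [cz, Matrix.transpose_mul, Matrix.mul_assoc]
    rw [e2, e1]
    simp [smul_smul, pow_two]
  rw [e] at h1
  obtain ⟨c, hc, h⟩ := h1
  have : (P.det : ℝ) ≠ 0 := by exact_mod_cast hP
  refine ⟨c * (P.det : ℝ) ^ 2, by positivity, fun i j => ?_⟩
  obtain ⟨q, hq⟩ := h i j
  refine ⟨q, ?_⟩
  rw [← hq]; simp; ring

lemma symm_entries {A : M3} (hs : Aᵀ = A) : A 1 0 = A 0 1 ∧ A 2 0 = A 0 2 ∧ A 2 1 = A 1 2 :=
  ⟨congrFun (congrFun hs 0) 1, congrFun (congrFun hs 0) 2, congrFun (congrFun hs 1) 2⟩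

lemma qf_entries {A : M3} (hs : Aᵀ = A) (x : Fin 3 → ℝ) : qf A x = A 0 0 * x 0 ^ 2 + A 1 1 * x 1 ^ 2 +
    A 2 2 * x 2 ^ 2 + 2 * A 0 1 * x 0 * x 1 + 2 * A 0 2 * x 0 * x 2 + 2 * A 1 2 * x 1 * x 2 := by
  obtain ⟨h1, h2, h3⟩ := symm_entries hs
  simp [qf, Matrix.mulVec, dotProduct, Fin.sum_univ_three, h1, h2, h3]
  ring

lemma small_iso2 {A : M3} (hs : Aᵀ = A) (hd : A.det ≠ 0) (h00 : A 0 0 = 0) (h01 : A 0 1 = 0)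
    (hirr : ¬ IsRat A) : Small A := by
  obtain ⟨s1, s2, s3⟩ := symm_entries hs
  rw [Matrix.det_fin_three, s1, s2, s3, h00, h01] at hd
  have hb : A 0 2 ≠ 0 := by intro h; apply hd; rw [h]; ring
  have hp : A 1 1 ≠ 0 := by intro h; apply hd; rw [h]; ring
  set b := 2 * A 0 2 with hbd
  have hb0 : b ≠ 0 := by positivity
  have hS : SmallF (A 1 1 / b) (2 * A 1 2 / b) (A 2 2 / b) := by
    apply smallF (by positivity)
    rintro ⟨⟨q1, e1⟩, ⟨q2, e2⟩, ⟨q3, e3⟩⟩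
    apply hirr
    have f1 : A 1 1 = b * q1 := by rw [← e1]; field_simp
    have f2 : A 1 2 = b * (q2 / 2) := by rw [← e2]; field_simp
    have f3 : A 2 2 = b * q3 := by rw [← e3]; field_simp
    have f4 : A 0 2 = b * (1 / 2) := by rw [hbd]; ring
    refine ⟨b⁻¹, by positivity, fun i j => ?_⟩
    fin_cases i <;> fin_cases j <;> simp only [Fin.zero_eta, Fin.mk_one, Fin.reduceFinMk, s1, s2, s3, h00, h01, f1, f2, f3, f4, mul_zero]
    any_goals rw [inv_mul_cancel_left₀ hb0]
    · exact ⟨0, by simp⟩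
    · exact ⟨0, by simp⟩
    · exact ⟨1/2, by simp⟩
    · exact ⟨0, by simp⟩
    · exact ⟨q1, by simp⟩
    · exact ⟨q2/2, by simp⟩
    · exact ⟨1/2, by simp⟩
    · exact ⟨q2/2, by simp⟩
    · exact ⟨q3, by simp⟩
  intro ε hε
  obtain ⟨x, y, z, h1, h2⟩ := hS (ε / |b|) (by positivity)
  refine ⟨![x, y, z], ?_⟩
  have e : qf A (cv ![x, y, z]) = b * ((x : ℝ) * z + A 1 1 / b * y ^ 2 + 2 * A 1 2 / b * y * z + A 2 2 / b * z ^ 2) := by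
    rw [qf_entries hs, h00, h01]
    simp [cv]
    field_simp
    rw [hbd]; ring
  rw [e, abs_mul]
  rw [lt_div_iff₀ (by positivity)] at h2
  exact ⟨by positivity, by linarith⟩

lemma small_iso {A : M3} (hs : Aᵀ = A) (hd : A.det ≠ 0) (h00 : A 0 0 = 0)
    (hirr : ¬ IsRat A) : Small A := by
  by_cases hind : ∀ m n : ℤ, m * A 0 1 + n * A 0 2 = 0 → m = 0 ∧ n = 0
  · intro ε hε
    have hb : A 0 2 ≠ 0 := by
      intro h
      have := hind 0 1 (by rw [h]; simp)
      simp at this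
    obtain ⟨t, ht, p, hp⟩ := dirichlet (A 0 1 / A 0 2) (show 0 < ε / |2 * A 0 2| by positivity)
    set L := 2 * (t * A 0 1 + (-p : ℤ) * A 0 2) with hL
    have hL0 : L ≠ 0 := by
      intro h
      have := hind t (-p) (by push_cast at *; linarith)
      omega
    have hLε : |L| < ε := by
      rw [lt_div_iff₀ (by positivity), ← abs_mul] at hp
      have e : L = (A 0 1 / A 0 2 * t - p) * (2 * A 0 2) := by
        rw [hL]; push_cast; field_simp
        ring
      rw [e]; exact hp
    set q0 := A 1 1 * t ^ 2 + A 2 2 * p ^ 2 - 2 * A 1 2 * t * p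
    set x : ℤ := ⌊-q0 / L⌋ + 1
    have e : qf A (cv ![x, t, -p]) = L * (x - (-q0 / L)) := by
      rw [qf_entries hs, h00]
      simp [cv]
      field_simp
      rw [hL]; push_cast; ring
    have hx1 : (0:ℝ) < x - (-q0 / L) := by
      have := Int.lt_floor_add_one (-q0 / L); simp only [x]; push_cast; linarith
    have hx2 : (x:ℝ) - (-q0 / L) ≤ 1 := by
      have := Int.floor_le (-q0 / L); simp only [x]; push_cast; linarith
    refine ⟨![x, t, -p], ?_⟩
    rw [e, abs_mul, abs_of_pos hx1]
    have : 0 < |L| := abs_pos.2 hL0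
    exact ⟨by positivity, by nlinarith⟩
  · push Not at hind
    obtain ⟨m, n, h0, hmn⟩ := hind
    obtain ⟨P, hP, hp1, hp2⟩ : ∃ P : MZ3, P.det ≠ 0 ∧ (∀ i, P i 0 = ![1,0,0] i) ∧ (∀ i, P i 1 = ![0,m,n] i) := by
      by_cases hn : n = 0
      · have hm : m ≠ 0 := fun h => hmn h hn
        refine ⟨!![1,0,0;0,m,0;0,n,1], by simpa [Matrix.det_fin_three] using hm, ?_, ?_⟩ <;>
        · intro i; fin_cases i <;> simp
      · refine ⟨!![1,0,0;0,m,1;0,n,0], by simpa [Matrix.det_fin_three] using hn, ?_, ?_⟩ <;>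
        · intro i; fin_cases i <;> simp
    apply Small_of_cz (P := P)
    apply small_iso2 (cz_symm hs P) (cz_det hd hP)
    · simp [cz, Matrix.mul_apply, Fin.sum_univ_three, rm, hp1, hp2, h00]
    · simp [cz, Matrix.mul_apply, Fin.sum_univ_three, rm, hp1, hp2, h00]
      linarith
    · exact fun h => hirr (rat_of_cz hP h)

theorem small3 {A : M3} (hs : Aᵀ = A) (hd : A.det ≠ 0) (hp : ∃ x, 0 < qf A x)
    (hn : ∃ x, qf A x < 0) (hirr : ¬ IsRat A) : Small A := by
  by_cases han : ∀ v : Fin 3 → ℤ, v ≠ 0 → qf A (cv v) ≠ 0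
  · by_contra hcon
    unfold Small at hcon
    push Not at hcon
    obtain ⟨ε, hε, h⟩ := hcon
    exact hirr (core_form hs hd hp hn hε fun v hv => h v (abs_pos.2 (han v hv)))
  · push Not at han
    obtain ⟨v, hv, h0⟩ := han
    obtain ⟨P, hP, hp1⟩ : ∃ P : MZ3, P.det ≠ 0 ∧ (∀ i, P i 0 = v i) := by
      by_cases h1 : v 0 = 0
      · by_cases h2 : v 1 = 0
        · have h3 : v 2 ≠ 0 := by
            intro h3; apply hv; ext i; fin_cases i <;> simp [h1, h2, h3]
          refine ⟨!![v 0,1,0;v 1,0,1;v 2,0,0], by simpa [Matrix.det_fin_three] using h3, ?_⟩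
          intro i; fin_cases i <;> simp
        · refine ⟨!![v 0,1,0;v 1,0,0;v 2,0,1], by simpa [Matrix.det_fin_three] using h2, ?_⟩
          intro i; fin_cases i <;> simp
      · refine ⟨!![v 0,0,0;v 1,1,0;v 2,0,1], by simpa [Matrix.det_fin_three] using h1, ?_⟩
        intro i; fin_cases i <;> simp
    apply Small_of_cz (P := P)
    apply small_iso (cz_symm hs P) (cz_det hd hP)
    · have e : qf (cz A P) (cv ![1,0,0]) = 0 := by
        rw [qf_cz]
        have : P *ᵥ ![1,0,0] = v := by
          ext i; simp [Matrix.mulVec, dotProduct, Fin.sum_univ_three, hp1]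
        rw [this, h0]
      rw [qf_entries (cz_symm hs P)] at e
      simpa [cv] using e
    · exact fun h => hirr (rat_of_cz hP h)
end Opp
end Part9

section Part10
open Matrix Filter Topology

namespace Opp

lemma bin_last {a b c s : ℝ} (hs : 0 < s) (ha : a < 0) (ha2 : 2 * s < -a) (hb : 0 ≤ b) (hc : 0 ≤ c)
    (hD : a * c - b ^ 2 = -s ^ 2) :
    ∃ k : ℕ, -(5 * s) ≤ a + 2 * b * k + c * k ^ 2 ∧ a + 2 * b * k + c * k ^ 2 < 0 := by
  have hbs : b ≤ s := by
    by_contra h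
    push Not at h
    nlinarith [mul_nonneg hc (neg_nonneg.2 ha.le)]
  have hex : ∃ k : ℕ, 0 ≤ a + 2 * b * k + c * k ^ 2 := by
    rcases hb.lt_or_eq with hb' | hb'
    · obtain ⟨k, hk⟩ := exists_nat_gt (-a / (2 * b))
      rw [div_lt_iff₀ (by positivity)] at hk
      refine ⟨k, ?_⟩
      have : 0 ≤ c * (k:ℝ) ^ 2 := by positivity
      linarith
    · have hc' : 0 < c := by
        rcases hc.lt_or_eq with h | h
        · exact h
        · rw [← hb', ← h] at hD; nlinarith
      obtain ⟨k, hk⟩ := exists_nat_gt (max (-a / c) 1)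
      have h1 := lt_of_le_of_lt (le_max_left _ _) hk
      have h2 := lt_of_le_of_lt (le_max_right _ _) hk
      rw [div_lt_iff₀ hc'] at h1
      refine ⟨k, ?_⟩
      rw [← hb']
      nlinarith
  classical
  obtain ⟨hj, hmin⟩ := And.intro (Nat.find_spec hex) (fun m => @Nat.find_min _ _ hex m)
  set j := Nat.find hex
  cases' hjj : j with i
  · rw [hjj] at hj; simp at hj; linarith
  · have h1 := hmin i (by omega)
    rw [hjj] at hj
    push Not at h1
    refine ⟨i, ?_, h1⟩
    push_cast at hj
    have hi : (0:ℝ) ≤ i := by positivity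
    have hci : c * i ≤ s := by
      by_contra h
      push Not at h
      have e1 : c * (i:ℝ) ^ 2 < -a := by nlinarith [mul_nonneg hb hi]
      have e2 : c * (-a) ≤ s ^ 2 := by nlinarith
      have e3 : s ^ 2 < (c * i) ^ 2 := by nlinarith
      nlinarith
    have hcs : c ≤ s := by
      by_contra h
      push Not at h
      nlinarith
    nlinarith

lemma bin_aux {s : ℝ} (hs : 0 < s) (n : ℕ) : ∀ a b c : ℝ, |a * c - b ^ 2| = s ^ 2 → a < 0 →
    -a ≤ 2 ^ n * (2 * s) → ∃ y z : ℤ, -(5 * s) ≤ a * y ^ 2 + 2 * b * y * z + c * z ^ 2 ∧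
      a * y ^ 2 + 2 * b * y * z + c * z ^ 2 < 0 := by
  induction n with
  | zero =>
    intro a b c hD ha han
    refine ⟨1, 0, ?_⟩
    simp at han ⊢
    exact ⟨by linarith, ha⟩
  | succ n ih =>
    intro a b c hD ha han
    by_cases hsm : -a ≤ 2 * s
    · refine ⟨1, 0, ?_⟩
      simp
      exact ⟨by linarith, ha⟩
    push Not at hsm
    obtain ⟨k, hk⟩ : ∃ k : ℤ, |b + a * k| ≤ -a / 2 := by
      refine ⟨round (-b / a), ?_⟩
      have h1 := abs_sub_round (-b / a)
      have e : b + a * round (-b / a) = (-a) * (-b / a - round (-b / a)) := by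
        have hq : a * (-b / a) = -b := mul_div_cancel₀ _ ha.ne
        linear_combination hq
      rw [e, abs_mul, abs_of_pos (by linarith : 0 < -a)]
      nlinarith
    set b' := b + a * k with hb'
    set c' := c + 2 * b * k + a * k ^ 2 with hc'
    have hD' : a * c' - b' ^ 2 = a * c - b ^ 2 := by rw [hb', hc']; ring
    have hbb : b' ^ 2 ≤ a ^ 2 / 4 := by
      have := sq_le_sq' (abs_le.1 hk).1 (abs_le.1 hk).2
      nlinarith
    rw [← hD'] at hD
    by_cases hcn : c' < 0
    · obtain ⟨y, z, h⟩ := ih c' b' a (by rw [mul_comm]; exact hD) hcn (by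
        have h1 : a * c' ≤ s ^ 2 + b' ^ 2 := by have := le_abs_self (a * c' - b' ^ 2); linarith
        have h2 : -c' ≤ -a / 2 := by
          by_contra h
          push Not at h
          nlinarith
        rw [pow_succ] at han
        linarith)
      refine ⟨z + k * y, y, ?_⟩
      have e : a * ((z + k * y : ℤ) : ℝ) ^ 2 + 2 * b * ((z + k * y : ℤ) : ℝ) * y + c * y ^ 2 =
        c' * y ^ 2 + 2 * b' * y * z + a * z ^ 2 := by rw [hb', hc']; push_cast; ring
      rw [e]; exact h
    · push Not at hcn
      have hD2 : a * c' - b' ^ 2 = - s ^ 2 := by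
        have : a * c' - b' ^ 2 ≤ 0 := by nlinarith [mul_nonneg hcn (neg_nonneg.2 ha.le), sq_nonneg b']
        rw [abs_of_nonpos this] at hD
        linarith
      rcases le_total 0 b' with hb0 | hb0
      · obtain ⟨j, h⟩ := bin_last hs ha hsm hb0 hcn hD2
        refine ⟨1 + k * j, j, ?_⟩
        have e : a * ((1 + k * j : ℤ) : ℝ) ^ 2 + 2 * b * ((1 + k * j : ℤ) : ℝ) * (j : ℤ) + c * (j : ℤ) ^ 2 =
          a + 2 * b' * j + c' * j ^ 2 := by rw [hb', hc']; push_cast; ring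
        rw [e]; exact h
      · obtain ⟨j, h⟩ := bin_last (b := -b') hs ha hsm (by linarith) hcn (by linarith)
        refine ⟨1 - k * j, -j, ?_⟩
        have e : a * ((1 - k * j : ℤ) : ℝ) ^ 2 + 2 * b * ((1 - k * j : ℤ) : ℝ) * (-j : ℤ) + c * (-j : ℤ) ^ 2 =
          a + 2 * -b' * j + c' * j ^ 2 := by rw [hb', hc']; push_cast; ring
        rw [e]; exact h

lemma bezout2 (p q : ℤ) : ∃ g p' q' s t : ℤ, p = g * p' ∧ q = g * q' ∧ s * p' + t * q' = 1 := by
  rcases Nat.eq_zero_or_pos (Int.gcd p q) with h | h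
  · rw [Int.gcd_eq_zero_iff] at h
    exact ⟨0, 1, 0, 1, 0, by simp [h.1], by simp [h.2], by norm_num⟩
  · obtain ⟨p', q', h1, h2, h3⟩ := Int.exists_gcd_one h
    obtain ⟨s, t, hst⟩ := Int.isCoprime_iff_gcd_eq_one.2 h1
    exact ⟨Int.gcd p q, p', q', s, t, by rw [mul_comm]; exact h2, by rw [mul_comm]; exact h3, hst⟩

lemma primitive_basis (v : Fin 3 → ℤ) : ∃ (h : ℤ) (P : MZ3), P.det = 1 ∧ v = h • (P *ᵥ ![1,0,0]) := by
  obtain ⟨g, p', q', s, t, h1, h2, h3⟩ := bezout2 (v 0) (v 1)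
  obtain ⟨h, g', r', x, y, k1, k2, k3⟩ := bezout2 g (v 2)
  refine ⟨h, !![g'*p', -t, -y*p'; g'*q', s, -y*q'; r', 0, x], ?_, ?_⟩
  · simp [Matrix.det_fin_three]
    linear_combination (x * g' + y * r') * h3 + k3
  · ext i
    fin_cases i <;> simp [Matrix.mulVec, dotProduct, Fin.sum_univ_three]
    · rw [h1, k1]; ring
    · rw [h2, k1]; ring
    · exact k2

def PosS (A : M3) : Prop := ∀ ε > 0, ∃ v : Fin 3 → ℤ, 0 < qf A (cv v) ∧ qf A (cv v) < ε
def NegS (A : M3) : Prop := ∀ ε > 0, ∃ v : Fin 3 → ℤ, qf A (cv v) < 0 ∧ -ε < qf A (cv v)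

lemma bin_neg {a b c s : ℝ} (hs : 0 < s) (hD : |a * c - b ^ 2| = s ^ 2)
    (hneg : ∃ y z : ℝ, a * y ^ 2 + 2 * b * y * z + c * z ^ 2 < 0) :
    ∃ y z : ℤ, -(5 * s) ≤ a * y ^ 2 + 2 * b * y * z + c * z ^ 2 ∧
      a * y ^ 2 + 2 * b * y * z + c * z ^ 2 < 0 := by
  -- an integer point with negative value
  obtain ⟨v, hv⟩ := int_approx (n := 2) (W := {w : Fin 2 → ℝ | a * w 0 ^ 2 + 2 * b * w 0 * w 1 + c * w 1 ^ 2 < 0})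
    (isOpen_lt (by fun_prop) continuous_const)
    (by obtain ⟨y, z, h⟩ := hneg; exact ⟨![y, z], by simpa using h⟩)
    (by
      intro w hw k hk
      change a * (k * w 0) ^ 2 + 2 * b * (k * w 0) * (k * w 1) + c * (k * w 1) ^ 2 < 0
      have h1 : a * w 0 ^ 2 + 2 * b * w 0 * w 1 + c * w 1 ^ 2 < 0 := hw
      have h2 : 0 < k ^ 2 := by positivity
      nlinarith)
  change a * (v 0 : ℝ) ^ 2 + 2 * b * v 0 * v 1 + c * (v 1 : ℝ) ^ 2 < 0 at hv
  obtain ⟨g, p, q, r, t, h1, h2, h3⟩ := bezout2 (v 0) (v 1)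
  rw [h1, h2] at hv
  push_cast at hv
  -- basis (p,q), (-t,r)
  set a' := a * (p:ℝ) ^ 2 + 2 * b * p * q + c * (q:ℝ) ^ 2 with ha'
  set b' := - a * p * t + b * (p * r - q * t) + c * q * r with hb'
  set c' := a * (t:ℝ) ^ 2 - 2 * b * t * r + c * (r:ℝ) ^ 2 with hc'
  have h3' : (r:ℝ) * p + t * q = 1 := by exact_mod_cast h3
  have ha0 : a' < 0 := by
    have : (g:ℝ) ^ 2 * a' < 0 := by rw [ha']; linarith
    by_contra h
    push Not at h
    nlinarith [mul_nonneg (sq_nonneg (g:ℝ)) h]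
  have hD' : a' * c' - b' ^ 2 = a * c - b ^ 2 := by
    have : a' * c' - b' ^ 2 = (a * c - b ^ 2) * (r * p + t * q) ^ 2 := by
      rw [ha', hb', hc']; ring
    rw [this, h3']; ring
  obtain ⟨n, hn⟩ := pow_unbounded_of_one_lt (-a' / (2 * s)) (one_lt_two (α := ℝ))
  rw [div_lt_iff₀ (by positivity)] at hn
  obtain ⟨y, z, h⟩ := bin_aux hs n a' b' c' (by rw [hD']; exact hD) ha0 hn.le
  refine ⟨p * y - t * z, q * y + r * z, ?_⟩
  have e : a * ((p * y - t * z : ℤ) : ℝ) ^ 2 + 2 * b * ((p * y - t * z : ℤ) : ℝ) * ((q * y + r * z : ℤ) : ℝ)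
    + c * ((q * y + r * z : ℤ) : ℝ) ^ 2 = a' * y ^ 2 + 2 * b' * y * z + c' * z ^ 2 := by
    rw [ha', hb', hc']; push_cast; ring
  rw [e]; exact h

/-- choose the first coordinate -/
lemma choose_x {e R l : ℝ} (he : 0 < e) (hR : R < 0) : ∃ (j : ℤ) (x : ℤ),
    e * (x + j * l) ^ 2 + R * j ^ 2 < 0 ∧ -(2 * √(e * (-R)) + 4 * e) ≤ e * (x + j * l) ^ 2 + R * j ^ 2 := by
  set ρ := √(-R / e) with hρ
  have hρ0 : 0 < ρ := Real.sqrt_pos.2 (div_pos (by linarith) he)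
  have hρ2 : e * ρ ^ 2 = -R := by
    rw [hρ, Real.sq_sqrt (div_nonneg (by linarith) he.le)]; field_simp
  have hse : √(e * (-R)) = e * ρ := by
    rw [← hρ2]
    rw [show e * (e * ρ ^ 2) = (e * ρ) ^ 2 by ring, Real.sqrt_sq (by positivity)]
  obtain ⟨j, hj1, hj2⟩ : ∃ j : ℤ, 1 ≤ j * ρ ∧ j * ρ ≤ ρ + 2 := by
    rcases le_or_gt 1 ρ with h | h
    · exact ⟨1, by simpa using h, by push_cast; linarith⟩
    · refine ⟨⌈1 / ρ⌉, ?_, ?_⟩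
      · have := Int.le_ceil (1 / ρ)
        rwa [div_le_iff₀ hρ0] at this
      · have := Int.ceil_lt_add_one (1 / ρ)
        have h2 : (⌈1 / ρ⌉ : ℝ) * ρ < (1 / ρ + 1) * ρ := by nlinarith
        rw [add_mul, div_mul_cancel₀ _ hρ0.ne'] at h2
        linarith
  refine ⟨j, ⌈j * ρ - j * l⌉ - 1, ?_⟩
  have h1 := Int.le_ceil (j * ρ - j * l)
  have h2 := Int.ceil_lt_add_one (j * ρ - j * l)
  set X : ℝ := ((⌈j * ρ - j * l⌉ - 1 : ℤ) : ℝ) + j * l with hX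
  have hX1 : X < j * ρ := by rw [hX]; push_cast; linarith
  have hX2 : j * ρ - 1 ≤ X := by rw [hX]; push_cast; linarith
  have e1 : e * X ^ 2 + R * j ^ 2 = e * (X ^ 2 - (j * ρ) ^ 2) := by
    linear_combination (j:ℝ) ^ 2 * hρ2
  rw [e1, hse]
  have h3 : X ^ 2 - (j * ρ) ^ 2 < 0 := by nlinarith
  have h4 : -(2 * ρ + 4) ≤ X ^ 2 - (j * ρ) ^ 2 := by nlinarith
  constructor
  · nlinarith
  · nlinarith

set_option maxHeartbeats 800000 in
lemma neg_of_pos {A : M3} (hs : Aᵀ = A) (hd : A.det ≠ 0) (hn : ∃ x, qf A x < 0) (hpos : PosS A) :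
    NegS A := by
  intro δ hδ
  have hdp : 0 < |A.det| := abs_pos.2 hd
  -- choose eps
  set ε := min (δ / 8) ((δ ^ 2 / 80) ^ 2 / |A.det|) with hε
  have hε0 : 0 < ε := by positivity
  obtain ⟨v, hv1, hv2⟩ := hpos ε hε0
  obtain ⟨h, P, hP, hvP⟩ := primitive_basis v
  set B := cz A P with hB
  have hBs : Bᵀ = B := cz_symm hs P
  have hBd : B.det = A.det := by
    rw [hB, cz, Matrix.det_mul, Matrix.det_mul, Matrix.det_transpose, rm_det, hP]; simp
  have hB00 : B 0 0 = qf A (cv (P *ᵥ ![1,0,0])) := by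
    rw [← qf_cz, qf_entries (cz_symm hs P)]
    simp [cv, hB]
  set e := B 0 0 with hee
  have hhe : qf A (cv v) = (h:ℝ) ^ 2 * e := by
    rw [hB00, ← qf_smul]
    congr 1
    rw [hvP]
    ext i; simp [cv]
  have hh0 : h ≠ 0 := by rintro rfl; rw [hhe] at hv1; simp at hv1
  have hh1 : (1:ℝ) ≤ (h:ℝ) ^ 2 := by
    have : 1 ≤ h ^ 2 := by have := sq_pos_of_ne_zero hh0; omega
    exact_mod_cast this
  have he0 : 0 < e := by
    by_contra hc
    push Not at hc
    rw [hhe] at hv1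
    nlinarith
  have heε : e < ε := by rw [hhe] at hv2; nlinarith
  set a := B 1 1 - B 0 1 ^ 2 / e with ha
  set b := B 1 2 - B 0 1 * B 0 2 / e with hb
  set c := B 2 2 - B 0 2 ^ 2 / e with hc
  have hQ : ∀ x : Fin 3 → ℝ, qf B x = e * (x 0 + (B 0 1 / e * x 1 + B 0 2 / e * x 2)) ^ 2 +
      (a * x 1 ^ 2 + 2 * b * x 1 * x 2 + c * x 2 ^ 2) := by
    intro x
    rw [qf_entries hBs, ← hee, ha, hb, hc]
    field_simp
    ring
  have hdet : e * (a * c - b ^ 2) = A.det := by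
    obtain ⟨s1, s2, s3⟩ := symm_entries hBs
    rw [← hBd, Matrix.det_fin_three, s1, s2, s3, ← hee, ha, hb, hc]
    field_simp
    ring
  set s := √(|A.det| / e) with hsd
  have hs0 : 0 < s := Real.sqrt_pos.2 (by positivity)
  have hs2 : s ^ 2 = |A.det| / e := Real.sq_sqrt (by positivity)
  have hD : |a * c - b ^ 2| = s ^ 2 := by
    rw [hs2, ← hdet, abs_mul, abs_of_pos he0]; field_simp
  have hneg : ∃ y z : ℝ, a * y ^ 2 + 2 * b * y * z + c * z ^ 2 < 0 := by
    obtain ⟨x, hx⟩ := hn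
    have hu : IsUnit (rm P).det := by rw [rm_det, hP]; simp
    have e1 : qf B ((rm P)⁻¹ *ᵥ x) = qf A x := by
      rw [hB, cz, qf_conj, Matrix.mulVec_mulVec, Matrix.mul_nonsing_inv _ hu, Matrix.one_mulVec]
    rw [← e1, hQ] at hx
    refine ⟨((rm P)⁻¹ *ᵥ x) 1, ((rm P)⁻¹ *ᵥ x) 2, lt_of_le_of_lt ?_ hx⟩
    exact le_add_of_nonneg_left (by positivity)
  obtain ⟨y, z, hr1, hr2⟩ := bin_neg hs0 hD hneg
  set R := a * (y:ℝ) ^ 2 + 2 * b * y * z + c * (z:ℝ) ^ 2 with hR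
  obtain ⟨j, x, hx1, hx2⟩ := choose_x (l := B 0 1 / e * y + B 0 2 / e * z) he0 hr2
  refine ⟨P *ᵥ ![x, j * y, j * z], ?_⟩
  rw [← qf_cz, ← hB, hQ]
  have e2 : e * (cv ![x, j * y, j * z] 0 + (B 0 1 / e * cv ![x, j * y, j * z] 1 + B 0 2 / e * cv ![x, j * y, j * z] 2)) ^ 2
      + (a * cv ![x, j * y, j * z] 1 ^ 2 + 2 * b * cv ![x, j * y, j * z] 1 * cv ![x, j * y, j * z] 2 + c * cv ![x, j * y, j * z] 2 ^ 2)
      = e * (x + j * (B 0 1 / e * y + B 0 2 / e * z)) ^ 2 + R * j ^ 2 := by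
    simp only [cv, hR]
    simp
    ring
  rw [e2]
  refine ⟨hx1, lt_of_lt_of_le ?_ hx2⟩
  have hε1 : e < δ / 8 := heε.trans_le (min_le_left _ _)
  have hε2 : e < (δ ^ 2 / 80) ^ 2 / |A.det| := heε.trans_le (min_le_right _ _)
  rw [lt_div_iff₀ hdp] at hε2
  have hes : e * s < δ ^ 2 / 80 := by
    have : (e * s) ^ 2 < (δ ^ 2 / 80) ^ 2 := by
      rw [mul_pow, hs2]
      have : e ^ 2 * (|A.det| / e) = e * |A.det| := by field_simp
      rw [this]; exact hε2
    exact lt_of_pow_lt_pow_left₀ 2 (by positivity) this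
  have hsq : √(e * (-R)) < δ / 4 := by
    rw [Real.sqrt_lt' (by positivity)]
    have h5 : e * (-R) ≤ e * (5 * s) := mul_le_mul_of_nonneg_left (by linarith only [hr1]) he0.le
    linarith only [h5, hes]
  linarith only [hsq, hε1]
end Opp
end Part10

section Part11
open Matrix Filter Topology
namespace Opp

lemma qf_neg (A : M3) (x : Fin 3 → ℝ) : qf (-A) x = - qf A x := by
  simp [qf, Matrix.neg_mulVec]

lemma pos_neg {A : M3} (hs : Aᵀ = A) (hd : A.det ≠ 0) (hp : ∃ x, 0 < qf A x)
    (hn : ∃ x, qf A x < 0) (hirr : ¬ IsRat A) : PosS A ∧ NegS A := by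
  have hS := small3 hs hd hp hn hirr
  have key : PosS A ∨ NegS A := by
    by_contra hc
    rw [not_or] at hc
    obtain ⟨h1, h2⟩ := hc
    simp only [PosS, NegS] at h1 h2
    push Not at h1 h2
    obtain ⟨e1, he1, h1⟩ := h1
    obtain ⟨e2, he2, h2⟩ := h2
    obtain ⟨v, hv1, hv2⟩ := hS (min e1 e2) (lt_min he1 he2)
    have ha : |qf A (cv v)| < e1 := hv2.trans_le (min_le_left _ _)
    have hb : |qf A (cv v)| < e2 := hv2.trans_le (min_le_right _ _)
    rw [abs_lt] at ha hb
    rcases lt_or_gt_of_ne (abs_pos.1 hv1) with h | h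
    · have := h2 v h; linarith
    · have := h1 v h; linarith
  rcases key with h | h
  · exact ⟨h, neg_of_pos hs hd hn h⟩
  · refine ⟨?_, h⟩
    have h' : PosS (-A) := by
      intro ε hε
      obtain ⟨v, hv1, hv2⟩ := h ε hε
      exact ⟨v, by rw [qf_neg]; linarith, by rw [qf_neg]; linarith⟩
    have := neg_of_pos (A := -A) (by rw [Matrix.transpose_neg, hs])
      (by rw [Matrix.det_neg]; simpa using hd)
      (by obtain ⟨x, hx⟩ := hp; exact ⟨x, by rw [qf_neg]; linarith⟩) h'
    intro ε hε
    obtain ⟨v, hv1, hv2⟩ := this ε hε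
    rw [qf_neg] at hv1 hv2
    exact ⟨v, by linarith, by linarith⟩

lemma sq_gap {t δ : ℝ} (ht : 0 ≤ t) (hδ : 0 < δ) :
    ∃ ε > 0, ∀ e, 0 < e → e < ε → ∃ k : ℤ, |(k:ℝ) ^ 2 * e - t| < δ := by
  refine ⟨min (δ / 2) (δ ^ 2 / (16 * (t + 1))), by positivity, ?_⟩
  intro e he hlt
  have h1 : e < δ / 2 := hlt.trans_le (min_le_left _ _)
  have h2 : e < δ ^ 2 / (16 * (t + 1)) := hlt.trans_le (min_le_right _ _)
  rw [lt_div_iff₀ (by positivity)] at h2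
  set r := √(t / e) with hr
  have hr0 : 0 ≤ r := Real.sqrt_nonneg _
  have hr2 : r ^ 2 * e = t := by rw [hr, Real.sq_sqrt (by positivity)]; field_simp
  have h3 : r * e < δ / 4 := by
    have : (r * e) ^ 2 < (δ / 4) ^ 2 := by
      have : (r * e) ^ 2 = t * e := by rw [← hr2]; ring
      rw [this]; nlinarith
    exact lt_of_pow_lt_pow_left₀ 2 (by positivity) this
  refine ⟨⌊r⌋, ?_⟩
  have h4 := Int.floor_le r
  have h5 := Int.lt_floor_add_one r
  have h6 : (0:ℝ) ≤ ⌊r⌋ := by exact_mod_cast Int.floor_nonneg.2 hr0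
  generalize ((⌊r⌋ : ℤ) : ℝ) = k at *
  rw [abs_lt, ← hr2]
  have e1 : k ^ 2 * e - r ^ 2 * e = - ((r - k) * ((r + k) * e)) := by ring
  have h7 : 0 ≤ (r + k) * e := by positivity
  have h8 : (r + k) * e ≤ 2 * (r * e) := by nlinarith
  have h9 : (r - k) * ((r + k) * e) ≤ (r + k) * e := by nlinarith
  have h10 : 0 ≤ (r - k) * ((r + k) * e) := mul_nonneg (by linarith) h7
  constructor <;> linarith

lemma dense3 {A : M3} (hs : Aᵀ = A) (hd : A.det ≠ 0) (hp : ∃ x, 0 < qf A x)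
    (hn : ∃ x, qf A x < 0) (hirr : ¬ IsRat A) (t δ : ℝ) (hδ : 0 < δ) :
    ∃ v : Fin 3 → ℤ, |qf A (cv v) - t| < δ := by
  obtain ⟨hP, hN⟩ := pos_neg hs hd hp hn hirr
  have hk : ∀ (k : ℤ) v, qf A (cv (k • v)) = (k:ℝ) ^ 2 * qf A (cv v) := by
    intro k v
    rw [← qf_smul]
    congr 1
    ext i; simp [cv]
  rcases le_total 0 t with ht | ht
  · obtain ⟨ε, hε, h⟩ := sq_gap ht hδ
    obtain ⟨v, hv1, hv2⟩ := hP ε hε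
    obtain ⟨k, hk'⟩ := h _ hv1 hv2
    exact ⟨k • v, by rw [hk]; exact hk'⟩
  · obtain ⟨ε, hε, h⟩ := sq_gap (t := -t) (by linarith) hδ
    obtain ⟨v, hv1, hv2⟩ := hN ε hε
    obtain ⟨k, hk'⟩ := h (-qf A (cv v)) (by linarith) (by linarith)
    refine ⟨k • v, ?_⟩
    rw [hk, ← abs_neg]
    convert hk' using 2
    ring
end Opp
end Part11

section Part12
open Matrix Filter Topology
namespace Opp

variable {n : ℕ}

def gm (A : Matrix (Fin n) (Fin n) ℝ) (a b c : Fin n → ℝ) : M3 :=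
  !![bl A a a, bl A a b, bl A a c; bl A b a, bl A b b, bl A b c; bl A c a, bl A c b, bl A c c]

lemma gm_symm {A : Matrix (Fin n) (Fin n) ℝ} (hs : Aᵀ = A) (a b c : Fin n → ℝ) :
    (gm A a b c)ᵀ = gm A a b c := by
  ext i j
  fin_cases i <;> fin_cases j <;> simp [gm] <;> exact bl_comm hs _ _

lemma qf_gm (A : Matrix (Fin n) (Fin n) ℝ) (a b c : Fin n → ℝ) (x : Fin 3 → ℝ) :
    qf (gm A a b c) x = bl A (x 0 • a + x 1 • b + x 2 • c) (x 0 • a + x 1 • b + x 2 • c) := by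
  simp only [bl_add_left, bl_add_right, bl_smul_left, bl_smul_right]
  simp [qf, gm, dotProduct, Matrix.mulVec, Fin.sum_univ_three]
  ring

lemma det_gm (A : Matrix (Fin n) (Fin n) ℝ) (a b c : Fin n → ℝ) :
    (gm A a b c).det = bl A a a * bl A b b * bl A c c - bl A a a * bl A b c * bl A c b
      - bl A a b * bl A b a * bl A c c + bl A a b * bl A b c * bl A c a
      + bl A a c * bl A b a * bl A c b - bl A a c * bl A b b * bl A c a := by
  rw [Matrix.det_fin_three]; simp [gm]

lemma continuous_bl (A : Matrix (Fin n) (Fin n) ℝ) {f g : (Fin n → ℝ) → (Fin n → ℝ)}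
    (hf : Continuous f) (hg : Continuous g) : Continuous (fun x => bl A (f x) (g x)) := by
  unfold bl
  exact hf.dotProduct (continuous_const.matrix_mulVec hg)

lemma exists_triple {A : Matrix (Fin n) (Fin n) ℝ} (hn : 3 ≤ n) (hs : Aᵀ = A) (hd : A.det ≠ 0)
    (hp : ∃ x, 0 < bl A x x) (hm : ∃ x, bl A x x < 0) :
    ∃ a b c, 0 < bl A a a ∧ bl A b b < 0 ∧ (gm A a b c).det ≠ 0 := by
  obtain ⟨p, hp⟩ := hp
  obtain ⟨m0, hm0⟩ := hm
  obtain ⟨m, hm, hpm⟩ : ∃ m, bl A m m < 0 ∧ bl A p m = 0 := by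
    refine ⟨m0 + (-(bl A p m0 / bl A p p)) • p, ?_, ?_⟩
    · simp only [bl_add_left, bl_add_right, bl_smul_left, bl_smul_right]
      rw [bl_comm hs m0 p]
      have : bl A m0 m0 + -(bl A p m0 / bl A p p) * bl A p m0 + (-(bl A p m0 / bl A p p) * bl A p m0 +
          -(bl A p m0 / bl A p p) * (-(bl A p m0 / bl A p p) * bl A p p)) = bl A m0 m0 - bl A p m0 ^ 2 / bl A p p := by
        field_simp; ring
      have h2 : 0 ≤ bl A p m0 ^ 2 / bl A p p := by positivity
      nlinarith
    · simp only [bl_add_right, bl_smul_right]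
      field_simp; ring
  have hmp : bl A m p = 0 := by rw [bl_comm hs, hpm]
  have hw : ∃ w, bl A p w = 0 ∧ bl A m w = 0 ∧ bl A w w ≠ 0 := by
    by_contra hc
    push Not at hc
    have hW : ∀ u w, bl A p u = 0 → bl A m u = 0 → bl A p w = 0 → bl A m w = 0 → bl A u w = 0 := by
      intro u w h1 h2 h3 h4
      have e1 := hc (u + w) (by rw [bl_add_right, h1, h3, add_zero]) (by rw [bl_add_right, h2, h4, add_zero])
      have e2 := hc u h1 h2
      have e3 := hc w h3 h4
      simp only [bl_add_left, bl_add_right] at e1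
      rw [bl_comm hs w u] at e1
      linarith
    let L : (Fin n → ℝ) →ₗ[ℝ] (Fin 2 → ℝ) :=
      { toFun := fun x => ![bl A p x, bl A m x]
        map_add' := fun x y => by ext i; fin_cases i <;> simp [bl_add_right]
        map_smul' := fun c x => by ext i; fin_cases i <;> simp [bl_smul_right] }
    have hk : LinearMap.ker L ≠ ⊥ := LinearMap.ker_ne_bot_of_finrank_lt (by simp; omega)
    obtain ⟨w, hwk, hw0⟩ := (Submodule.ne_bot_iff _).1 hk
    rw [LinearMap.mem_ker] at hwk
    have h1 : bl A p w = 0 := by simpa [L] using congrFun hwk 0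
    have h2 : bl A m w = 0 := by simpa [L] using congrFun hwk 1
    have hall : ∀ x, bl A x w = 0 := by
      intro x
      have e := hW (x + (-(bl A p x / bl A p p)) • p + (-(bl A m x / bl A m m)) • m) w
        (by simp only [bl_add_right, bl_smul_right]; rw [hpm]; field_simp; ring)
        (by simp only [bl_add_right, bl_smul_right]; rw [hmp]; have := hm.ne; field_simp; ring) h1 h2
      simp only [bl_add_left, bl_smul_left] at e
      rw [h1, h2] at e
      linarith
    have hAw : A *ᵥ w = 0 := by
      have := hall (A *ᵥ w)
      rw [bl] at this
      exact dotProduct_self_eq_zero.1 this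
    exact hw0 (Matrix.eq_zero_of_mulVec_eq_zero hd hAw)
  obtain ⟨w, h1, h2, h3⟩ := hw
  refine ⟨p, m, w, hp, hm, ?_⟩
  rw [det_gm, bl_comm hs w p, bl_comm hs w m, h1, h2, hmp]
  simp only [mul_zero, zero_mul, sub_zero, add_zero]
  exact mul_ne_zero (mul_ne_zero hp.ne' hm.ne) h3

def iv (v : Fin n → ℤ) : Fin n → ℝ := fun i => (v i : ℝ)

lemma irr_point {A : Matrix (Fin n) (Fin n) ℝ} (hs : Aᵀ = A) {W : Set (Fin n → ℝ)} (hW : IsOpen W) (hne : W.Nonempty)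
    (hc : ∀ w ∈ W, ∀ c : ℝ, 0 < c → c • w ∈ W) (r : ℝ) (hr : r ≠ 0) (hirr : ¬ IsRat A) :
    ∃ v : Fin n → ℤ, iv v ∈ W ∧ ¬ ∃ q : ℚ, r * bl A (iv v) (iv v) = q := by
  by_contra hcon
  push Not at hcon
  obtain ⟨p, hp⟩ := int_approx hW hne hc
  change iv p ∈ W at hp
  have hall : ∀ x : Fin n → ℤ, ∃ q : ℚ, r * bl A (iv x) (iv x) = q := by
    intro x
    have hev : ∀ᶠ k : ℕ in atTop, iv p + (1 / ((k:ℝ) + 1)) • iv x ∈ W := by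
      have ht : Tendsto (fun k : ℕ => iv p + (1 / ((k:ℝ) + 1)) • iv x) atTop (𝓝 (iv p + (0:ℝ) • iv x)) :=
        tendsto_const_nhds.add (tendsto_one_div_add_atTop_nhds_zero_nat.smul_const _)
      rw [zero_smul, add_zero] at ht
      exact ht.eventually (hW.mem_nhds hp)
    obtain ⟨K, hK⟩ := eventually_atTop.1 hev
    have hmem : ∀ k ≥ K, iv (((k:ℤ) + 1) • p + x) ∈ W := by
      intro k hk
      have h := hc _ (hK k hk) ((k:ℝ) + 1) (by positivity)
      convert h using 1
      ext i
      simp [iv]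
      field_simp
    have hexp : ∀ k : ℕ, bl A (iv (((k:ℤ) + 1) • p + x)) (iv (((k:ℤ) + 1) • p + x)) =
        ((k:ℝ) + 1) ^ 2 * bl A (iv p) (iv p) + 2 * ((k:ℝ) + 1) * bl A (iv p) (iv x) + bl A (iv x) (iv x) := by
      intro k
      have e : iv (((k:ℤ) + 1) • p + x) = ((k:ℝ) + 1) • iv p + iv x := by ext i; simp [iv]
      rw [e]
      simp only [bl_add_left, bl_add_right, bl_smul_left, bl_smul_right]
      rw [bl_comm hs (iv x) (iv p)]
      ring
    obtain ⟨q0, h0⟩ := hcon p hp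
    obtain ⟨q1, h1⟩ := hcon _ (hmem K le_rfl)
    obtain ⟨q2, h2⟩ := hcon _ (hmem (K + 1) (by omega))
    rw [hexp] at h1 h2
    push_cast at h2
    refine ⟨((K:ℚ) + 2) * (q1 - (K + 1) ^ 2 * q0) - (K + 1) * (q2 - (K + 2) ^ 2 * q0), ?_⟩
    push_cast
    rw [← h0, ← h1, ← h2]
    ring
  apply hirr
  refine ⟨r, hr, fun i j => ?_⟩
  have hsing : ∀ i j, bl A (iv (Pi.single i 1)) (iv (Pi.single j 1)) = A i j := by
    intro i j
    have : ∀ i : Fin n, iv (Pi.single i 1) = Pi.single i (1:ℝ) := by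
      intro i; ext l; by_cases h : l = i
      · subst h; simp [iv]
      · simp [iv, h]
    rw [this, this, bl]
    simp
  have hadd : ∀ x y : Fin n → ℤ, iv (x + y) = iv x + iv y := by intro x y; ext l; simp [iv]
  obtain ⟨q0, h0⟩ := hall (Pi.single i 1)
  obtain ⟨q1, h1⟩ := hall (Pi.single j 1)
  obtain ⟨q2, h2⟩ := hall (Pi.single i 1 + Pi.single j 1)
  rw [hadd] at h2
  simp only [bl_add_left, bl_add_right] at h2
  rw [bl_comm hs (iv (Pi.single j 1)) (iv (Pi.single i 1))] at h2
  simp only [hsing] at h0 h1 h2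
  refine ⟨(q2 - q0 - q1) / 2, ?_⟩
  push_cast
  rw [← h0, ← h1, ← h2]
  ring

lemma reduce {A : Matrix (Fin n) (Fin n) ℝ} (hn : 3 ≤ n) (hs : Aᵀ = A) (hd : A.det ≠ 0)
    (hp : ∃ x, 0 < bl A x x) (hm : ∃ x, bl A x x < 0) (hirr : ¬ IsRat A) :
    ∃ a b c : Fin n → ℤ, 0 < bl A (iv a) (iv a) ∧ bl A (iv b) (iv b) < 0 ∧
      (gm A (iv a) (iv b) (iv c)).det ≠ 0 ∧ ¬ IsRat (gm A (iv a) (iv b) (iv c)) := by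
  obtain ⟨a, b, c, ha, hb, hD⟩ := exists_triple hn hs hd hp hm
  obtain ⟨c', hc'⟩ := int_approx (W := {w | (gm A a b w).det ≠ 0})
    (by
      refine isOpen_ne.preimage (f := fun w => (gm A a b w).det) ?_
      simp only [det_gm]
      have := continuous_bl A (continuous_const (y := a)) continuous_id
      have := continuous_bl A (continuous_const (y := b)) continuous_id
      have := continuous_bl A continuous_id (continuous_const (y := a))
      have := continuous_bl A continuous_id (continuous_const (y := b))
      have := continuous_bl A continuous_id continuous_id
      simp only [id] at *
      fun_prop) ⟨c, hD⟩
    (by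
      intro w hw t ht
      have : (gm A a b (t • w)).det = t ^ 2 * (gm A a b w).det := by
        simp only [det_gm, bl_smul_left, bl_smul_right]; ring
      simp only [Set.mem_setOf_eq] at hw ⊢
      rw [this]; positivity)
  change (gm A a b (iv c')).det ≠ 0 at hc'
  obtain ⟨b', hb', hD'⟩ := int_approx (W := {w | bl A w w < 0 ∧ (gm A a w (iv c')).det ≠ 0})
    (by
      have h5 := continuous_bl A continuous_id continuous_id
      refine IsOpen.inter (isOpen_lt (by simpa using h5) continuous_const) (isOpen_ne.preimage (f := fun w => (gm A a w (iv c')).det) ?_)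
      simp only [det_gm]
      have := continuous_bl A (continuous_const (y := a)) continuous_id
      have := continuous_bl A (continuous_const (y := iv c')) continuous_id
      have := continuous_bl A continuous_id (continuous_const (y := a))
      have := continuous_bl A continuous_id (continuous_const (y := iv c'))
      simp only [id] at *
      fun_prop) ⟨b, hb, hc'⟩
    (by
      rintro w ⟨hw0, hw⟩ t ht
      have : (gm A a (t • w) (iv c')).det = t ^ 2 * (gm A a w (iv c')).det := by
        simp only [det_gm, bl_smul_left, bl_smul_right]; ring
      simp only [Set.mem_setOf_eq] at hw ⊢
      rw [this]
      refine ⟨?_, by positivity⟩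
      rw [bl_smul_left, bl_smul_right]
      exact mul_neg_of_pos_of_neg ht (mul_neg_of_pos_of_neg ht hw0))
  change bl A (iv b') (iv b') < 0 at hb'
  change (gm A a (iv b') (iv c')).det ≠ 0 at hD'
  obtain ⟨a', ⟨ha', hD''⟩, hq⟩ := irr_point hs (W := {w | 0 < bl A w w ∧ (gm A w (iv b') (iv c')).det ≠ 0})
    (by
      have h5 := continuous_bl A continuous_id continuous_id
      refine IsOpen.inter (isOpen_lt continuous_const (by simpa using h5)) (isOpen_ne.preimage (f := fun w => (gm A w (iv b') (iv c')).det) ?_)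
      simp only [det_gm]
      have := continuous_bl A (continuous_const (y := iv b')) continuous_id
      have := continuous_bl A (continuous_const (y := iv c')) continuous_id
      have := continuous_bl A continuous_id (continuous_const (y := iv b'))
      have := continuous_bl A continuous_id (continuous_const (y := iv c'))
      simp only [id] at *
      fun_prop) ⟨a, ha, hD'⟩
    (by
      rintro w ⟨hw0, hw⟩ t ht
      have : (gm A (t • w) (iv b') (iv c')).det = t ^ 2 * (gm A w (iv b') (iv c')).det := by
        simp only [det_gm, bl_smul_left, bl_smul_right]; ring
      simp only [Set.mem_setOf_eq] at hw ⊢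
      rw [this]
      refine ⟨?_, by positivity⟩
      rw [bl_smul_left, bl_smul_right]
      positivity) (bl A (iv b') (iv b'))⁻¹ (inv_ne_zero hb'.ne) hirr
  refine ⟨a', b', c', ha', hb', hD'', ?_⟩
  rintro ⟨r, hr, hrat⟩
  apply hq
  obtain ⟨q0, h0⟩ := hrat 0 0
  obtain ⟨q1, h1⟩ := hrat 1 1
  simp only [gm] at h0 h1
  simp at h0 h1
  refine ⟨q0 / q1, ?_⟩
  push_cast
  rw [← h0, ← h1]
  have := hb'.ne
  field_simp

end Opp
end Part12

theorem oppenheim_conjecture (n : ℕ) (hn : 3 ≤ n)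
    (A : Matrix (Fin n) (Fin n) ℝ) (hA : A.IsSymm) (hA0 : A ≠ 0)
    (hdet : A.det ≠ 0)
    (hpos : ∃ x : Fin n → ℝ, 0 < x ⬝ᵥ A.mulVec x)
    (hneg : ∃ x : Fin n → ℝ, x ⬝ᵥ A.mulVec x < 0)
    (hirr : ¬ ∃ c : ℝ, c ≠ 0 ∧ ∀ i j, ∃ q : ℚ, c * A i j = (q : ℝ)) :
    Dense {y : ℝ | ∃ x : Fin n → ℤ,
      y = (fun i => (x i : ℝ)) ⬝ᵥ A.mulVec (fun i => (x i : ℝ))} := by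
  obtain ⟨a, b, c, ha, hb, hD, hR⟩ := Opp.reduce hn hA hdet hpos hneg hirr
  rw [Metric.dense_iff]
  intro t δ hδ
  obtain ⟨v, hv⟩ := Opp.dense3 (Opp.gm_symm hA _ _ _) hD
    ⟨![1, 0, 0], by rw [Opp.qf_gm]; simpa using ha⟩
    ⟨![0, 1, 0], by rw [Opp.qf_gm]; simpa using hb⟩ hR t δ hδ
  refine ⟨_, by rw [Metric.mem_ball, Real.dist_eq]; exact hv, v 0 • a + v 1 • b + v 2 • c, ?_⟩
  rw [Opp.qf_gm, Opp.bl]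
  have e : (fun i => (((v 0 • a + v 1 • b + v 2 • c) i : ℤ) : ℝ)) =
      Opp.cv v 0 • Opp.iv a + Opp.cv v 1 • Opp.iv b + Opp.cv v 2 • Opp.iv c := by
    ext i; simp [Opp.cv, Opp.iv]
  rw [e]
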